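/- arXiv:1908.01265 — 5 statements merged into one kernel-verified Lean document; each statement's English description precedes it below -/
import Mathlib

section
/- Let U ⊆ ℝⁿ be open and Σ : U × U → ℝ a smooth (C^∞) symmetric function (Σ(x,x') = Σ(x',x)) that is nonnegative, vanishes on the diagonal (Σ(x,x) = 0 for all x ∈ U), has vanishing first derivatives on the diagonal (∂Σ/∂x^i (x,x) = 0 for all x ∈ U and all i), and whose Hessian on the diagonal, G_{ij}(x') := ∂²Σ/∂x^i∂x^j (x',x'), is positive definite for every x' ∈ U. Then every point of U has an open neighborhood V ⊆ U and a smooth map η : V × V → ℝⁿ such that η(x',x') = 0 for all x' ∈ V, the differential of x ↦ η(x,x') at x = x' is invertible for every x' ∈ V, and Σ(x,x') = (1/2) Σ_{a,b} G_{ab}(x') η^a(x,x') η^b(x,x') for all (x,x') ∈ V × V. -/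
/-!
Near `x₀` the Taylor formula with integral remainder along the segment from `x'` to `x` gives
`S(x, x') = ½ B(x, x')(x - x', x - x')`, where `B(x, x')` is a symmetric bilinear form depending
smoothly on `(x, x')` and `B(x', x') = G(x')` is the Hessian. It remains to write
`B = G(A·, A·)` with `A(x, x')` smooth and `A(x', x') = 1`, for then `η(x, x') = A(x, x')(x - x')`
has differential `1` on the diagonal. Take `A` to be the square root of `G⁻¹B` near `1` provided by
the inverse function theorem. The `G`-adjoint of `A` is also a square root of `G⁻¹B` close to `1`,
so it equals `A`, and `G(A·, A·) = G(A²·, ·) = B`.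
-/

open scoped BigOperators
open Set

/-- The partial derivative `∂/∂x^i` in the first argument of a two-point function. -/
noncomputable def d1 (n : ℕ) (i : Fin n) (f : (Fin n → ℝ) → (Fin n → ℝ) → ℝ) :
    (Fin n → ℝ) → (Fin n → ℝ) → ℝ :=
  fun x x' => fderiv ℝ (fun y => f y x') x (Pi.single i 1)

/-- The Hessian in the first argument of a two-point function, on the diagonal:
`G_{ij}(x') = ∂²Σ/∂x^i∂x^j (x',x')`. -/
noncomputable def diagHess (n : ℕ) (f : (Fin n → ℝ) → (Fin n → ℝ) → ℝ)
    (x' : Fin n → ℝ) : Matrix (Fin n) (Fin n) ℝ :=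
  Matrix.of fun i j => d1 n i (d1 n j f) x' x'

open scoped ContDiff Topology Matrix
open Function

section ParametricIntegral

variable {P E F : Type*} [NormedAddCommGroup P] [NormedSpace ℝ P]
  [NormedAddCommGroup E] [NormedSpace ℝ E] [NormedAddCommGroup F] [NormedSpace ℝ F]

theorem exists_contDiff_hasCompactSupport_eqOn_one [FiniteDimensional ℝ E] {K u : Set E}
    (hK : IsCompact K) (hu : IsOpen u) (hKu : K ⊆ u) :
    ∃ χ : E → ℝ, ContDiff ℝ ∞ χ ∧ HasCompactSupport χ ∧ tsupport χ ⊆ u ∧ EqOn χ 1 K := by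
  have := FiniteDimensional.proper_real E
  obtain ⟨L, hL, hKL, hLu⟩ := exists_compact_between hK hu hKu
  obtain ⟨χ, hχ1, hχ0, -⟩ := exists_contMDiffMap_one_nhds_of_subset_interior (n := ⊤)
    (modelWithCornersSelf ℝ E) hK.isClosed hKL
  have hsupp : tsupport χ ⊆ L :=
    closure_minimal (fun x hx => by_contra fun hxL => hx (hχ0 x hxL)) hL.isClosed
  exact ⟨χ, χ.contMDiff.contDiff, hL.of_isClosed_subset (isClosed_tsupport _) hsupp,
    hsupp.trans hLu, fun x hx => hχ1.self_of_nhdsSet x hx⟩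

theorem contDiffOn_smul_prod_univ_of_tsupport_subset {n : WithTop ℕ∞} {χ : E → ℝ} {h : P → E → F}
    {s : Set P} {u : Set E} (hχ : ContDiff ℝ n χ) (hχu : tsupport χ ⊆ u) (hs : IsOpen s)
    (hu : IsOpen u) (hh : ContDiffOn ℝ n (uncurry h) (s ×ˢ u)) :
    ContDiffOn ℝ n (fun q : P × E => χ q.2 • h q.1 q.2) (s ×ˢ univ) := by
  rintro ⟨p, t⟩ ⟨hp, -⟩
  refine ContDiffAt.contDiffWithinAt ?_
  by_cases ht : t ∈ u
  · exact (hχ.comp contDiff_snd).contDiffAt.smul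
      (hh.contDiffAt ((hs.prod hu).mem_nhds ⟨hp, ht⟩))
  · have h0 : χ =ᶠ[𝓝 t] 0 := notMem_tsupport_iff_eventuallyEq.1 fun h => ht (hχu h)
    refine (contDiffAt_const (c := (0 : F))).congr_of_eventuallyEq ?_
    filter_upwards [continuousAt_snd.eventually h0] with q hq
    simp [hq]

/-- The integral is the value at `0` of the convolution of the indicator of `(a, b]` with
`t ↦ χ (-t) • h p (-t)`, where `χ` is a cutoff function. -/
theorem contDiffOn_intervalIntegral_of_prod {n : ℕ∞} {h : P → ℝ → F} {s : Set P} {u : Set ℝ}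
    {a b : ℝ} (hs : IsOpen s) (hu : IsOpen u) (hab : uIcc a b ⊆ u)
    (hh : ContDiffOn ℝ n (uncurry h) (s ×ˢ u)) :
    ContDiffOn ℝ n (fun p => ∫ t in a..b, h p t) s := by
  wlog hle : a ≤ b generalizing a b
  · simp_rw [intervalIntegral.integral_symm b a]
    exact (this (uIcc_comm a b ▸ hab) (le_of_not_ge hle)).neg
  obtain ⟨χ, hχ, hχc, hχu, hχ1⟩ := exists_contDiff_hasCompactSupport_eqOn_one isCompact_uIcc hu hab
  have hreflect : ContDiffOn ℝ n (fun q : P × ℝ => χ (-q.2) • h q.1 (-q.2)) (s ×ˢ univ) :=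
    (contDiffOn_smul_prod_univ_of_tsupport_subset (hχ.of_le (mod_cast le_top)) hχu hs hu hh).comp
      (contDiff_fst.prodMk contDiff_snd.neg).contDiffOn fun q hq => ⟨hq.1, mem_univ _⟩
  have hzero (p : P) (t : ℝ) (_ : p ∈ s) (ht : t ∉ -tsupport χ) : χ (-t) • h p (-t) = 0 := by
    rw [image_eq_zero_of_notMem_tsupport ht, zero_smul]
  have hind : MeasureTheory.LocallyIntegrable ((Ioc a b).indicator (1 : ℝ → ℝ)) :=
    ((MeasureTheory.integrable_indicator_iff measurableSet_Ioc).2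
      (by simp [Pi.one_def])).locallyIntegrable
  refine (MeasureTheory.contDiffOn_convolution_right_with_param_comp
    (μ := MeasureTheory.volume) (ContinuousLinearMap.lsmul ℝ ℝ) contDiffOn_const hs
    (IsCompact.neg hχc) hzero hind hreflect (v := fun _ => 0)).congr fun p _ => ?_
  rw [MeasureTheory.convolution_def, intervalIntegral.integral_of_le hle,
    ← MeasureTheory.integral_indicator measurableSet_Ioc]
  congr with t
  by_cases ht : t ∈ Ioc a b
  · simp [ht, hχ1 (Icc_subset_uIcc (Ioc_subset_Icc_self ht))]
  · simp [ht]

theorem contDiffAt_intervalIntegral {n : ℕ∞} {h : P → ℝ → F} {p : P} {a b : ℝ}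
    (hh : ∀ t ∈ uIcc a b, ContDiffAt ℝ n (uncurry h) (p, t)) :
    ContDiffAt ℝ n (fun q => ∫ t in a..b, h q t) p := by
  -- Being `C^m` at a point is an open condition for finite `m`, but not for `m = ∞`.
  refine contDiffWithinAt_iff_forall_nat_le.2 fun m hm => ?_
  have hopen : IsOpen {q | ContDiffAt ℝ m (uncurry h) q} :=
    isOpen_iff_eventually.2 fun q (hq : ContDiffAt ℝ m (uncurry h) q) => hq.eventually (by simp)
  obtain ⟨s, u, hs, hu, hps, hab, hsu⟩ := generalized_tube_lemma isCompact_singleton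
    (isCompact_uIcc (a := a) (b := b)) hopen
    (by
      rintro ⟨q, t⟩ ⟨rfl, ht⟩
      exact ContDiffAt.of_le (m := m) (hh t ht) (mod_cast hm))
  have hhsu : ContDiffOn ℝ m (uncurry h) (s ×ˢ u) := fun q hq =>
    ContDiffAt.contDiffWithinAt (hsu hq)
  exact (contDiffOn_intervalIntegral_of_prod (n := m) hs hu hab hhsu).contDiffAt
    (hs.mem_nhds (hps rfl))

end ParametricIntegral

/-- Stated in the class `C^ω` because, unlike `C^∞`, being `C^ω` at a point is an open condition. -/
theorem exists_contDiffAt_sqrt_one (𝕜 R : Type*) [RCLike 𝕜] [NormedRing R] [NormedAlgebra 𝕜 R]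
    [CompleteSpace R] :
    ∃ s : R → R, ContDiffAt 𝕜 ω s 1 ∧ (∀ᶠ m in 𝓝 1, s m * s m = m) ∧
      ∀ᶠ a in 𝓝 1, s (a * a) = a := by
  let e : R ≃L[𝕜] R := ContinuousLinearEquiv.smulLeft (Units.mk0 (2 : 𝕜) two_ne_zero)
  have hc : ContDiffAt 𝕜 ω (fun a : R => a * a) 1 := contDiffAt_id.mul contDiffAt_id
  have hd : HasFDerivAt (fun a : R => a * a) (e : R →L[𝕜] R) 1 := by
    refine ((hasFDerivAt_id (𝕜 := 𝕜) (1 : R)).mul' (hasFDerivAt_id 1)).congr_fderiv ?_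
    ext x
    simp [e, two_smul, Units.smul_def]
  have hω : (ω : WithTop ℕ∞) ≠ 0 := by simp
  have hs := hc.hasStrictFDerivAt' hd hω
  refine ⟨hs.localInverse _ _ _, ?_, ?_, hs.eventually_left_inverse⟩
  · have := hc.to_localInverse hd hω
    rwa [mul_one] at this
  · simpa only [mul_one] using hs.eventually_right_inverse

section Congruence

variable {𝕜 E : Type*} [NontriviallyNormedField 𝕜] [NormedAddCommGroup E] [NormedSpace 𝕜 E]

/-- The adjoint of `A` with respect to the nondegenerate bilinear form `G`, characterised by
`apply_formAdjoint`. When `G` is degenerate `G.inverse` is `0`, and so is the adjoint. -/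
noncomputable def formAdjoint (G : E →L[𝕜] E →L[𝕜] 𝕜) (A : E →L[𝕜] E) : E →L[𝕜] E :=
  G.inverse ∘L (ContinuousLinearMap.compL 𝕜 E E 𝕜).flip A ∘L G

variable {G H : E →L[𝕜] E →L[𝕜] 𝕜} {A : E →L[𝕜] E}

theorem apply_formAdjoint (hG : G.IsInvertible) (v w : E) :
    G (formAdjoint G A v) w = G v (A w) := by
  simp [formAdjoint, hG.self_apply_inverse]

theorem formAdjoint_one (hG : G.IsInvertible) : formAdjoint G 1 = 1 := by
  ext v
  exact hG.injective (by ext w; simp [apply_formAdjoint hG])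

theorem continuousAt_formAdjoint [CompleteSpace E] (hG : G.IsInvertible) :
    ContinuousAt (uncurry formAdjoint) (G, A) := by
  have hinv : ContinuousAt ContinuousLinearMap.inverse G :=
    (hG.contDiffAt_map_inverse (n := 0)).continuousAt
  exact (hinv.comp' continuousAt_fst).clm_comp (by fun_prop)

theorem formAdjoint_mul_self (hG : G.IsInvertible) (hGs : G.flip = G) (hHs : H.flip = H)
    (hA : A * A = G.inverse ∘L H) : formAdjoint G A * formAdjoint G A = G.inverse ∘L H := by
  ext v
  refine hG.injective (ContinuousLinearMap.ext fun w => ?_)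
  have hG_symm : G v (G.inverse (H w)) = G (G.inverse (H w)) v :=
    (DFunLike.congr_fun (DFunLike.congr_fun hGs _) _).symm
  have hH_symm : H w v = H v w := DFunLike.congr_fun (DFunLike.congr_fun hHs _) _
  calc G (formAdjoint G A (formAdjoint G A v)) w
      = G v ((A * A) w) := by simp only [apply_formAdjoint hG, mul_apply_eq_comp]
    _ = G v (G.inverse (H w)) := by rw [hA]; rfl
    _ = H v w := by rw [hG_symm, hG.self_apply_inverse, hH_symm]
    _ = G ((G.inverse ∘L H) v) w := by
      rw [ContinuousLinearMap.comp_apply, hG.self_apply_inverse]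

theorem apply_apply_of_formAdjoint_eq_self (hG : G.IsInvertible) (hA : formAdjoint G A = A)
    (hAH : A * A = G.inverse ∘L H) (v w : E) : G (A v) (A w) = H v w := by
  calc G (A v) (A w) = G (formAdjoint G A (A v)) w := (apply_formAdjoint hG _ _).symm
    _ = G ((A * A) v) w := by rw [hA]; rfl
    _ = H v w := by rw [hAH, ContinuousLinearMap.comp_apply, hG.self_apply_inverse]

theorem eventually_isInvertible {F : Type*} [NormedAddCommGroup F] [NormedSpace 𝕜 F]
    [CompleteSpace E] {L : E →L[𝕜] F} (hL : L.IsInvertible) :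
    ∀ᶠ L' in 𝓝 L, L'.IsInvertible := by
  obtain ⟨e, rfl⟩ := hL
  exact e.nhds

end Congruence

theorem exists_contDiffAt_congruence {𝕜 E : Type*} [RCLike 𝕜] [NormedAddCommGroup E]
    [NormedSpace 𝕜 E] [CompleteSpace E] {G₀ : E →L[𝕜] E →L[𝕜] 𝕜} (hG₀ : G₀.IsInvertible) :
    ∃ Φ : (E →L[𝕜] E →L[𝕜] 𝕜) → (E →L[𝕜] E →L[𝕜] 𝕜) → E →L[𝕜] E,
      ContDiffAt 𝕜 ω (uncurry Φ) (G₀, G₀) ∧ (∀ᶠ G in 𝓝 G₀, Φ G G = 1) ∧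
      ∀ᶠ q in 𝓝 (G₀, G₀), q.1.flip = q.1 → q.2.flip = q.2 →
        ∀ v w, q.1 (Φ q.1 q.2 v) (Φ q.1 q.2 w) = q.2 v w := by
  obtain ⟨s, hs, hsq, hsu⟩ := exists_contDiffAt_sqrt_one 𝕜 (E →L[𝕜] E)
  have hs1 : s 1 = 1 := by simpa using hsu.self_of_nhds
  let M (q : (E →L[𝕜] E →L[𝕜] 𝕜) × (E →L[𝕜] E →L[𝕜] 𝕜)) : E →L[𝕜] E := q.1.inverse ∘L q.2
  have hM_diag {G : E →L[𝕜] E →L[𝕜] 𝕜} (hG : G.IsInvertible) : M (G, G) = 1 :=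
    hG.inverse_comp_self
  have hM : ContDiffAt 𝕜 ω M (G₀, G₀) :=
    (hG₀.contDiffAt_map_inverse.comp (G₀, G₀) contDiffAt_fst).clm_comp contDiffAt_snd
  have hΦ : ContDiffAt 𝕜 ω (fun q => s (M q)) (G₀, G₀) :=
    ContDiffAt.comp (G₀, G₀) ((hM_diag hG₀).symm ▸ hs) hM
  have hM_tendsto : Filter.Tendsto M (𝓝 (G₀, G₀)) (𝓝 1) := hM_diag hG₀ ▸ hM.continuousAt
  have hsM_tendsto : Filter.Tendsto (fun q => s (M q)) (𝓝 (G₀, G₀)) (𝓝 1) := by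
    simpa only [ContinuousAt, hM_diag hG₀, hs1] using hΦ.continuousAt
  have hadj_tendsto :
      Filter.Tendsto (fun q => formAdjoint q.1 (s (M q))) (𝓝 (G₀, G₀)) (𝓝 1) := by
    have := (continuousAt_formAdjoint (A := 1) hG₀).tendsto.comp
      (continuousAt_fst.tendsto.prodMk_nhds hsM_tendsto)
    simpa only [comp_def, uncurry_apply_pair, formAdjoint_one hG₀] using this
  refine ⟨fun G H => s (M (G, H)), hΦ, ?_, ?_⟩
  · filter_upwards [eventually_isInvertible hG₀] with G hG
    rw [hM_diag hG, hs1]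
  · filter_upwards [continuousAt_fst.eventually (eventually_isInvertible hG₀),
      hM_tendsto.eventually hsq, hadj_tendsto.eventually hsu] with q hG hsqrt huniq hGs hHs
    have hself : formAdjoint q.1 (s (M q)) = s (M q) := by
      rw [← huniq, formAdjoint_mul_self hG hGs hHs hsqrt]
    exact apply_apply_of_formAdjoint_eq_self hG hself hsqrt

section AveragedHessian

set_option maxSynthPendingDepth 3

variable {P E F : Type*} [NormedAddCommGroup P] [NormedSpace ℝ P]
  [NormedAddCommGroup E] [NormedSpace ℝ E] [NormedAddCommGroup F] [NormedSpace ℝ F]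
  {f : E → F} {x y : E}

/-- The average `∫₀¹ 2(1-t) D²f(x + t(y - x)) dt` of the second derivative of `f` along the segment
from `x` to `y`, weighted as in the remainder of the second-order Taylor formula. The factor `2`
makes the total weight `1`. -/
noncomputable def averagedHessian (f : E → F) (x y : E) : E →L[ℝ] E →L[ℝ] F :=
  ∫ t in (0 : ℝ)..1, (2 * (1 - t)) • fderiv ℝ (fderiv ℝ f) (x + t • (y - x))

theorem averagedHessian_self [CompleteSpace F] (f : E → F) (x : E) :
    averagedHessian f x x = fderiv ℝ (fderiv ℝ f) x := by
  have hweight : ∫ t in (0 : ℝ)..1, 2 * (1 - t) = 1 := by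
    rw [intervalIntegral.integral_const_mul, intervalIntegral.integral_sub (by simp) (by simp)]
    norm_num
  simp only [averagedHessian, sub_self, smul_zero, add_zero, intervalIntegral.integral_smul_const,
    hweight, one_smul]

theorem add_smul_sub_mem_segment (x y : E) {t : ℝ} (ht : t ∈ uIcc 0 1) :
    x + t • (y - x) ∈ segment ℝ x y := by
  rw [uIcc_of_le zero_le_one] at ht
  exact segment_eq_image' ℝ x y ▸ mem_image_of_mem _ ht

theorem averagedHessian_apply_apply [CompleteSpace F]
    (hf : ∀ z ∈ segment ℝ x y, ContDiffAt ℝ 2 f z) (v w : E) :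
    averagedHessian f x y v w =
      ∫ t in (0 : ℝ)..1, (2 * (1 - t)) • fderiv ℝ (fderiv ℝ f) (x + t • (y - x)) v w := by
  have hcont : ContinuousOn (fun t : ℝ => fderiv ℝ (fderiv ℝ f) (x + t • (y - x))) (uIcc 0 1) := by
    intro t ht
    have h2 : ContDiffAt ℝ 0 (fderiv ℝ (fderiv ℝ f)) (x + t • (y - x)) :=
      ((hf _ (add_smul_sub_mem_segment x y ht)).fderiv_right (m := 1) (by norm_num)).fderiv_right
        (by norm_num)
    exact (ContinuousAt.comp' (f := fun t : ℝ => x + t • (y - x)) h2.continuousAt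
      (by fun_prop)).continuousWithinAt
  have hint : IntervalIntegrable
      (fun t : ℝ => (2 * (1 - t)) • fderiv ℝ (fderiv ℝ f) (x + t • (y - x)))
      MeasureTheory.volume 0 1 :=
    (ContinuousOn.smul (f := fun t : ℝ => 2 * (1 - t)) (by fun_prop) hcont).intervalIntegrable
  exact ((ContinuousLinearMap.apply ℝ F w ∘L
    ContinuousLinearMap.apply ℝ (E →L[ℝ] F) v).intervalIntegral_comp_comm hint).symm

theorem flip_averagedHessian [CompleteSpace F] (hf : ∀ z ∈ segment ℝ x y, ContDiffAt ℝ 2 f z) :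
    (averagedHessian f x y).flip = averagedHessian f x y := by
  ext v w
  rw [ContinuousLinearMap.flip_apply, averagedHessian_apply_apply hf,
    averagedHessian_apply_apply hf]
  refine intervalIntegral.integral_congr fun t ht => ?_
  have hsymm : IsSymmSndFDerivAt ℝ f (x + t • (y - x)) :=
    (hf _ (add_smul_sub_mem_segment x y ht)).isSymmSndFDerivAt
      (by rw [minSmoothness_of_isRCLikeNormedField])
  simp only [hsymm.eq w v]

theorem eq_add_fderiv_add_averagedHessian [CompleteSpace F]
    (hf : ∀ z ∈ segment ℝ x y, ContDiffAt ℝ 2 f z) :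
    f y = f x + fderiv ℝ f x (y - x) + (1 / 2 : ℝ) • averagedHessian f x y (y - x) (y - x) := by
  have htaylor := map_add_eq_sum_add_integral_iteratedFDeriv (n := 1) fun t ht =>
    (hf _ (add_smul_sub_mem_segment x y (Icc_subset_uIcc ht))).of_le (by norm_num)
  rw [averagedHessian_apply_apply hf, ← intervalIntegral.integral_smul]
  simpa [-map_sub, Finset.sum_range_succ, iteratedFDeriv_two_apply, smul_smul] using htaylor

theorem contDiffAt_averagedHessian {k : ℕ∞} {f : P → E → F} {x y : P → E} {p : P}
    (hf : ∀ z ∈ segment ℝ (x p) (y p), ContDiffAt ℝ (k + 2) (uncurry f) (p, z))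
    (hx : ContDiffAt ℝ k x p) (hy : ContDiffAt ℝ k y p) :
    ContDiffAt ℝ k (fun q => averagedHessian (f q) (x q) (y q)) p := by
  refine contDiffAt_intervalIntegral fun t ht => ?_
  have hfz := hf _ (add_smul_sub_mem_segment (x p) (y p) ht)
  have hpath : ContDiffAt ℝ k (fun q : P × ℝ => x q.1 + q.2 • (y q.1 - x q.1)) (p, t) :=
    hx.fst'.add (contDiffAt_snd.smul (hy.fst'.sub hx.fst'))
  set z := x p + t • (y p - x p)
  have hf' : ContDiffAt ℝ (k + 2) (fun r : ((P × ℝ) × E) × E => uncurry f (r.1.1.1, r.2))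
      (((p, t), z), z) :=
    ContDiffAt.comp (f := fun r : ((P × ℝ) × E) × E => (r.1.1.1, r.2)) (((p, t), z), z) hfz
      (by fun_prop)
  have hfderiv : ContDiffAt ℝ (k + 1) (uncurry fun (q : P × ℝ) z => fderiv ℝ (f q.1) z)
      ((p, t), z) :=
    ContDiffAt.fderiv (f := fun (r : (P × ℝ) × E) z => f r.1.1 z) hf' contDiffAt_snd
      (by rw [add_assoc, one_add_one_eq_two])
  have hweight : ContDiffAt ℝ k (fun q : P × ℝ => 2 * (1 - q.2)) (p, t) := by fun_prop
  exact hweight.smul (ContDiffAt.fderiv hfderiv hpath le_rfl)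

end AveragedHessian

theorem exists_contDiffOn_congruence_diag {𝕜 X E : Type*} [RCLike 𝕜] [NormedAddCommGroup X]
    [NormedSpace 𝕜 X] [NormedAddCommGroup E] [NormedSpace 𝕜 E] [CompleteSpace E]
    {k : WithTop ℕ∞} {W : Set X} (hW : IsOpen W) {B : X → X → E →L[𝕜] E →L[𝕜] 𝕜}
    (hB : ContDiffOn 𝕜 k (uncurry B) (W ×ˢ W)) (hsymm : ∀ x ∈ W, ∀ y ∈ W, (B x y).flip = B x y)
    {x₀ : X} (hx₀ : x₀ ∈ W) (hinv : (B x₀ x₀).IsInvertible) :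
    ∃ V ⊆ W, IsOpen V ∧ x₀ ∈ V ∧ ∃ A : X → X → E →L[𝕜] E,
      ContDiffOn 𝕜 k (uncurry A) (V ×ˢ V) ∧ (∀ x ∈ V, A x x = 1) ∧
      ∀ x ∈ V, ∀ y ∈ V, ∀ v w, B y y (A x y v) (A x y w) = B x y v w := by
  obtain ⟨Φ, hΦ, hΦ_diag, hΦ_congr⟩ := exists_contDiffAt_congruence hinv
  let T (q : X × X) := (B q.2 q.2, B q.1 q.2)
  have hT : ContDiffOn 𝕜 k T (W ×ˢ W) :=
    (hB.comp (contDiff_snd.prodMk contDiff_snd).contDiffOn fun q hq => ⟨hq.2, hq.2⟩).prodMk hB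
  have hW_nhds : W ×ˢ W ∈ 𝓝 (x₀, x₀) := prod_mem_nhds (hW.mem_nhds hx₀) (hW.mem_nhds hx₀)
  have hT_cont : ContinuousAt T (x₀, x₀) := (hT.contDiffAt hW_nhds).continuousAt
  have hgood : ∀ᶠ q in 𝓝 (x₀, x₀), q ∈ W ×ˢ W ∧ ContDiffAt 𝕜 ω (uncurry Φ) (T q) ∧
      Φ (T q).1 (T q).1 = 1 ∧ ((T q).1.flip = (T q).1 → (T q).2.flip = (T q).2 → ∀ v w,
        (T q).1 (Φ (T q).1 (T q).2 v) (Φ (T q).1 (T q).2 w) = (T q).2 v w) :=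
    Filter.Eventually.and hW_nhds ((hT_cont.eventually (hΦ.eventually (by simp))).and
      ((hT_cont.fst.eventually hΦ_diag).and (hT_cont.eventually hΦ_congr)))
  obtain ⟨V, hV, hx₀V, hVgood⟩ := exists_nhds_square hgood
  have hVW : V ⊆ W := fun x hx => (hVgood (mk_mem_prod hx hx)).1.1
  refine ⟨V, hVW, hV, hx₀V, fun x y => Φ (B y y) (B x y), fun q hq => ?_, fun x hx => ?_,
    fun x hx y hy => ?_⟩
  · obtain ⟨hqW, hΦq, -, -⟩ := hVgood hq
    have hTq : ContDiffAt 𝕜 k T q := hT.contDiffAt ((hW.prod hW).mem_nhds hqW)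
    exact ((hΦq.of_le le_top).comp q hTq).contDiffWithinAt
  · obtain ⟨-, -, hΦx, -⟩ := hVgood (mk_mem_prod hx hx)
    exact hΦx
  · obtain ⟨-, -, -, hcongr⟩ := hVgood (mk_mem_prod hx hy)
    exact hcongr (hsymm y (hVW hy) y (hVW hy)) (hsymm x (hVW hx) y (hVW hy))

theorem hasFDerivAt_clm_apply_sub {𝕜 E F : Type*} [NontriviallyNormedField 𝕜]
    [NormedAddCommGroup E] [NormedSpace 𝕜 E] [NormedAddCommGroup F] [NormedSpace 𝕜 F]
    {A : E → E →L[𝕜] F} {x₀ : E} (hA : ContinuousAt A x₀) :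
    HasFDerivAt (fun x => A x (x - x₀)) (A x₀) x₀ := by
  have hA_sub : (fun x => A x - A x₀) =o[𝓝 x₀] fun _ => (1 : ℝ) :=
    (Asymptotics.isLittleO_one_iff ℝ).2 (tendsto_sub_nhds_zero_iff.2 hA)
  refine HasFDerivAt.of_isLittleO ?_
  calc (fun x => A x (x - x₀) - A x₀ (x₀ - x₀) - A x₀ (x - x₀))
      = fun x => (A x - A x₀) (x - x₀) := by ext x; simp
    _ =O[𝓝 x₀] fun x => ‖A x - A x₀‖ * ‖x - x₀‖ :=
      Asymptotics.isBigO_of_le _ fun x => by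
        simpa using (A x - A x₀).le_opNorm (x - x₀)
    _ =o[𝓝 x₀] fun x => 1 * ‖x - x₀‖ :=
      hA_sub.norm_left.mul_isBigO (Asymptotics.isBigO_refl _ _)
    _ =O[𝓝 x₀] fun x => x - x₀ := by
      simpa only [one_mul] using (Asymptotics.isBigO_refl (fun x => x - x₀) _).norm_left

section TwoPoint

variable {E : Type*} [NormedAddCommGroup E] [NormedSpace ℝ E] {k : ℕ∞} {W : Set E}
  {S : E → E → ℝ}

theorem contDiffAt_two_of_contDiffOn_uncurry (hW : IsOpen W)
    (hS : ContDiffOn ℝ (k + 2) (uncurry S) (W ×ˢ W)) {z x' : E} (hz : z ∈ W) (hx' : x' ∈ W) :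
    ContDiffAt ℝ 2 (fun y => S y x') z :=
  ((hS.contDiffAt ((hW.prod hW).mem_nhds ⟨hz, hx'⟩)).of_le le_add_self).comp z
    (contDiffAt_id.prodMk contDiffAt_const)

theorem contDiffOn_averagedHessian_uncurry (hW : IsOpen W) (hconv : Convex ℝ W)
    (hS : ContDiffOn ℝ (k + 2) (uncurry S) (W ×ˢ W)) :
    ContDiffOn ℝ k (uncurry fun x x' => averagedHessian (fun y => S y x') x' x) (W ×ˢ W) := by
  rintro ⟨x, x'⟩ ⟨hx, hx'⟩
  refine (contDiffAt_averagedHessian (f := fun (q : E × E) z => S z q.2) (fun z hz => ?_)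
    contDiffAt_snd contDiffAt_fst).contDiffWithinAt
  have hSz : ContDiffAt ℝ (k + 2) (uncurry S) (z, x') :=
    hS.contDiffAt ((hW.prod hW).mem_nhds ⟨hconv.segment_subset hx' hx hz, hx'⟩)
  exact ContDiffAt.comp (f := fun q : (E × E) × E => (q.2, q.1.2)) ((x, x'), z) hSz (by fun_prop)

end TwoPoint

theorem morse_normal_form_general {E : Type*} [NormedAddCommGroup E] [NormedSpace ℝ E]
    [CompleteSpace E] {k : ℕ∞} {U : Set E} (hU : IsOpen U) {S : E → E → ℝ}
    (hS : ContDiffOn ℝ (k + 2) (uncurry S) (U ×ˢ U)) (hdiag : ∀ x ∈ U, S x x = 0)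
    (hcrit : ∀ x ∈ U, fderiv ℝ (fun y => S y x) x = 0) {x₀ : E} (hx₀ : x₀ ∈ U)
    (hhess : (fderiv ℝ (fderiv ℝ fun y => S y x₀) x₀).IsInvertible) :
    ∃ V ⊆ U, IsOpen V ∧ x₀ ∈ V ∧ ∃ η : E → E → E,
      ContDiffOn ℝ k (uncurry η) (V ×ˢ V) ∧ (∀ x' ∈ V, η x' x' = 0) ∧
      (∀ x' ∈ V, HasFDerivAt (fun x => η x x') (ContinuousLinearMap.id ℝ E) x') ∧
      ∀ x ∈ V, ∀ x' ∈ V,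
        S x x' = (1 / 2) * fderiv ℝ (fderiv ℝ fun y => S y x') x' (η x x') (η x x') := by
  obtain ⟨ε, hε, hεU⟩ := Metric.isOpen_iff.1 hU x₀ hx₀
  let W := Metric.ball x₀ ε
  have hW : IsOpen W := Metric.isOpen_ball
  have hconv : Convex ℝ W := convex_ball x₀ ε
  have hSW : ContDiffOn ℝ (k + 2) (uncurry S) (W ×ˢ W) := hS.mono (prod_mono hεU hεU)
  have hslice {x x' : E} (hx : x ∈ W) (hx' : x' ∈ W) :
      ∀ z ∈ segment ℝ x' x, ContDiffAt ℝ 2 (fun y => S y x') z := fun z hz =>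
    contDiffAt_two_of_contDiffOn_uncurry hW hSW (hconv.segment_subset hx' hx hz) hx'
  obtain ⟨V, hVW, hV, hx₀V, A, hA, hA_diag, hA_congr⟩ := exists_contDiffOn_congruence_diag hW
    (contDiffOn_averagedHessian_uncurry hW hconv hSW)
    (fun x hx x' hx' => flip_averagedHessian (hslice hx hx'))
    (Metric.mem_ball_self hε) (by rwa [averagedHessian_self])
  refine ⟨V, hVW.trans hεU, hV, hx₀V, fun x x' => A x x' (x - x'),
    hA.clm_apply (contDiffOn_fst.sub contDiffOn_snd), fun x' _ => by simp, fun x' hx' => ?_,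
    fun x hx x' hx' => ?_⟩
  · have hA_slice : ContinuousAt (fun x => A x x') x' :=
      (hA.continuousOn.continuousAt ((hV.prod hV).mem_nhds ⟨hx', hx'⟩)).comp
        (f := fun x => (x, x')) (by fun_prop)
    exact (hasFDerivAt_clm_apply_sub hA_slice).congr_fderiv (hA_diag x' hx')
  · calc S x x' = (1 / 2) * averagedHessian (fun y => S y x') x' x (x - x') (x - x') := by
          rw [eq_add_fderiv_add_averagedHessian (hslice (hVW hx) (hVW hx')),
            hdiag x' (hεU (hVW hx')), hcrit x' (hεU (hVW hx'))]
          simp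
      _ = _ := by rw [← hA_congr x hx x' hx', averagedHessian_self]

theorem isInvertible_of_forall_apply_apply_ne_zero {𝕜 E : Type*} [NontriviallyNormedField 𝕜]
    [CompleteSpace 𝕜] [NormedAddCommGroup E] [NormedSpace 𝕜 E] [FiniteDimensional 𝕜 E]
    {B : E →L[𝕜] E →L[𝕜] 𝕜} (hB : ∀ v ≠ 0, B v v ≠ 0) : B.IsInvertible := by
  have hinj : Injective B := (injective_iff_map_eq_zero B).2 fun v hv =>
    not_imp_not.1 (hB v) (by simp [hv])
  have hfinrank : Module.finrank 𝕜 E = Module.finrank 𝕜 (E →L[𝕜] 𝕜) := by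
    rw [← (LinearMap.toContinuousLinearMap (E := E) (F' := 𝕜)).finrank_eq]
    exact Subspace.dual_finrank_eq.symm
  exact ⟨((B : E →ₗ[𝕜] E →L[𝕜] 𝕜).linearEquivOfInjective hinj hfinrank).toContinuousLinearEquiv,
    rfl⟩

section Coordinates

variable {n : ℕ} {S : (Fin n → ℝ) → (Fin n → ℝ) → ℝ} {x : Fin n → ℝ}

theorem fderiv_eq_zero_of_forall_d1_eq_zero {x' : Fin n → ℝ} (h : ∀ i, d1 n i S x x' = 0) :
    fderiv ℝ (fun y => S y x') x = 0 :=
  ContinuousLinearMap.coe_injective <| LinearMap.pi_ext' fun i => LinearMap.ext_ring (h i)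

theorem fderiv_fderiv_apply_eq_dotProduct_diagHess
    (hS : DifferentiableAt ℝ (fderiv ℝ fun y => S y x) x) (v w : Fin n → ℝ) :
    fderiv ℝ (fderiv ℝ fun y => S y x) x v w = v ⬝ᵥ diagHess n S x *ᵥ w := by
  let B := (fderiv ℝ (fderiv ℝ fun y => S y x) x).toLinearMap₁₂
  have hB : LinearMap.toMatrix₂' ℝ B = diagHess n S x := by
    ext i j
    simp [B, diagHess, d1, fderiv_clm_apply hS (differentiableAt_const _)]
  calc B v w = Matrix.toLinearMap₂' ℝ (LinearMap.toMatrix₂' ℝ B) v w := by simp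
    _ = v ⬝ᵥ diagHess n S x *ᵥ w := by rw [hB, Matrix.toLinearMap₂'_apply']

theorem fderiv_fderiv_apply_eq_sum_diagHess
    (hS : DifferentiableAt ℝ (fderiv ℝ fun y => S y x) x) (v w : Fin n → ℝ) :
    fderiv ℝ (fderiv ℝ fun y => S y x) x v w = ∑ a, ∑ b, diagHess n S x a b * v a * w b := by
  simp only [fderiv_fderiv_apply_eq_dotProduct_diagHess hS, dotProduct, Matrix.mulVec,
    Finset.mul_sum, mul_left_comm, mul_assoc]

theorem isInvertible_fderiv_fderiv_of_posDef_diagHess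
    (hS : DifferentiableAt ℝ (fderiv ℝ fun y => S y x) x) (hpos : (diagHess n S x).PosDef) :
    (fderiv ℝ (fderiv ℝ fun y => S y x) x).IsInvertible :=
  isInvertible_of_forall_apply_apply_ne_zero fun v hv => by
    simpa only [fderiv_fderiv_apply_eq_dotProduct_diagHess hS, star_trivial] using
      (hpos.dotProduct_mulVec_pos hv).ne'

end Coordinates

/-- Morse-lemma normal form for a smooth symmetric nonnegative two-point function with a
non-degenerate critical point on the diagonal: locally
`Σ(x,x') = ½ Σ_{a,b} G_{ab}(x') η^a(x,x') η^b(x,x')` for a smooth diffeomorphism-germ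
`η(·,x')` vanishing on the diagonal. -/
theorem morse_normal_form (n : ℕ) (hn : 1 ≤ n) (U : Set (Fin n → ℝ)) (hU : IsOpen U)
    (S : (Fin n → ℝ) → (Fin n → ℝ) → ℝ)
    (hsmooth : ContDiffOn ℝ (⊤ : ℕ∞) (fun p : (Fin n → ℝ) × (Fin n → ℝ) => S p.1 p.2) (U ×ˢ U))
    (hsymm : ∀ x ∈ U, ∀ x' ∈ U, S x x' = S x' x)
    (hnonneg : ∀ x ∈ U, ∀ x' ∈ U, 0 ≤ S x x')
    (hdiag : ∀ x ∈ U, S x x = 0)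
    (hcrit : ∀ x ∈ U, ∀ i : Fin n, d1 n i S x x = 0)
    (hhess : ∀ x' ∈ U, (diagHess n S x').PosDef) :
    ∀ x₀ ∈ U, ∃ V : Set (Fin n → ℝ), IsOpen V ∧ x₀ ∈ V ∧ V ⊆ U ∧
      ∃ η : (Fin n → ℝ) → (Fin n → ℝ) → (Fin n → ℝ),
        ContDiffOn ℝ (⊤ : ℕ∞) (fun p : (Fin n → ℝ) × (Fin n → ℝ) => η p.1 p.2) (V ×ˢ V) ∧
        (∀ x' ∈ V, η x' x' = 0) ∧
        (∀ x' ∈ V, Function.Bijective ⇑(fderiv ℝ (fun x => η x x') x')) ∧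
        (∀ x ∈ V, ∀ x' ∈ V,
          S x x' = (1 / 2) * ∑ a, ∑ b, diagHess n S x' a b * η x x' a * η x x' b) := by
  intro x₀ hx₀
  have hdiff {x : Fin n → ℝ} (hx : x ∈ U) : DifferentiableAt ℝ (fderiv ℝ fun y => S y x) x :=
    ((contDiffAt_two_of_contDiffOn_uncurry (k := ⊤) hU hsmooth hx hx).fderiv_right (m := 1)
      (by norm_num)).differentiableAt one_ne_zero
  obtain ⟨V, hVU, hV, hx₀V, η, hη, hη_diag, hη_deriv, hSη⟩ :=
    morse_normal_form_general (k := ⊤) hU hsmooth hdiag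
      (fun x hx => fderiv_eq_zero_of_forall_d1_eq_zero (hcrit x hx)) hx₀
      (isInvertible_fderiv_fderiv_of_posDef_diagHess (hdiff hx₀) (hhess x₀ hx₀))
  refine ⟨V, hV, hx₀V, hVU, η, hη, hη_diag, fun x' hx' => ?_, fun x hx x' hx' => ?_⟩
  · rw [(hη_deriv x' hx').fderiv]
    exact bijective_id
  · rw [hSη x hx x' hx', fderiv_fderiv_apply_eq_sum_diagHess (hdiff (hVU hx'))]
end

section
/- Let U ⊆ ℝⁿ be open, x' ∈ U, and Σ : U → ℝ a smooth nonnegative function with Σ(x') = 0, ∇Σ(x') = 0, Σ(x) > 0 for all x ∈ U with x ≠ x', and positive definite Hessian G = (∂_i∂_jΣ(x')) at x'. Let φ : ℝⁿ → ℝ be smooth with compact support contained in U, and set F(ε) := (4πε)^{−n/2} ∫_U exp(−Σ(x)/(2ε)) φ(x) dx for ε > 0. Write Σ_{i_1…i_k} := ∂_{i_1}⋯∂_{i_k}Σ(x'). Then F(ε) = (det G)^{−1/2} φ(x') + ε F_1 + O(ε²) as ε → 0⁺, where F_1 = (det G)^{−1/2} [ Σ_{i,j} G^{ij} ∂_i∂_jφ(x')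 − Σ_{i,j,p,q} G^{ij}G^{pq} Σ_{ipq} ∂_jφ(x') + ( −(1/4) Σ G^{ij}G^{kl} Σ_{ijkl} + (1/12) Σ (2 G^{il}G^{jm} + 3 G^{ij}G^{lm}) G^{kn} Σ_{ijk} Σ_{lmn} ) φ(x') ], all sums running over repeated indices from 1 to n. -/
/-!
Substituting `x = x' + t y` with `t = √ε` turns the integral into that of the Gaussian
`exp (-D²Σ(x')(y, y) / 4)` times a function which expands in powers of `t` with coefficients of
polynomial growth in `y`. The expansion is valid for `t y → 0` only, but on the support of `φ` the
phase is bounded below by a multiple of `‖x - x'‖²`, so that for `‖y‖ ≥ r / t` Gaussian decay gains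
any power of `t`, and the expansion may be integrated term by term. The coefficient of `t ^ k` has
the parity of `k`, which makes the odd orders vanish. The coefficient of `t²` is integrated by parts
against the Gaussian: by Euler's identity for homogeneous Taylor terms this amounts to Wick's
recursion, and the square of the cubic term of `Σ` produces the dumbbell and theta contractions.
-/

open scoped BigOperators Topology
open MeasureTheory Asymptotics Filter

/-- The partial derivative `∂_i f`. -/
noncomputable def pd (n : ℕ) (i : Fin n) (f : (Fin n → ℝ) → ℝ) : (Fin n → ℝ) → ℝ :=
  fun y => fderiv ℝ f y (Pi.single i 1)

/-- The Hessian matrix `(∂_i ∂_j f)(x)`. -/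
noncomputable def hess (n : ℕ) (f : (Fin n → ℝ) → ℝ) (x : Fin n → ℝ) :
    Matrix (Fin n) (Fin n) ℝ :=
  Matrix.of fun i j => pd n i (pd n j f) x

/-- Third partial derivatives `Σ_{ijk} = ∂_i∂_j∂_k Σ (x)`. -/
noncomputable def pd3 (n : ℕ) (f : (Fin n → ℝ) → ℝ) (x : Fin n → ℝ)
    (i j k : Fin n) : ℝ :=
  pd n i (pd n j (pd n k f)) x

/-- Fourth partial derivatives `Σ_{ijkl} = ∂_i∂_j∂_k∂_l Σ (x)`. -/
noncomputable def pd4 (n : ℕ) (f : (Fin n → ℝ) → ℝ) (x : Fin n → ℝ)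
    (i j k l : Fin n) : ℝ :=
  pd n i (pd n j (pd n k (pd n l f))) x

section TaylorTerm

variable {E : Type*} [NormedAddCommGroup E] [NormedSpace ℝ E]

/-- The homogeneous Taylor term of degree `k`: the polynomial `y ↦ D^k f(x)(y, …, y) / k!`. -/
noncomputable def taylorTerm (f : E → ℝ) (x : E) (k : ℕ) (y : E) : ℝ :=
  (k.factorial : ℝ)⁻¹ * iteratedFDeriv ℝ k f x fun _ => y

variable {f : E → ℝ} {x : E} {n : ℕ}

@[simp]
theorem taylorTerm_zero (f : E → ℝ) (x y : E) : taylorTerm f x 0 y = f x := by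
  simp [taylorTerm]

theorem taylorTerm_one (f : E → ℝ) (x y : E) : taylorTerm f x 1 y = fderiv ℝ f x y := by
  simp [taylorTerm]

theorem taylorTerm_smul (f : E → ℝ) (x : E) (k : ℕ) (t : ℝ) (y : E) :
    taylorTerm f x k (t • y) = t ^ k * taylorTerm f x k y := by
  have h := (iteratedFDeriv ℝ k f x).map_smul_univ (fun _ => t) fun _ => y
  simp only [Finset.prod_const, Finset.card_univ, Fintype.card_fin, smul_eq_mul] at h
  rw [taylorTerm, taylorTerm, h]
  ring

theorem taylorTerm_neg (f : E → ℝ) (x : E) (k : ℕ) (y : E) :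
    taylorTerm f x k (-y) = (-1) ^ k * taylorTerm f x k y := by
  rw [← taylorTerm_smul, neg_one_smul]

theorem continuous_taylorTerm (f : E → ℝ) (x : E) (k : ℕ) : Continuous (taylorTerm f x k) :=
  continuous_const.mul <| (iteratedFDeriv ℝ k f x).cont.comp <| continuous_pi fun _ => continuous_id

theorem differentiable_taylorTerm (f : E → ℝ) (x : E) (k : ℕ) :
    Differentiable ℝ (taylorTerm f x k) :=
  ((iteratedFDeriv ℝ k f x).contDiff.comp (contDiff_pi.2 fun _ => contDiff_id)).differentiable
    (n := ⊤) (by simp) |>.const_mul _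

theorem taylorTerm_congr {g : E → ℝ} (h : f =ᶠ[𝓝 x] g) (k : ℕ) :
    taylorTerm f x k = taylorTerm g x k := by
  ext y
  rw [taylorTerm, taylorTerm, (h.iteratedFDeriv ℝ k).eq_of_nhds]

theorem exists_abs_taylorTerm_le (f : E → ℝ) (x : E) (k : ℕ) :
    ∃ C, ∀ y, |taylorTerm f x k y| ≤ C * ‖y‖ ^ k := by
  refine ⟨(k.factorial : ℝ)⁻¹ * ‖iteratedFDeriv ℝ k f x‖, fun y => ?_⟩
  rw [taylorTerm, abs_mul, abs_of_nonneg (by positivity), mul_assoc]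
  gcongr
  simpa using (iteratedFDeriv ℝ k f x).le_opNorm fun _ => y

theorem sub_sum_taylorTerm_isBigO (hf : ContDiffAt ℝ n f x) :
    (fun y => f (x + y) - ∑ k ∈ Finset.range n, taylorTerm f x k y) =O[𝓝 0] fun y => ‖y‖ ^ n := by
  have tendsto_add : Tendsto (fun y => x + y) (𝓝 0) (𝓝 x) := by
    simpa using (continuous_const_add x).tendsto 0
  rcases n with _ | n
  · simpa using (hf.continuousAt.tendsto.comp tendsto_add).isBigO_one ℝ
  obtain ⟨C, hC⟩ := (hf.continuousAt_iteratedFDeriv le_rfl).tendsto.isBigO_one ℝ |>.bound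
  obtain ⟨r, r_pos, hr⟩ := Metric.eventually_nhds_iff_ball.1
    ((tendsto_add.eventually (hf.eventually (by simp))).and (tendsto_add.eventually hC))
  refine IsBigO.of_bound ((n.factorial : ℝ)⁻¹ * C) ?_
  filter_upwards [Metric.ball_mem_nhds (0 : E) r_pos] with y hy
  have segment_mem (t : ℝ) (ht : t ∈ Set.Icc (0 : ℝ) 1) : t • y ∈ Metric.ball 0 r :=
    (convex_ball 0 r).smul_mem_of_zero_mem (Metric.mem_ball_self r_pos) hy ht
  rw [map_add_eq_sum_add_integral_iteratedFDeriv fun t ht => (hr _ (segment_mem t ht)).1]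
  simp only [taylorTerm, smul_eq_mul, add_sub_cancel_left, norm_mul, norm_inv, norm_pow, norm_norm,
    RCLike.norm_natCast, mul_assoc]
  gcongr
  refine (intervalIntegral.norm_integral_le_of_norm_le_const (C := C * ‖y‖ ^ (n + 1))
    fun t ht => ?_).trans_eq (by simp)
  obtain ⟨t_pos, t_le⟩ := Set.uIoc_of_le (zero_le_one (α := ℝ)) ▸ ht
  have deriv_le := (hr _ (segment_mem t ⟨t_pos.le, t_le⟩)).2
  calc
    ‖(1 - t) ^ n * iteratedFDeriv ℝ (n + 1) f (x + t • y) fun _ => y‖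
      ≤ 1 * (‖iteratedFDeriv ℝ (n + 1) f (x + t • y)‖ * ‖y‖ ^ (n + 1)) := by
        rw [norm_mul, norm_pow]
        gcongr
        · exact pow_le_one₀ (norm_nonneg _) (abs_le.2 ⟨by linarith, by linarith⟩)
        · simpa using (iteratedFDeriv ℝ (n + 1) f (x + t • y)).le_opNorm fun _ => y
    _ ≤ C * ‖y‖ ^ (n + 1) := by
        rw [one_mul]
        gcongr
        simpa using deriv_le

end TaylorTerm

section Expansion

theorem one_add_norm_pow_isBigO_of_le {α E : Type*} [NormedAddCommGroup E] {M N : ℕ}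
    (h : M ≤ N) (l : Filter α) (v : α → E) :
    (fun p => (1 + ‖v p‖) ^ M) =O[l] fun p => (1 + ‖v p‖) ^ N :=
  IsBigO.of_norm_le fun p => by
    rw [Real.norm_of_nonneg (by positivity)]
    exact pow_le_pow_right₀ (by linarith [norm_nonneg (v p)]) h

/-- The algebra of continuous functions of at most polynomial growth. -/
def polyGrowth (E : Type*) [NormedAddCommGroup E] : Subalgebra ℝ (E → ℝ) where
  carrier := {a | Continuous a ∧ ∃ N : ℕ, a =O[⊤] fun y => (1 + ‖y‖) ^ N}
  mul_mem' := by
    rintro a b ⟨a_cont, M, ha⟩ ⟨b_cont, N, hb⟩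
    refine ⟨a_cont.mul b_cont, M + N, ?_⟩
    simp only [pow_add]
    exact ha.mul hb
  add_mem' := by
    rintro a b ⟨a_cont, M, ha⟩ ⟨b_cont, N, hb⟩
    exact ⟨a_cont.add b_cont, max M N,
      (ha.trans (one_add_norm_pow_isBigO_of_le (le_max_left M N) _ id)).add
        (hb.trans (one_add_norm_pow_isBigO_of_le (le_max_right M N) _ id))⟩
  algebraMap_mem' r := ⟨continuous_const, 0,
    (isBigO_const_const r one_ne_zero ⊤).congr_right fun _ => (pow_zero _).symm⟩

theorem abs_mem_polyGrowth {E : Type*} [NormedAddCommGroup E] {a : E → ℝ} (ha : a ∈ polyGrowth E) :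
    |a| ∈ polyGrowth E :=
  ⟨ha.1.abs, ha.2.imp fun _ h => h.abs_left⟩

/-- Formal power series in `t` whose coefficients are functions on `E` of polynomial growth, the
coefficient of `t ^ k` having the parity of `k`. -/
def paritySeries (E : Type*) [NormedAddCommGroup E] : Subalgebra ℝ (PowerSeries (E → ℝ)) where
  carrier := {a | ∀ k, PowerSeries.coeff k a ∈ polyGrowth E ∧
    ∀ y, PowerSeries.coeff k a (-y) = (-1) ^ k * PowerSeries.coeff k a y}
  mul_mem' {a b} ha hb k := by
    rw [PowerSeries.coeff_mul]
    refine ⟨sum_mem fun p _ => mul_mem (ha p.1).1 (hb p.2).1, fun y => ?_⟩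
    simp only [Finset.sum_apply, Pi.mul_apply, Finset.mul_sum]
    refine Finset.sum_congr rfl fun p hp => ?_
    rw [(ha p.1).2, (hb p.2).2, ← Finset.HasAntidiagonal.mem_antidiagonal.1 hp]
    ring
  add_mem' {a b} ha hb k := by
    rw [map_add]
    refine ⟨add_mem (ha k).1 (hb k).1, fun y => ?_⟩
    rw [Pi.add_apply, Pi.add_apply, (ha k).2, (hb k).2, mul_add]
  algebraMap_mem' r k := by
    rw [PowerSeries.algebraMap_apply, PowerSeries.coeff_C]
    split_ifs with hk
    · exact ⟨algebraMap_mem _ r, fun y => by simp [hk]⟩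
    · exact ⟨zero_mem _, fun y => by simp⟩

theorem C_mem_paritySeries {E : Type*} [NormedAddCommGroup E] {a : E → ℝ}
    (ha : a ∈ polyGrowth E) (even : ∀ y, a (-y) = a y) : PowerSeries.C a ∈ paritySeries E := by
  intro k
  rw [PowerSeries.coeff_C]
  split_ifs with hk
  · exact ⟨ha, fun y => by simp [hk, even]⟩
  · exact ⟨zero_mem _, fun y => by simp⟩

/-- The Taylor polynomial `∑_{k < m} t ^ k a_k(y)` of the power series `a`. -/
noncomputable def partialSum {E : Type*} (m : ℕ) (a : PowerSeries (E → ℝ)) :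
    ℝ × E → ℝ :=
  ∑ k ∈ Finset.range m, fun p => p.1 ^ k * PowerSeries.coeff k a p.2

theorem partialSum_apply {E : Type*} (m : ℕ) (a : PowerSeries (E → ℝ))
    (p : ℝ × E) :
    partialSum m a p = ∑ k ∈ Finset.range m, p.1 ^ k * PowerSeries.coeff k a p.2 := by
  simp [partialSum]

theorem partialSum_isBigO {E : Type*} [NormedAddCommGroup E] {a : PowerSeries (E → ℝ)}
    (ha : a ∈ paritySeries E) (m : ℕ) :
    ∃ N : ℕ, partialSum m a =O[𝓟 {p | p.1 ∈ Set.Ioc 0 1}] fun p => (1 + ‖p.2‖) ^ N := by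
  obtain ⟨-, N, h⟩ : ∑ k ∈ Finset.range m, |PowerSeries.coeff k a| ∈ polyGrowth E :=
    sum_mem fun k _ => abs_mem_polyGrowth (ha k).1
  refine ⟨N, (IsBigO.of_bound 1 ?_).trans (h.comp_tendsto (k := Prod.snd) tendsto_top)⟩
  filter_upwards [mem_principal_self _] with p hp
  simp only [partialSum_apply, one_mul, Function.comp_apply, Finset.sum_apply, Pi.abs_apply]
  refine (norm_sum_le _ _).trans ((Finset.sum_le_sum fun k _ => ?_).trans (le_abs_self _))
  rw [norm_mul, norm_pow, Real.norm_of_nonneg hp.1.le]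
  exact mul_le_of_le_one_left (norm_nonneg _) (pow_le_one₀ hp.1.le hp.2)

variable {E : Type*} [NormedAddCommGroup E] [NormedSpace ℝ E]

/-- The filter of pairs `(t, y)` with `0 < t ≤ 1` and `t • y → 0`: the variable `y` may be as large
as `o(1 / t)`. -/
def rescaledNhds (E : Type*) [NormedAddCommGroup E] [NormedSpace ℝ E] : Filter (ℝ × E) :=
  comap (fun p => p.1 • p.2) (𝓝 0) ⊓ 𝓟 {p | p.1 ∈ Set.Ioc 0 1}

theorem tendsto_smul_rescaledNhds :
    Tendsto (fun p : ℝ × E => p.1 • p.2) (rescaledNhds E) (𝓝 0) :=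
  tendsto_comap.mono_left inf_le_left

theorem eventually_rescaledNhds_mem_Ioc :
    ∀ᶠ p : ℝ × E in rescaledNhds E, p.1 ∈ Set.Ioc (0 : ℝ) 1 :=
  mem_inf_of_right (mem_principal_self _)

/-- `f(t, y) = O(t ^ m)` as `t • y → 0`, up to a factor of polynomial growth in `y`. -/
def IsPolyBigO (m : ℕ) (f : ℝ × E → ℝ) : Prop :=
  ∃ N : ℕ, f =O[rescaledNhds E] fun p => p.1 ^ m * (1 + ‖p.2‖) ^ N

namespace IsPolyBigO

variable {m n : ℕ} {f g : ℝ × E → ℝ}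

theorem add (hf : IsPolyBigO m f) (hg : IsPolyBigO m g) : IsPolyBigO m (f + g) := by
  obtain ⟨M, hf⟩ := hf
  obtain ⟨N, hg⟩ := hg
  exact ⟨max M N,
    (hf.trans ((isBigO_refl _ _).mul
      (one_add_norm_pow_isBigO_of_le (le_max_left M N) _ Prod.snd))).add
    (hg.trans ((isBigO_refl _ _).mul
      (one_add_norm_pow_isBigO_of_le (le_max_right M N) _ Prod.snd)))⟩

theorem abs (hf : IsPolyBigO m f) : IsPolyBigO m |f| :=
  hf.imp fun _ h => h.abs_left

theorem mul (hf : IsPolyBigO m f) (hg : IsPolyBigO n g) : IsPolyBigO (m + n) (f * g) := by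
  obtain ⟨M, hf⟩ := hf
  obtain ⟨N, hg⟩ := hg
  refine ⟨M + N, ?_⟩
  simp only [pow_add, mul_mul_mul_comm _ (_ ^ n)]
  exact hf.mul hg

theorem mono (hf : IsPolyBigO n f) (h : m ≤ n) : IsPolyBigO m f := by
  obtain ⟨N, hf⟩ := hf
  refine ⟨N, hf.trans (IsBigO.mul (IsBigO.of_bound 1 ?_) (isBigO_refl _ _))⟩
  filter_upwards [eventually_rescaledNhds_mem_Ioc] with p hp
  simpa [abs_of_pos hp.1] using pow_le_pow_of_le_one hp.1.le hp.2 h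

theorem zero : IsPolyBigO m (0 : ℝ × E → ℝ) := ⟨0, isBigO_zero _ _⟩

theorem sum {ι : Type*} {s : Finset ι} {f : ι → ℝ × E → ℝ} (h : ∀ i ∈ s, IsPolyBigO m (f i)) :
    IsPolyBigO m (∑ i ∈ s, f i) :=
  Finset.sum_induction f (IsPolyBigO m) (fun _ _ => add) zero h

theorem pow (hf : IsPolyBigO 1 f) (k : ℕ) : IsPolyBigO k (f ^ k) := by
  induction k with
  | zero => exact ⟨0, isBigO_of_le _ fun p => by simp⟩
  | succ k ih => exact ih.mul hf

end IsPolyBigO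

theorem isPolyBigO_monomial {a : E → ℝ} (ha : a ∈ polyGrowth E) (k : ℕ) :
    IsPolyBigO k fun p => p.1 ^ k * a p.2 := by
  obtain ⟨-, N, ha⟩ := ha
  exact ⟨N, (isBigO_refl _ _).mul (ha.comp_tendsto tendsto_top)⟩

theorem isPolyBigO_partialSum {a : PowerSeries (E → ℝ)} (ha : a ∈ paritySeries E) (m : ℕ) :
    IsPolyBigO 0 (partialSum m a) :=
  IsPolyBigO.sum fun k _ => (isPolyBigO_monomial (ha k).1 k).mono k.zero_le

theorem isPolyBigO_partialSum_mul_sub {a b : PowerSeries (E → ℝ)} (ha : a ∈ paritySeries E)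
    (hb : b ∈ paritySeries E) (m : ℕ) :
    IsPolyBigO m (partialSum m a * partialSum m b - partialSum m (a * b)) := by
  set h : ℕ × ℕ → ℝ × E → ℝ := fun q =>
    (fun p => p.1 ^ q.1 * PowerSeries.coeff q.1 a p.2) *
      fun p => p.1 ^ q.2 * PowerSeries.coeff q.2 b p.2
  set square := Finset.range m ×ˢ Finset.range m
  have product : partialSum m a * partialSum m b = ∑ q ∈ square, h q := by
    rw [partialSum, partialSum, Finset.sum_mul_sum, Finset.sum_product]
  have diagonals : partialSum m (a * b) = ∑ q ∈ square with q.1 + q.2 < m, h q := by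
    rw [← Finset.sum_fiberwise_of_maps_to (g := fun q : ℕ × ℕ => q.1 + q.2) (t := Finset.range m)
      (by simp), partialSum]
    refine Finset.sum_congr rfl fun k hk => ?_
    have fiber : ({q ∈ {q ∈ square | q.1 + q.2 < m} | q.1 + q.2 = k} : Finset (ℕ × ℕ)) =
        Finset.HasAntidiagonal.antidiagonal k := by
      ext q
      simp only [square, Finset.mem_filter, Finset.mem_product, Finset.mem_range,
        Finset.HasAntidiagonal.mem_antidiagonal] at hk ⊢
      omega
    rw [fiber]
    ext p
    simp only [PowerSeries.coeff_mul, Finset.sum_apply, Pi.mul_apply, Finset.mul_sum, h]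
    refine Finset.sum_congr rfl fun q hq => ?_
    rw [← Finset.HasAntidiagonal.mem_antidiagonal.1 hq]
    ring
  rw [product, diagonals, ← Finset.sum_filter_add_sum_filter_not square fun q => q.1 + q.2 < m,
    add_sub_cancel_left]
  refine IsPolyBigO.sum fun q hq => IsPolyBigO.mono ?_ (not_lt.1 (Finset.mem_filter.1 hq).2)
  exact (isPolyBigO_monomial (ha q.1).1 q.1).mul (isPolyBigO_monomial (hb q.2).1 q.2)

/-- `f(t, y) = ∑_{k < m} t ^ k a_k(y) + O(t ^ m)` as `t • y → 0`, up to factors of polynomial growth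
in `y`, where the coefficient `a_k` has the parity of `k`. -/
structure HasPolyExpansion (m : ℕ) (f : ℝ × E → ℝ) (a : PowerSeries (E → ℝ)) : Prop where
  mem_paritySeries : a ∈ paritySeries E
  isPolyBigO_sub : IsPolyBigO m (f - partialSum m a)

namespace HasPolyExpansion

variable {m : ℕ} {f g : ℝ × E → ℝ} {a b : PowerSeries (E → ℝ)}

theorem isPolyBigO_zero (hf : HasPolyExpansion m f a) : IsPolyBigO 0 f := by
  simpa using (hf.isPolyBigO_sub.mono m.zero_le).add (isPolyBigO_partialSum hf.mem_paritySeries m)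

theorem add (hf : HasPolyExpansion m f a) (hg : HasPolyExpansion m g b) :
    HasPolyExpansion m (f + g) (a + b) where
  mem_paritySeries := add_mem hf.mem_paritySeries hg.mem_paritySeries
  isPolyBigO_sub := by
    convert hf.isPolyBigO_sub.add hg.isPolyBigO_sub using 1
    ext p
    simp only [Pi.sub_apply, Pi.add_apply, partialSum_apply, map_add, mul_add,
      Finset.sum_add_distrib]
    ring

theorem mul (hf : HasPolyExpansion m f a) (hg : HasPolyExpansion m g b) :
    HasPolyExpansion m (f * g) (a * b) where
  mem_paritySeries := mul_mem hf.mem_paritySeries hg.mem_paritySeries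
  isPolyBigO_sub := by
    have split : f * g - partialSum m (a * b) = (f - partialSum m a) * g +
        partialSum m a * (g - partialSum m b) +
        (partialSum m a * partialSum m b - partialSum m (a * b)) := by ring
    have left := hf.isPolyBigO_sub.mul hg.isPolyBigO_zero
    have right := (isPolyBigO_partialSum hf.mem_paritySeries m).mul hg.isPolyBigO_sub
    rw [zero_add] at right
    exact split ▸ (left.add right).add
      (isPolyBigO_partialSum_mul_sub hf.mem_paritySeries hg.mem_paritySeries m)

theorem of_C {a : E → ℝ} (ha : a ∈ polyGrowth E) (even : ∀ y, a (-y) = a y)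
    (m : ℕ) : HasPolyExpansion m (fun p => a p.2) (PowerSeries.C a) where
  mem_paritySeries := C_mem_paritySeries ha even
  isPolyBigO_sub := by
    have partialSum_eq (m : ℕ) : partialSum (m + 1) (PowerSeries.C a) = fun p => a p.2 := by
      ext p
      simp [partialSum_apply, Finset.sum_range_succ', PowerSeries.coeff_C]
    rcases m with _ | m
    · simpa [partialSum] using isPolyBigO_monomial ha 0
    · simpa [partialSum_eq] using IsPolyBigO.zero

theorem of_algebraMap (r : ℝ) : HasPolyExpansion m (algebraMap ℝ (ℝ × E → ℝ) r)
    (algebraMap ℝ (PowerSeries (E → ℝ)) r) :=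
  PowerSeries.algebraMap_apply (A := E → ℝ) (r := r) ▸
    of_C (algebraMap_mem _ r) (fun _ => rfl) m

theorem smul (hf : HasPolyExpansion m f a) (r : ℝ) : HasPolyExpansion m (r • f) (r • a) := by
  simpa only [Algebra.smul_def] using (of_algebraMap r).mul hf

theorem pow (hf : HasPolyExpansion m f a) (k : ℕ) : HasPolyExpansion m (f ^ k) (a ^ k) := by
  induction k with
  | zero => simpa using HasPolyExpansion.of_algebraMap (E := E) (m := m) 1
  | succ k ih => simpa only [pow_succ] using ih.mul hf

theorem aeval (hf : HasPolyExpansion m f a) (P : Polynomial ℝ) :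
    HasPolyExpansion m (P.aeval f) (P.aeval a) := by
  induction P using Polynomial.induction_on' with
  | add P Q hP hQ => simpa only [map_add] using hP.add hQ
  | monomial k r => simpa only [Polynomial.aeval_monomial] using (of_algebraMap r).mul (hf.pow k)

end HasPolyExpansion

end Expansion

section ExpTaylor

theorem eval_trunc_exp (m : ℕ) (u : ℝ) :
    (PowerSeries.trunc m (PowerSeries.exp ℝ)).eval u =
      ∑ k ∈ Finset.range m, (k.factorial : ℝ)⁻¹ * u ^ k := by
  rw [Polynomial.eval, PowerSeries.eval₂_trunc_eq_sum_range]
  simp [PowerSeries.coeff_exp]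

theorem abs_exp_sub_eval_trunc_le (m : ℕ) (u : ℝ) :
    |Real.exp u - (PowerSeries.trunc m (PowerSeries.exp ℝ)).eval u| ≤
      |u| ^ m * (1 + Real.exp u) := by
  rcases m with _ | n
  · simp [abs_of_pos (Real.exp_pos u)]
  have exp_le (s : ℝ) (hs : s ∈ Set.Icc (0 : ℝ) 1) : Real.exp (s * u) ≤ 1 + Real.exp u := by
    rcases le_total u 0 with hu | hu
    · linarith [Real.exp_le_one_iff.2 (mul_nonpos_of_nonneg_of_nonpos hs.1 hu), Real.exp_pos u]
    · linarith [Real.exp_le_exp.2 (mul_le_of_le_one_left hu hs.2)]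
  have taylor := map_add_eq_sum_add_integral_iteratedFDeriv (f := Real.exp) (x := 0) (y := u)
    (n := n) fun _ _ => Real.contDiff_exp.contDiffAt
  simp only [iteratedFDeriv_apply_eq_iteratedDeriv_mul_prod, iteratedDeriv_eq_iterate,
    Real.iter_deriv_exp, zero_add, Real.exp_zero, Finset.prod_const, Finset.card_univ,
    Fintype.card_fin, smul_eq_mul, mul_one] at taylor
  have integral_le : |∫ s in (0 : ℝ)..1, (1 - s) ^ n * (u ^ (n + 1) * Real.exp (s * u))| ≤
      |u| ^ (n + 1) * (1 + Real.exp u) := by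
    rw [← Real.norm_eq_abs]
    refine (intervalIntegral.norm_integral_le_of_norm_le_const fun s hs => ?_).trans_eq
      (by rw [sub_zero, abs_one, mul_one])
    obtain ⟨s_pos, s_le⟩ := Set.uIoc_of_le (zero_le_one (α := ℝ)) ▸ hs
    rw [norm_mul, norm_mul, norm_pow, norm_pow, Real.norm_eq_abs u,
      Real.norm_of_nonneg (Real.exp_pos _).le]
    refine (mul_le_of_le_one_left (by positivity) (pow_le_one₀ (norm_nonneg _)
      (abs_le.2 ⟨by linarith, by linarith⟩))).trans ?_
    gcongr
    exact exp_le s ⟨s_pos.le, s_le⟩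
  rw [eval_trunc_exp, sub_eq_of_eq_add' taylor, abs_mul, abs_of_nonneg (by positivity)]
  exact (mul_le_of_le_one_left (abs_nonneg _)
    (inv_le_one_of_one_le₀ (mod_cast n.factorial_pos))).trans integral_le

end ExpTaylor

section Kernel

variable {E : Type*} [NormedAddCommGroup E] [NormedSpace ℝ E]

theorem isPolyBigO_comp_smul {h : E → ℝ} {n : ℕ} (hh : h =O[𝓝 0] fun v => ‖v‖ ^ n) :
    IsPolyBigO n fun p => h (p.1 • p.2) := by
  refine ⟨n, (hh.comp_tendsto tendsto_smul_rescaledNhds).trans (IsBigO.of_bound 1 ?_)⟩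
  filter_upwards [eventually_rescaledNhds_mem_Ioc] with p hp
  have := hp.1.le
  simp only [Function.comp_apply, norm_smul, mul_pow, norm_mul, norm_pow, norm_norm, one_mul]
  gcongr
  rw [Real.norm_of_nonneg (by positivity)]
  linarith

theorem IsPolyBigO.inv_pow_mul {m k : ℕ} {f : ℝ × E → ℝ} (hf : IsPolyBigO (m + k) f) :
    IsPolyBigO m fun p => (p.1 ^ k)⁻¹ * f p := by
  obtain ⟨N, hf⟩ := hf
  refine ⟨N, ((isBigO_refl _ _).mul hf).congr' .rfl ?_⟩
  filter_upwards [eventually_rescaledNhds_mem_Ioc] with p hp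
  rw [pow_add]
  field_simp [hp.1.ne']

theorem taylorTerm_mem_polyGrowth (f : E → ℝ) (x : E) (k : ℕ) :
    taylorTerm f x k ∈ polyGrowth E := by
  obtain ⟨C, hC⟩ := exists_abs_taylorTerm_le f x k
  refine ⟨continuous_taylorTerm f x k, k, (IsBigO.of_bound (g := fun y => ‖y‖ ^ k) C ?_).trans
    (IsBigO.of_norm_le fun y => ?_)⟩
  · simpa using hC
  · rw [norm_pow, norm_norm]
    gcongr
    linarith

theorem mk_taylorTerm_mem_paritySeries (f : E → ℝ) (x : E) :
    PowerSeries.mk (taylorTerm f x) ∈ paritySeries E := by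
  intro k
  rw [PowerSeries.coeff_mk]
  exact ⟨taylorTerm_mem_polyGrowth f x k, taylorTerm_neg f x k⟩

theorem mk_taylorTerm_add_two_mem_paritySeries (f : E → ℝ) (x : E) :
    (PowerSeries.mk fun k => taylorTerm f x (k + 2)) ∈ paritySeries E := by
  intro k
  rw [PowerSeries.coeff_mk]
  exact ⟨taylorTerm_mem_polyGrowth f x _, fun y => by rw [taylorTerm_neg]; ring⟩

variable {S φ : E → ℝ} {x : E} {m : ℕ}

theorem hasPolyExpansion_comp_add_smul (hφ : ContDiffAt ℝ m φ x) :
    HasPolyExpansion m (fun p => φ (x + p.1 • p.2)) (PowerSeries.mk (taylorTerm φ x)) where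
  mem_paritySeries := mk_taylorTerm_mem_paritySeries φ x
  isPolyBigO_sub := by
    convert isPolyBigO_comp_smul (sub_sum_taylorTerm_isBigO hφ) using 1
    ext p
    simp [partialSum_apply, taylorTerm_smul]

theorem hasPolyExpansion_inv_sq_mul_comp_add_smul (hS : ContDiffAt ℝ (m + 2 : ℕ) S x)
    (hS0 : S x = 0) (hdS : fderiv ℝ S x = 0) :
    HasPolyExpansion m (fun p => (p.1 ^ 2)⁻¹ * S (x + p.1 • p.2))
      (PowerSeries.mk fun k => taylorTerm S x (k + 2)) where
  mem_paritySeries := mk_taylorTerm_add_two_mem_paritySeries S x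
  isPolyBigO_sub := by
    obtain ⟨N, h⟩ := (isPolyBigO_comp_smul (sub_sum_taylorTerm_isBigO hS)).inv_pow_mul
    refine ⟨N, h.congr' ?_ .rfl⟩
    filter_upwards [eventually_rescaledNhds_mem_Ioc] with p hp
    have t_ne := hp.1.ne'
    simp only [Finset.sum_range_succ', taylorTerm_smul, Pi.sub_apply, partialSum_apply,
      PowerSeries.coeff_mk, zero_add, taylorTerm_one, taylorTerm_zero, hS0, hdS, mul_sub,
      Finset.mul_sum, zero_apply, mul_zero, add_zero]
    congr 1
    refine Finset.sum_congr rfl fun k _ => ?_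
    field_simp
    ring

/-- The Laplace integrand with phase `S` and amplitude `φ` at `ε = t ^ 2`, in the variable `y` for
which `x + t • y` is the original one. -/
noncomputable def rescaledIntegrand (S φ : E → ℝ) (x : E) (p : ℝ × E) : ℝ :=
  Real.exp (-S (x + p.1 • p.2) / (2 * p.1 ^ 2)) * φ (x + p.1 • p.2)

/-- The exponent of the rescaled Laplace integrand, relative to its Gaussian part. -/
noncomputable def excessExponent (S : E → ℝ) (x : E) (p : ℝ × E) : ℝ :=
  taylorTerm S x 2 p.2 / 2 - (p.1 ^ 2)⁻¹ * S (x + p.1 • p.2) / 2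

/-- The expansion of `excessExponent S x` in powers of `t`. -/
noncomputable def exponentSeries (S : E → ℝ) (x : E) : PowerSeries (E → ℝ) :=
  PowerSeries.C ((1 / 2 : ℝ) • taylorTerm S x 2) +
    (-1 / 2 : ℝ) • PowerSeries.mk fun k => taylorTerm S x (k + 2)

/-- The expansion in powers of `t`, to order `m`, of the rescaled Laplace integrand with phase `S`
and amplitude `φ` around `x`, relative to its Gaussian part. -/
noncomputable def laplaceSeries (m : ℕ) (S φ : E → ℝ) (x : E) : PowerSeries (E → ℝ) :=
  (PowerSeries.trunc m (PowerSeries.exp ℝ)).aeval (exponentSeries S x) *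
    PowerSeries.mk (taylorTerm φ x)

theorem coeff_exponentSeries_zero : PowerSeries.coeff 0 (exponentSeries S x) = 0 := by
  ext y
  simp only [exponentSeries, map_add, PowerSeries.coeff_smul, PowerSeries.coeff_C, if_true,
    PowerSeries.coeff_mk, Pi.add_apply, Pi.smul_apply, smul_eq_mul, Pi.zero_apply, zero_add]
  ring

theorem exponentSeries_mem_paritySeries (S : E → ℝ) (x : E) :
    exponentSeries S x ∈ paritySeries E :=
  add_mem
    (C_mem_paritySeries (Subalgebra.smul_mem _ (taylorTerm_mem_polyGrowth S x 2) _) fun y => by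
      simp [taylorTerm_neg])
    (Subalgebra.smul_mem _ (mk_taylorTerm_add_two_mem_paritySeries S x) _)

theorem laplaceSeries_mem_paritySeries (m : ℕ) (S φ : E → ℝ) (x : E) :
    laplaceSeries m S φ x ∈ paritySeries E :=
  mul_mem (Algebra.adjoin_le (Set.singleton_subset_iff.2 (exponentSeries_mem_paritySeries S x))
    (Polynomial.aeval_mem_adjoin_singleton ℝ _)) (mk_taylorTerm_mem_paritySeries φ x)

theorem exp_div_eq_mul_exp_excessExponent (S : E → ℝ) (x : E) (t : ℝ) (y : E) :
    Real.exp (-S (x + t • y) / (2 * t ^ 2)) =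
      Real.exp (-taylorTerm S x 2 y / 2) * Real.exp (excessExponent S x (t, y)) := by
  rw [← Real.exp_add, excessExponent]
  congr 1
  simp only [div_eq_mul_inv, mul_inv]
  ring

theorem hasPolyExpansion_excessExponent (hS : ContDiffAt ℝ (m + 2 : ℕ) S x) (hS0 : S x = 0)
    (hdS : fderiv ℝ S x = 0) :
    HasPolyExpansion m (excessExponent S x) (exponentSeries S x) := by
  convert (HasPolyExpansion.of_C (a := (1 / 2 : ℝ) • taylorTerm S x 2)
    (Subalgebra.smul_mem _ (taylorTerm_mem_polyGrowth S x 2) _)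
    (fun y => by simp [taylorTerm_neg]) m).add
    ((hasPolyExpansion_inv_sq_mul_comp_add_smul hS hS0 hdS).smul (-1 / 2)) using 1
  · ext p
    simp only [excessExponent, Pi.add_apply, Pi.smul_apply, smul_eq_mul]
    ring
  · rfl

theorem isPolyBigO_excessExponent_pow (hS : ContDiffAt ℝ (m + 2 : ℕ) S x) (hS0 : S x = 0)
    (hdS : fderiv ℝ S x = 0) : IsPolyBigO m (excessExponent S x ^ m) := by
  rcases m with _ | m
  · simpa using (HasPolyExpansion.of_algebraMap (E := E) (m := 0) 1).isPolyBigO_zero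
  have first_order := hasPolyExpansion_excessExponent (m := 1)
    (hS.of_le (by exact_mod_cast (by lia : 1 + 2 ≤ m + 1 + 2))) hS0 hdS
  have partialSum_eq : partialSum 1 (exponentSeries S x) = 0 := by
    ext p
    simp [partialSum_apply, coeff_exponentSeries_zero]
  exact IsPolyBigO.pow (by simpa [partialSum_eq] using first_order.isPolyBigO_sub) _

theorem exists_rescaledIntegrand_sub_isBigO (hS : ContDiffAt ℝ (m + 2 : ℕ) S x) (hS0 : S x = 0)
    (hdS : fderiv ℝ S x = 0) (hφ : ContDiffAt ℝ m φ x) :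
    ∃ N : ℕ, (fun p => rescaledIntegrand S φ x p -
        Real.exp (-taylorTerm S x 2 p.2 / 2) * partialSum m (laplaceSeries m S φ x) p)
      =O[rescaledNhds E] fun p => p.1 ^ m * (1 + ‖p.2‖) ^ N *
        (Real.exp (-taylorTerm S x 2 p.2 / 2) +
          Real.exp (-S (x + p.1 • p.2) / (2 * p.1 ^ 2))) := by
  set u := excessExponent S x
  set P := PowerSeries.trunc m (PowerSeries.exp ℝ)
  set Φ : ℝ × E → ℝ := fun p => φ (x + p.1 • p.2)
  have hΦ : HasPolyExpansion m Φ _ := hasPolyExpansion_comp_add_smul hφ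
  have polynomial_part : IsPolyBigO m (P.aeval u * Φ - partialSum m (laplaceSeries m S φ x)) :=
    (((hasPolyExpansion_excessExponent hS hS0 hdS).aeval P).mul hΦ).isPolyBigO_sub
  have exp_remainder : IsPolyBigO m (u ^ m * Φ) :=
    (isPolyBigO_excessExponent_pow hS hS0 hdS).mul hΦ.isPolyBigO_zero
  obtain ⟨N, hN⟩ := polynomial_part.abs.add exp_remainder.abs
  refine ⟨N, (IsBigO.of_norm_le fun p => ?_).trans (hN.mul (isBigO_refl _ _))⟩
  have eval_eq : P.aeval u p = P.eval (u p) := by simp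
  set w := Real.exp (-taylorTerm S x 2 p.2 / 2)
  have w_pos : 0 < w := Real.exp_pos _
  rw [rescaledIntegrand, exp_div_eq_mul_exp_excessExponent]
  change |w * Real.exp (u p) * Φ p - w * partialSum m _ p| ≤
    (|P.aeval u p * Φ p - partialSum m _ p| + |u p ^ m * Φ p|) * (w + w * Real.exp (u p))
  calc
    |w * Real.exp (u p) * Φ p - w * partialSum m (laplaceSeries m S φ x) p|
      = |w * (P.aeval u p * Φ p - partialSum m (laplaceSeries m S φ x) p) +
          w * ((Real.exp (u p) - P.eval (u p)) * Φ p)| := by rw [eval_eq]; ring_nf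
    _ ≤ w * |P.aeval u p * Φ p - partialSum m (laplaceSeries m S φ x) p| +
          w * (|Real.exp (u p) - P.eval (u p)| * |Φ p|) := by
        refine (abs_add_le _ _).trans_eq ?_
        rw [abs_mul, abs_mul, abs_mul, abs_of_pos w_pos]
    _ ≤ w * (|P.aeval u p * Φ p - partialSum m (laplaceSeries m S φ x) p| * (1 + Real.exp (u p))) +
          w * (|u p| ^ m * (1 + Real.exp (u p)) * |Φ p|) := by
        gcongr
        · exact le_mul_of_one_le_right (abs_nonneg _) (by linarith [Real.exp_pos (u p)])
        · exact abs_exp_sub_eval_trunc_le m (u p)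
    _ = _ := by rw [abs_mul, abs_pow]; ring

end Kernel

section Coercive

theorem exists_mul_sq_norm_le_of_isCompact {E : Type*} [NormedAddCommGroup E] {S : E → ℝ} {x : E}
    {K : Set E} (hK : IsCompact K) (hS : ContinuousOn S K) (S_pos : ∀ z ∈ K, z ≠ x → 0 < S z)
    {c : ℝ} (c_pos : 0 < c)
    (hc : ∀ᶠ v in 𝓝 0, c * ‖v‖ ^ 2 ≤ S (x + v)) :
    ∃ c > 0, ∀ z ∈ K, c * ‖z - x‖ ^ 2 ≤ S z := by
  obtain ⟨r, r_pos, hr⟩ := Metric.eventually_nhds_iff_ball.1 hc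
  have ne_of_mem {z : E} (hz : z ∈ K \ Metric.ball x r) : z ≠ x := by
    rintro rfl
    exact hz.2 (Metric.mem_ball_self r_pos)
  obtain ⟨b, b_pos, hb⟩ := (hK.diff Metric.isOpen_ball).exists_forall_le'
    (f := fun z => S z / ‖z - x‖ ^ 2) (a := 0)
    ((hS.mono Set.sdiff_subset).div (by fun_prop) fun z hz => by
      simpa [sub_eq_zero] using ne_of_mem hz)
    fun z hz => div_pos (S_pos z hz.1 (ne_of_mem hz))
      (pow_pos (norm_pos_iff.2 (sub_ne_zero.2 (ne_of_mem hz))) 2)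
  refine ⟨min b c, lt_min b_pos c_pos, fun z hz => ?_⟩
  by_cases hzr : z ∈ Metric.ball x r
  · have near := hr (z - x) (by simpa [dist_eq_norm] using hzr)
    rw [add_sub_cancel] at near
    exact (mul_le_mul_of_nonneg_right (min_le_right b c) (by positivity)).trans near
  · have z_ne := norm_pos_iff.2 (sub_ne_zero.2 (ne_of_mem ⟨hz, hzr⟩))
    refine (mul_le_mul_of_nonneg_right (min_le_left b c) (by positivity)).trans ?_
    exact (le_div_iff₀ (by positivity)).1 (hb z ⟨hz, hzr⟩)

variable {E : Type*} [NormedAddCommGroup E] [NormedSpace ℝ E] {S : E → ℝ} {x : E}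

theorem exists_mul_sq_norm_le_of_homogeneous [FiniteDimensional ℝ E] {q : E → ℝ}
    (hq : Continuous q) (q_smul : ∀ (t : ℝ) y, q (t • y) = t ^ 2 * q y)
    (q_pos : ∀ y, y ≠ 0 → 0 < q y) : ∃ c > 0, ∀ y, c * ‖y‖ ^ 2 ≤ q y := by
  obtain ⟨c, c_pos, hc⟩ := (isCompact_sphere (0 : E) 1).exists_forall_le' hq.continuousOn
    fun y hy => q_pos y (ne_zero_of_mem_unit_sphere ⟨y, hy⟩)
  refine ⟨c, c_pos, fun y => ?_⟩
  rcases eq_or_ne y 0 with rfl | hy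
  · simpa using (q_smul 0 0).ge
  calc
    c * ‖y‖ ^ 2 ≤ q (‖y‖⁻¹ • y) * ‖y‖ ^ 2 := by
      gcongr
      exact hc _ (by simp [norm_smul, hy])
    _ = q y := by
      rw [q_smul]
      field_simp [norm_ne_zero_iff.2 hy]

theorem eventually_mul_sq_norm_le (hS : ContDiffAt ℝ 3 S x) (hS0 : S x = 0)
    (hdS : fderiv ℝ S x = 0) {c : ℝ} (c_pos : 0 < c)
    (hc : ∀ y, c * ‖y‖ ^ 2 ≤ taylorTerm S x 2 y) :
    ∀ᶠ v in 𝓝 0, c / 2 * ‖v‖ ^ 2 ≤ S (x + v) := by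
  have remainder : (fun v => S (x + v) - taylorTerm S x 2 v) =o[𝓝 0] fun v => ‖v‖ ^ 2 := by
    have taylor := sub_sum_taylorTerm_isBigO (n := 3) hS
    simp only [Finset.sum_range_succ, Finset.sum_range_zero, taylorTerm_zero, taylorTerm_one, hS0,
      hdS, zero_apply, zero_add] at taylor
    exact taylor.trans_isLittleO ((isLittleO_pow_pow (by lia)).comp_tendsto tendsto_norm_zero)
  filter_upwards [remainder.bound (half_pos c_pos)] with v hv
  rw [norm_pow, norm_norm] at hv
  linarith [hc v, neg_le_of_abs_le hv]

end Coercive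

section GaussianDomination

theorem exists_one_add_pow_le_mul_exp (N : ℕ) {c : ℝ} (c_pos : 0 < c) :
    ∃ C, ∀ s : ℝ, 0 ≤ s → (1 + s) ^ N ≤ C * Real.exp (c * s ^ 2) := by
  refine ⟨N.factorial * Real.exp (1 + 1 / (4 * c)), fun s hs => ?_⟩
  have young : 1 + s ≤ 1 + 1 / (4 * c) + c * s ^ 2 := by
    have square : 1 / (4 * c) + c * s ^ 2 - s = c * (s - 1 / (2 * c)) ^ 2 := by
      field_simp
      ring
    nlinarith [mul_nonneg c_pos.le (sq_nonneg (s - 1 / (2 * c)))]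
  calc
    (1 + s) ^ N ≤ N.factorial * Real.exp (1 + s) := by
      have := Real.pow_div_factorial_le_exp (1 + s) (by positivity) N
      rwa [div_le_iff₀' (by positivity)] at this
    _ ≤ N.factorial * Real.exp (1 + 1 / (4 * c) + c * s ^ 2) := by gcongr
    _ = _ := by rw [Real.exp_add, mul_assoc]

variable {E : Type*} [NormedAddCommGroup E] [NormedSpace ℝ E] [FiniteDimensional ℝ E]
  [MeasurableSpace E] [BorelSpace E] (μ : Measure E) [μ.IsAddHaarMeasure]

theorem integrable_one_add_norm_pow_mul_exp (N : ℕ) {c : ℝ} (c_pos : 0 < c) :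
    Integrable (fun y : E => (1 + ‖y‖) ^ N * Real.exp (-c * ‖y‖ ^ 2)) μ := by
  set M := Module.finrank ℝ E + 1
  obtain ⟨C, hC⟩ := exists_one_add_pow_le_mul_exp (N + M) c_pos
  refine ((integrable_one_add_norm (E := E) (μ := μ) (r := M) (by simp [M])).const_mul C).mono'
    (by fun_prop) (ae_of_all _ fun y => ?_)
  rw [Real.norm_of_nonneg (by positivity), Real.rpow_neg (by positivity), Real.rpow_natCast,
    ← div_eq_mul_inv, le_div_iff₀ (by positivity), mul_right_comm, ← pow_add, neg_mul,
    Real.exp_neg, ← div_eq_mul_inv, div_le_iff₀ (Real.exp_pos _)]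
  exact hC ‖y‖ (norm_nonneg y)

theorem integrable_polyGrowth_mul {a w : E → ℝ} (ha : a ∈ polyGrowth E) {c : ℝ} (c_pos : 0 < c)
    (w_cont : Continuous w) (hw : ∀ y, |w y| ≤ Real.exp (-c * ‖y‖ ^ 2)) :
    Integrable (fun y => a y * w y) μ := by
  obtain ⟨a_cont, N, ha⟩ := ha
  obtain ⟨C, hC⟩ := ha.bound
  refine ((integrable_one_add_norm_pow_mul_exp μ N c_pos).const_mul C).mono'
    (a_cont.mul w_cont).aestronglyMeasurable (ae_of_all _ fun y => ?_)
  have a_le := eventually_top.1 hC y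
  rw [norm_mul, ← mul_assoc, ← Real.norm_of_nonneg (pow_nonneg (by positivity) N)]
  exact mul_le_mul a_le (hw y) (norm_nonneg _) ((norm_nonneg _).trans a_le)

end GaussianDomination

section Domination

variable {E : Type*} [NormedAddCommGroup E] [NormedSpace ℝ E]

theorem isBigO_principal_of_rescaledNhds {D : ℝ × E → ℝ} {e : E → ℝ} {m M N : ℕ}
    (near : D =O[rescaledNhds E] fun p => p.1 ^ m * (1 + ‖p.2‖) ^ M * e p.2)
    (far : D =O[𝓟 {p | p.1 ∈ Set.Ioc 0 1}] fun p => (1 + ‖p.2‖) ^ N * e p.2) :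
    D =O[𝓟 {p | p.1 ∈ Set.Ioc 0 1}] fun p => p.1 ^ m * (1 + ‖p.2‖) ^ (M + N + m) * e p.2 := by
  obtain ⟨C, C_pos, hC⟩ := near.exists_pos
  obtain ⟨C', C'_pos, hC'⟩ := far.exists_pos
  obtain ⟨r, r_pos, hr⟩ := Metric.eventually_nhds_iff_ball.1
    (eventually_comap.1 (eventually_inf_principal.1 hC.bound))
  refine IsBigO.of_bound (max C (C' / r ^ m)) ?_
  filter_upwards [mem_principal_self _, isBigOWith_iff.1 hC'] with p hp far_le
  have t_pos := hp.1
  simp only [norm_mul, norm_pow, Real.norm_of_nonneg t_pos.le,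
    Real.norm_of_nonneg (by positivity : 0 ≤ 1 + ‖p.2‖)] at far_le ⊢
  have one_le : 1 ≤ 1 + ‖p.2‖ := by linarith [norm_nonneg p.2]
  rcases lt_or_ge (p.1 * ‖p.2‖) r with h | h
  · have near_le := hr (p.1 • p.2) (by simpa [norm_smul, abs_of_pos t_pos] using h) p rfl hp
    simp only [norm_mul, norm_pow, Real.norm_of_nonneg t_pos.le,
      Real.norm_of_nonneg (by positivity : 0 ≤ 1 + ‖p.2‖)] at near_le
    refine near_le.trans ?_
    gcongr
    · exact le_max_left _ _
    · lia
  · refine far_le.trans ?_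
    have one_le_pow : 1 ≤ (p.1 * (1 + ‖p.2‖) / r) ^ m :=
      one_le_pow₀ ((one_le_div r_pos).2 (h.trans (by gcongr; linarith)))
    calc
      C' * ((1 + ‖p.2‖) ^ N * ‖e p.2‖)
        ≤ C' * ((1 + ‖p.2‖) ^ (M + N) * ‖e p.2‖) * (p.1 * (1 + ‖p.2‖) / r) ^ m := by
          refine le_trans ?_ (le_mul_of_one_le_right (by positivity) one_le_pow)
          gcongr
          lia
      _ = C' / r ^ m * (p.1 ^ m * (1 + ‖p.2‖) ^ (M + N + m) * ‖e p.2‖) := by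
          rw [pow_add _ (M + N) m, div_pow, mul_pow]
          ring
      _ ≤ _ := by
          gcongr
          exact le_max_right _ _

end Domination

section Laplace

variable {E : Type*} [NormedAddCommGroup E] [NormedSpace ℝ E] {S φ : E → ℝ} {x : E} {m : ℕ}

theorem exp_div_le_of_mul_sq_norm_le {c t : ℝ} {y : E} (t_pos : 0 < t)
    (h : c * ‖t • y‖ ^ 2 ≤ S (x + t • y)) :
    Real.exp (-S (x + t • y) / (2 * t ^ 2)) ≤ Real.exp (-(c / 2) * ‖y‖ ^ 2) := by
  rw [norm_smul, mul_pow, Real.norm_of_nonneg t_pos.le] at h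
  gcongr
  rw [div_le_iff₀ (by positivity)]
  linarith

theorem rescaledIntegrand_isBigO_of_mul_sq_norm_le {c : ℝ} (φ_cont : Continuous φ)
    (φ_supp : HasCompactSupport φ) (hS : ∀ z ∈ tsupport φ, c * ‖z - x‖ ^ 2 ≤ S z) (N : ℕ) :
    rescaledIntegrand S φ x =O[𝓟 {p | p.1 ∈ Set.Ioc 0 1}]
        fun p => (1 + ‖p.2‖) ^ N * Real.exp (-(c / 2) * ‖p.2‖ ^ 2) := by
  obtain ⟨B, hB⟩ := φ_cont.bounded_above_of_compact_support φ_supp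
  refine IsBigO.of_bound B ?_
  filter_upwards [mem_principal_self _] with p hp
  rw [rescaledIntegrand]
  have B_nonneg : 0 ≤ B := (norm_nonneg _).trans (hB x)
  by_cases hz : x + p.1 • p.2 ∈ tsupport φ
  · have exp_le := exp_div_le_of_mul_sq_norm_le hp.1 (by simpa using hS _ hz)
    have one_le : 1 ≤ (1 + ‖p.2‖) ^ N := one_le_pow₀ (by linarith [norm_nonneg p.2])
    rw [norm_mul, norm_mul, mul_comm, Real.norm_of_nonneg (Real.exp_pos _).le,
      Real.norm_of_nonneg (Real.exp_pos _).le, norm_pow,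
      Real.norm_of_nonneg (by positivity : 0 ≤ 1 + ‖p.2‖)]
    exact mul_le_mul (hB _) (exp_le.trans (le_mul_of_one_le_left (Real.exp_pos _).le one_le))
      (Real.exp_pos _).le B_nonneg
  · rw [image_eq_zero_of_notMem_tsupport hz, mul_zero, norm_zero]
    positivity

variable [FiniteDimensional ℝ E]

theorem exists_coercivity_constant (hS : ContDiffAt ℝ 3 S x) (hS0 : S x = 0)
    (hdS : fderiv ℝ S x = 0) (hess_pos : ∀ y, y ≠ 0 → 0 < taylorTerm S x 2 y) {K : Set E}
    (hK : IsCompact K) (hSK : ContinuousOn S K) (S_pos : ∀ z ∈ K, z ≠ x → 0 < S z) :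
    ∃ c > 0, (∀ y, c * ‖y‖ ^ 2 ≤ taylorTerm S x 2 y) ∧
      (∀ᶠ v in 𝓝 0, c * ‖v‖ ^ 2 ≤ S (x + v)) ∧ ∀ z ∈ K, c * ‖z - x‖ ^ 2 ≤ S z := by
  obtain ⟨c, c_pos, hc⟩ := exists_mul_sq_norm_le_of_homogeneous (continuous_taylorTerm S x 2)
    (taylorTerm_smul S x 2) hess_pos
  have near := eventually_mul_sq_norm_le hS hS0 hdS c_pos hc
  obtain ⟨c', c'_pos, hc'⟩ :=
    exists_mul_sq_norm_le_of_isCompact hK hSK S_pos (half_pos c_pos) near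
  have half_le : min (c / 2) c' ≤ c / 2 := min_le_left _ _
  refine ⟨min (c / 2) c', lt_min (half_pos c_pos) c'_pos, fun y => le_trans ?_ (hc y),
    near.mono fun v hv => le_trans ?_ hv, fun z hz => le_trans ?_ (hc' z hz)⟩
  · exact mul_le_mul_of_nonneg_right (by linarith) (by positivity)
  · exact mul_le_mul_of_nonneg_right half_le (by positivity)
  · exact mul_le_mul_of_nonneg_right (min_le_right _ _) (by positivity)

theorem exists_rescaledIntegrand_sub_isBigO_gaussian (hm : m ≠ 0)
    (hS : ContDiffAt ℝ (m + 2 : ℕ) S x) (hS0 : S x = 0) (hdS : fderiv ℝ S x = 0)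
    (hess_pos : ∀ y, y ≠ 0 → 0 < taylorTerm S x 2 y) (hφ : ContDiffAt ℝ m φ x)
    (φ_cont : Continuous φ) (φ_supp : HasCompactSupport φ) (S_cont : ContinuousOn S (tsupport φ))
    (S_pos : ∀ z ∈ tsupport φ, z ≠ x → 0 < S z) :
    ∃ c > 0, ∃ N : ℕ, (∀ y, c * ‖y‖ ^ 2 ≤ taylorTerm S x 2 y / 2) ∧
      (fun p => rescaledIntegrand S φ x p -
        Real.exp (-taylorTerm S x 2 p.2 / 2) * partialSum m (laplaceSeries m S φ x) p)
      =O[𝓟 {p | p.1 ∈ Set.Ioc 0 1}]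
        fun p => p.1 ^ m * (1 + ‖p.2‖) ^ N * Real.exp (-c * ‖p.2‖ ^ 2) := by
  obtain ⟨c, c_pos, hess_ge, near_ge, supp_ge⟩ := exists_coercivity_constant
    (hS.of_le (mod_cast (by lia : 3 ≤ m + 2))) hS0 hdS hess_pos φ_supp S_cont S_pos
  have weight_le (y : E) :
      Real.exp (-taylorTerm S x 2 y / 2) ≤ Real.exp (-(c / 2) * ‖y‖ ^ 2) := by
    gcongr
    linarith [hess_ge y]
  obtain ⟨M, hM⟩ := exists_rescaledIntegrand_sub_isBigO hS hS0 hdS hφ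
  obtain ⟨N, hN⟩ := partialSum_isBigO (laplaceSeries_mem_paritySeries m S φ x) m
  refine ⟨c / 2, half_pos c_pos, _, fun y => by linarith [hess_ge y],
    isBigO_principal_of_rescaledNhds (M := M) (N := N) (e := fun y => Real.exp (-(c / 2) * ‖y‖ ^ 2))
      (hM.trans ((isBigO_refl _ _).mul (IsBigO.of_bound 2 ?_)))
      ((rescaledIntegrand_isBigO_of_mul_sq_norm_le φ_cont φ_supp supp_ge N).sub ?_)⟩
  · filter_upwards [eventually_rescaledNhds_mem_Ioc,
      tendsto_smul_rescaledNhds.eventually near_ge] with p hp near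
    rw [Real.norm_of_nonneg (by positivity), Real.norm_of_nonneg (by positivity)]
    linarith [weight_le p.2, exp_div_le_of_mul_sq_norm_le hp.1 near]
  · have weight_isBigO : (fun p : ℝ × E => Real.exp (-taylorTerm S x 2 p.2 / 2))
        =O[𝓟 {p | p.1 ∈ Set.Ioc 0 1}] fun p => Real.exp (-(c / 2) * ‖p.2‖ ^ 2) :=
      IsBigO.of_norm_le fun p => (Real.norm_of_nonneg (Real.exp_pos _).le).trans_le (weight_le p.2)
    exact (weight_isBigO.mul hN).congr_right fun p => mul_comm _ _

end Laplace

section LaplaceIntegral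

theorem integral_isBigO_pow_of_principal {E : Type*} [MeasurableSpace E] {μ : Measure E}
    {D : ℝ × E → ℝ} {h : E → ℝ} {m : ℕ}
    (hD : D =O[𝓟 {p | p.1 ∈ Set.Ioc 0 1}] fun p => p.1 ^ m * h p.2) (hh : Integrable h μ) :
    (fun t => ∫ y, D (t, y) ∂μ) =O[𝓝[>] 0] fun t => t ^ m := by
  obtain ⟨C, hC⟩ := hD.bound
  refine IsBigO.of_bound (C * ∫ y, ‖h y‖ ∂μ) ?_
  filter_upwards [Ioc_mem_nhdsGT one_pos] with t ht
  calc
    ‖∫ y, D (t, y) ∂μ‖ ≤ ∫ y, C * ‖t ^ m‖ * ‖h y‖ ∂μ := by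
      refine norm_integral_le_of_norm_le (hh.norm.const_mul _) (ae_of_all _ fun y => ?_)
      rw [mul_assoc, ← norm_mul]
      exact eventually_principal.1 hC (t, y) ht
    _ = C * (∫ y, ‖h y‖ ∂μ) * ‖t ^ m‖ := by
      rw [integral_const_mul]
      ring

variable {E : Type*} [NormedAddCommGroup E] [MeasurableSpace E] [BorelSpace E] {μ : Measure E}

theorem integrable_exp_div_mul_of_hasCompactSupport [IsFiniteMeasureOnCompacts μ] {S φ : E → ℝ}
    (φ_cont : Continuous φ) (φ_supp : HasCompactSupport φ) (S_cont : ContinuousOn S (tsupport φ))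
    (a : ℝ) : Integrable (fun z => Real.exp (-S z / a) * φ z) μ :=
  (integrableOn_iff_integrable_of_support_subset
    ((Function.support_mul_subset_right _ _).trans (subset_tsupport φ))).1
    (ContinuousOn.integrableOn_compact φ_supp (by fun_prop))

variable [NormedSpace ℝ E] [FiniteDimensional ℝ E] [μ.IsAddHaarMeasure]

theorem integral_comp_add_smul (g : E → ℝ) (x : E) {t : ℝ} (ht : 0 ≤ t) :
    ∫ y, g (x + t • y) ∂μ = (t ^ Module.finrank ℝ E)⁻¹ * ∫ z, g z ∂μ := by
  rw [Measure.integral_comp_smul μ (fun z => g (x + z)), integral_add_left_eq_self, smul_eq_mul,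
    abs_of_nonneg (by positivity)]

variable {S φ : E → ℝ} {x : E} {m : ℕ}

theorem laplace_integral_expansion (hm : m ≠ 0) (hS : ContDiffAt ℝ (m + 2 : ℕ) S x)
    (hS0 : S x = 0) (hdS : fderiv ℝ S x = 0)
    (hess_pos : ∀ y, y ≠ 0 → 0 < taylorTerm S x 2 y) (hφ : ContDiffAt ℝ m φ x)
    (φ_cont : Continuous φ) (φ_supp : HasCompactSupport φ) (S_cont : ContinuousOn S (tsupport φ))
    (S_pos : ∀ z ∈ tsupport φ, z ≠ x → 0 < S z) :
    (fun t => (t ^ Module.finrank ℝ E)⁻¹ * ∫ z, Real.exp (-S z / (2 * t ^ 2)) * φ z ∂μ -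
        ∑ k ∈ Finset.range m, t ^ k *
          ∫ y, PowerSeries.coeff k (laplaceSeries m S φ x) y *
            Real.exp (-taylorTerm S x 2 y / 2) ∂μ)
      =O[𝓝[>] 0] fun t => t ^ m := by
  obtain ⟨c, c_pos, N, hess_ge, hN⟩ := exists_rescaledIntegrand_sub_isBigO_gaussian hm hS hS0 hdS
    hess_pos hφ φ_cont φ_supp S_cont S_pos
  have coeff_integrable (k : ℕ) : Integrable (fun y => PowerSeries.coeff k (laplaceSeries m S φ x) y
      * Real.exp (-taylorTerm S x 2 y / 2)) μ := by
    refine integrable_polyGrowth_mul μ (laplaceSeries_mem_paritySeries m S φ x k).1 c_pos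
      (by have := continuous_taylorTerm S x 2; fun_prop) fun y => ?_
    rw [Real.abs_exp]
    gcongr
    linarith [hess_ge y]
  have weighted_partialSum (t : ℝ) (y : E) :
      Real.exp (-taylorTerm S x 2 y / 2) * partialSum m (laplaceSeries m S φ x) (t, y) =
        ∑ k ∈ Finset.range m, t ^ k * (PowerSeries.coeff k (laplaceSeries m S φ x) y *
          Real.exp (-taylorTerm S x 2 y / 2)) := by
    rw [partialSum_apply, Finset.mul_sum]
    exact Finset.sum_congr rfl fun k _ => by ring
  simp only [mul_assoc] at hN
  refine (integral_isBigO_pow_of_principal hN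
    (integrable_one_add_norm_pow_mul_exp μ N c_pos)).congr' ?_ .rfl
  filter_upwards [self_mem_nhdsWithin] with t t_pos
  simp only [rescaledIntegrand, weighted_partialSum, ← integral_const_mul,
    ← integral_comp_add_smul _ x (le_of_lt t_pos)]
  rw [← integral_finsetSum _ fun k _ => (coeff_integrable k).const_mul _]
  exact integral_sub
    (((integrable_exp_div_mul_of_hasCompactSupport φ_cont φ_supp S_cont _).comp_add_left
      x).comp_smul (ne_of_gt t_pos))
    (integrable_finsetSum _ fun k _ => (coeff_integrable k).const_mul _)

end LaplaceIntegral

section Gaussian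

variable {ι : Type*} [Fintype ι]

/-- The centred Gaussian weight with inverse covariance matrix `A`, which is not normalised. -/
noncomputable def gaussianWeight (A : Matrix ι ι ℝ) (y : ι → ℝ) : ℝ :=
  Real.exp (-(y ⬝ᵥ A.mulVec y) / 2)

/-- The integral of `f` against the centred Gaussian weight with inverse covariance matrix `A`. -/
noncomputable def gaussianIntegral (A : Matrix ι ι ℝ) (f : (ι → ℝ) → ℝ) : ℝ :=
  ∫ y, f y * gaussianWeight A y

theorem hasFDerivAt_dotProduct_mulVec (A : Matrix ι ι ℝ) (y : ι → ℝ) :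
    HasFDerivAt (fun y : ι → ℝ => y ⬝ᵥ A.mulVec y) (∑ i, (y i •
      (ContinuousLinearMap.proj i).comp A.mulVecLin.toContinuousLinearMap +
        A.mulVec y i • ContinuousLinearMap.proj (R := ℝ) (φ := fun _ : ι => ℝ) i)) y :=
  HasFDerivAt.fun_sum fun i _ => (hasFDerivAt_apply i y).mul
    (hasFDerivAt_pi'.1 A.mulVecLin.toContinuousLinearMap.hasFDerivAt i)

theorem differentiable_gaussianWeight (A : Matrix ι ι ℝ) :
    Differentiable ℝ (gaussianWeight A) := by
  have form_diff : Differentiable ℝ fun y : ι → ℝ => y ⬝ᵥ A.mulVec y :=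
    fun y => (hasFDerivAt_dotProduct_mulVec A y).differentiableAt
  unfold gaussianWeight
  fun_prop

theorem gaussianIntegral_eq_zero_of_odd (A : Matrix ι ι ℝ)
    {f : (ι → ℝ) → ℝ} (hf : ∀ y, f (-y) = -f y) : gaussianIntegral A f = 0 := by
  have reflect := integral_neg_eq_self (fun y => f y * gaussianWeight A y) volume
  simp only [gaussianWeight, hf, Matrix.mulVec_neg, neg_dotProduct_neg, neg_mul,
    integral_neg] at reflect
  simp only [gaussianIntegral, gaussianWeight]
  linarith

variable {A : Matrix ι ι ℝ}

theorem integrable_mul_gaussianWeight (hA : A.PosDef) {f : (ι → ℝ) → ℝ}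
    (hf : f ∈ polyGrowth (ι → ℝ)) :
    Integrable fun y => f y * gaussianWeight A y := by
  obtain ⟨c, c_pos, hc⟩ := exists_mul_sq_norm_le_of_homogeneous
    (q := fun y : ι → ℝ => y ⬝ᵥ A.mulVec y) (by fun_prop)
    (fun t y => by
      rw [Matrix.mulVec_smul, smul_dotProduct, dotProduct_smul, smul_eq_mul, smul_eq_mul,
        sq, mul_assoc])
    (fun y hy => by simpa using hA.dotProduct_mulVec_pos hy)
  refine integrable_polyGrowth_mul volume hf (half_pos c_pos)
    (differentiable_gaussianWeight A).continuous fun y => ?_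
  rw [gaussianWeight, Real.abs_exp]
  gcongr
  linarith [hc y]

theorem gaussianIntegral_add (hA : A.PosDef) {f g : (ι → ℝ) → ℝ} (hf : f ∈ polyGrowth (ι → ℝ))
    (hg : g ∈ polyGrowth (ι → ℝ)) :
    gaussianIntegral A (f + g) = gaussianIntegral A f + gaussianIntegral A g := by
  simp only [gaussianIntegral, Pi.add_apply, add_mul]
  exact integral_add (integrable_mul_gaussianWeight hA hf) (integrable_mul_gaussianWeight hA hg)

theorem gaussianIntegral_smul (A : Matrix ι ι ℝ) (c : ℝ) (f : (ι → ℝ) → ℝ) :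
    gaussianIntegral A (c • f) = c * gaussianIntegral A f := by
  simp only [gaussianIntegral, Pi.smul_apply, smul_eq_mul, mul_assoc, integral_const_mul]

theorem gaussianIntegral_sum {κ : Type*} {s : Finset κ} (hA : A.PosDef) {f : κ → (ι → ℝ) → ℝ}
    (hf : ∀ k ∈ s, f k ∈ polyGrowth (ι → ℝ)) :
    gaussianIntegral A (∑ k ∈ s, f k) = ∑ k ∈ s, gaussianIntegral A (f k) := by
  simp only [gaussianIntegral, Finset.sum_apply, Finset.sum_mul]
  exact integral_finsetSum _ fun k hk => integrable_mul_gaussianWeight hA (hf k hk)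

variable [DecidableEq ι]

open scoped MatrixOrder Matrix.Norms.L2Operator in
theorem exists_eq_transpose_mul_self_of_posDef (hA : A.PosDef) :
    ∃ B : Matrix ι ι ℝ, A = B.transpose * B ∧ B.det ≠ 0 := by
  obtain ⟨B, hB⟩ := CStarAlgebra.nonneg_iff_eq_star_mul_self.1 hA.posSemidef.nonneg
  rw [Matrix.star_eq_conjTranspose, Matrix.conjTranspose_eq_transpose_of_trivial] at hB
  refine ⟨B, hB, fun h => hA.det_pos.ne' ?_⟩
  rw [hB, Matrix.det_mul, h, mul_zero]

theorem gaussianIntegral_one (hA : A.PosDef) :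
    gaussianIntegral A 1 = √((2 * Real.pi) ^ Fintype.card ι / A.det) := by
  obtain ⟨B, rfl, det_ne⟩ := exists_eq_transpose_mul_self_of_posDef hA
  set g : (ι → ℝ) → ℝ := fun z => ∏ i, Real.exp (-(1 / 2) * z i ^ 2) with hg
  have g_cont : Continuous g := by fun_prop
  have g_mulVec (y : ι → ℝ) :
      g (B.mulVec y) = gaussianWeight (B.transpose * B) y := by
    simp only [hg, gaussianWeight]
    rw [← Real.exp_sum, ← Matrix.mulVec_mulVec, Matrix.dotProduct_mulVec, Matrix.vecMul_transpose,
      ← Finset.mul_sum, dotProduct]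
    simp only [sq]
    ring_nf
  have integral_g : ∫ z, g z = √((2 * Real.pi) ^ Fintype.card ι) := by
    rw [integral_fintype_prod_volume_eq_pow fun s : ℝ => Real.exp (-(1 / 2) * s ^ 2),
      integral_gaussian, Real.sqrt_eq_rpow, Real.sqrt_eq_rpow, ← Real.rpow_mul_natCast,
      mul_comm (1 / 2 : ℝ), Real.rpow_natCast_mul]
    · ring_nf
    all_goals positivity
  calc
    gaussianIntegral (B.transpose * B) 1 = ∫ y, g (Matrix.toLin' B y) := by
      simp only [gaussianIntegral, Pi.one_apply, one_mul, Matrix.toLin'_apply, g_mulVec]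
    _ = ∫ z, g z ∂(Measure.map (Matrix.toLin' B) volume) :=
      (integral_map (LinearMap.continuous_of_finiteDimensional _).aemeasurable
        g_cont.aestronglyMeasurable).symm
    _ = |B.det|⁻¹ * √((2 * Real.pi) ^ Fintype.card ι) := by
      rw [Real.map_matrix_volume_pi_eq_smul_volume_pi det_ne, integral_smul_measure, integral_g,
        ENNReal.toReal_ofReal (abs_nonneg _), abs_inv, smul_eq_mul]
    _ = _ := by
      rw [Matrix.det_mul, Matrix.det_transpose, ← sq, Real.sqrt_div (by positivity),
        Real.sqrt_sq_eq_abs, div_eq_inv_mul]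

/-- Since `A (A⁻¹ eᵢ) = eᵢ`, differentiating in the direction of the `i`-th row of `A⁻¹` brings down
the coordinate `yᵢ`. -/
theorem fderiv_gaussianWeight_inv_row (hA : A.PosDef) (i : ι) (y : ι → ℝ) :
    fderiv ℝ (gaussianWeight A) y (A⁻¹.row i) =
      -(y i * gaussianWeight A y) := by
  have inv_row_dotProduct : A⁻¹.row i ⬝ᵥ A.mulVec y = y i := by
    change (A⁻¹.mulVec (A.mulVec y)) i = y i
    rw [Matrix.mulVec_mulVec, Matrix.nonsing_inv_mul _ hA.det_pos.ne'.isUnit, Matrix.one_mulVec]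
  have dotProduct_inv_row : y ⬝ᵥ A.mulVec (A⁻¹.row i) = y i := by
    have A_symm : A.transpose = A := by simpa using hA.isHermitian.eq
    rw [Matrix.dotProduct_mulVec, ← Matrix.mulVec_transpose, A_symm, dotProduct_comm,
      inv_row_dotProduct]
  have weight_deriv := ((hasFDerivAt_dotProduct_mulVec A y).const_mul (-1 / 2)).exp
  have deriv_sum :
      ∑ j, (y j * (A.mulVec (A⁻¹.row i)) j + A.mulVec y j * A⁻¹.row i j) = 2 * y i := by
    rw [Finset.sum_add_distrib, ← dotProduct, dotProduct_inv_row, ← dotProduct, dotProduct_comm,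
      inv_row_dotProduct, two_mul]
  have weight_eq : gaussianWeight A =
      fun y => Real.exp (-1 / 2 * (y ⬝ᵥ A.mulVec y)) := by
    ext y
    rw [gaussianWeight]
    ring_nf
  rw [weight_eq, weight_deriv.fderiv]
  simp only [smul_apply, sum_apply, add_apply, ContinuousLinearMap.comp_apply,
    LinearMap.coe_toContinuousLinearMap', Matrix.mulVecBilin_apply,
    ContinuousLinearMap.proj_apply, smul_eq_mul, deriv_sum]
  ring_nf

end Gaussian

section PartialDerivatives

theorem apply_eq_sum_mul_apply_single {ι : Type*} [Fintype ι] [DecidableEq ι]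
    (L : (ι → ℝ) →L[ℝ] ℝ) (v : ι → ℝ) : L v = ∑ i, v i * L (Pi.single i 1) := by
  conv_lhs => rw [pi_eq_sum_univ' v]
  simp

variable {n : ℕ} {f g : (Fin n → ℝ) → ℝ} {x : Fin n → ℝ}

theorem contDiffAt_pd {k m : WithTop ℕ∞} (hf : ContDiffAt ℝ m f x) (h : k + 1 ≤ m) (i : Fin n) :
    ContDiffAt ℝ k (pd n i f) x :=
  (hf.fderiv_right h).clm_apply contDiffAt_const

theorem pd_comm (hf : ContDiffAt ℝ 2 f x) (i j : Fin n) :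
    pd n i (pd n j f) x = pd n j (pd n i f) x := by
  have fderiv_diff : DifferentiableAt ℝ (fderiv ℝ f) x :=
    (hf.fderiv_right (m := 1) (by norm_num)).differentiableAt one_ne_zero
  have pd_pd_eq (i j : Fin n) : pd n i (pd n j f) x =
      fderiv ℝ (fderiv ℝ f) x (Pi.single i 1) (Pi.single j 1) := by
    change fderiv ℝ (fun z => fderiv ℝ f z (Pi.single j 1)) x (Pi.single i 1) = _
    rw [fderiv_clm_apply fderiv_diff (differentiableAt_const _)]
    simp
  rw [pd_pd_eq, pd_pd_eq, (hf.isSymmSndFDerivAt (by simp)).eq]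

theorem pd3_rotate (hf : ContDiffAt ℝ 3 f x) (i j k : Fin n) :
    pd3 n f x i j k = pd3 n f x j k i := by
  have swap_right : pd n i (pd n k f) =ᶠ[𝓝 x] pd n k (pd n i f) := by
    filter_upwards [(hf.of_le (m := 2) (by norm_cast)).eventually (by simp)] with z hz
    exact pd_comm hz i k
  calc
    pd3 n f x i j k = pd3 n f x j i k := pd_comm (contDiffAt_pd hf (by norm_num) k) i j
    _ = pd3 n f x j k i := by rw [pd3, pd, swap_right.fderiv_eq, ← pd, ← pd3]

theorem pd_mul (hf : Differentiable ℝ f) (hg : Differentiable ℝ g) (i : Fin n) :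
    pd n i (f * g) = pd n i f * g + f * pd n i g := by
  ext y
  simp only [pd, fderiv_mul (hf y) (hg y), Pi.add_apply, Pi.mul_apply, add_apply, smul_apply,
    smul_eq_mul]
  ring

theorem fderiv_apply_eq_sum_smul_pd (f : (Fin n → ℝ) → ℝ) (v : Fin n → ℝ) :
    (fun y => fderiv ℝ f y v) = ∑ i, v i • pd n i f := by
  ext y
  simp [apply_eq_sum_mul_apply_single _ v, pd]

theorem iteratedFDeriv_succ_apply_const {k : ℕ} (hf : ContDiffAt ℝ (k + 1 : ℕ) f x)
    (y : Fin n → ℝ) : (iteratedFDeriv ℝ (k + 1) f x fun _ => y) =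
      ∑ i, y i * iteratedFDeriv ℝ k (pd n i f) x fun _ => y := by
  have pd_eq (i : Fin n) : (iteratedFDeriv ℝ k (pd n i f) x fun _ => y) =
      iteratedFDeriv ℝ k (fderiv ℝ f) x (fun _ => y) (Pi.single i 1) := by
    have := (ContinuousLinearMap.apply ℝ ℝ (Pi.single i 1 : Fin n → ℝ)).iteratedFDeriv_comp_left
      (hf.fderiv_right (m := k) (by simp)) le_rfl
    exact DFunLike.congr_fun this fun _ => y
  simp only [pd_eq]
  rw [iteratedFDeriv_succ_apply_right]
  exact apply_eq_sum_mul_apply_single _ y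

/-- Euler's identity for the homogeneous polynomial `taylorTerm f x (k + 1)`. -/
theorem succ_mul_taylorTerm_succ {k : ℕ} (hf : ContDiffAt ℝ (k + 1 : ℕ) f x) (y : Fin n → ℝ) :
    (k + 1) * taylorTerm f x (k + 1) y = ∑ i, y i * taylorTerm (pd n i f) x k y := by
  simp only [taylorTerm, iteratedFDeriv_succ_apply_const hf, Nat.factorial_succ, Nat.cast_mul,
    Nat.cast_succ, mul_inv, Finset.mul_sum]
  refine Finset.sum_congr rfl fun i _ => ?_
  field_simp

theorem pd_taylorTerm_zero (f : (Fin n → ℝ) → ℝ) (x : Fin n → ℝ) (j : Fin n) :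
    pd n j (taylorTerm f x 0) = 0 := by
  ext y
  simp [pd, funext (taylorTerm_zero f x)]

theorem pd_taylorTerm_succ {k : ℕ} (hf : ContDiffAt ℝ (k + 1 : ℕ) f x) (j : Fin n) :
    pd n j (taylorTerm f x (k + 1)) = taylorTerm (pd n j f) x k := by
  induction k generalizing f with
  | zero =>
    ext y
    rw [taylorTerm_zero, funext (taylorTerm_one f x), pd, ContinuousLinearMap.fderiv, pd]
  | succ k ih =>
    ext y
    have hpd (i : Fin n) := contDiffAt_pd (k := (k + 1 : ℕ)) hf (by simp) i
    have pd_pd_taylorTerm (i : Fin n) : pd n j (taylorTerm (pd n i f) x (k + 1)) =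
        taylorTerm (pd n i (pd n j f)) x k := by
      rw [ih (hpd i)]
      refine taylorTerm_congr ?_ k
      filter_upwards [(hf.of_le (m := 2) (by norm_cast; lia)).eventually (by simp)] with z hz
      exact pd_comm hz j i
    have euler : (fun y => ((k + 1 : ℕ) + 1 : ℝ) * taylorTerm f x (k + 1 + 1) y) =
        fun y => ∑ i, y i * taylorTerm (pd n i f) x (k + 1) y :=
      funext fun y => succ_mul_taylorTerm_succ hf y
    have euler_deriv := ((differentiable_taylorTerm f x (k + 1 + 1) y).hasFDerivAt.const_mul
      _).unique <| euler ▸ HasFDerivAt.fun_sum fun i _ => (hasFDerivAt_apply i y).mul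
        (differentiable_taylorTerm (pd n i f) x (k + 1) y).hasFDerivAt
    replace euler_deriv := DFunLike.congr_fun euler_deriv (Pi.single j 1)
    change _ * pd n j (taylorTerm f x (k + 1 + 1)) y = _ at euler_deriv
    have pd_apply (i : Fin n) : fderiv ℝ (taylorTerm (pd n i f) x (k + 1)) y (Pi.single j 1) =
        taylorTerm (pd n i (pd n j f)) x k y := congrFun (pd_pd_taylorTerm i) y
    simp only [smul_apply, smul_eq_mul, Finset.sum_add_distrib, add_apply, sum_apply,
      ContinuousLinearMap.proj_apply, pd_apply, ← succ_mul_taylorTerm_succ (hpd j)] at euler_deriv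
    simp only [Nat.cast_add, Nat.cast_one, Pi.single_apply, mul_ite, mul_one, mul_zero,
      Finset.sum_ite_eq', Finset.mem_univ, if_true] at euler_deriv
    have factor_ne : (k + 1 + 1 : ℝ) ≠ 0 := by positivity
    exact mul_left_cancel₀ factor_ne (by linarith)

end PartialDerivatives

section IntegrationByParts

/-- The algebra of differentiable functions which have at most polynomial growth together with all
their directional derivatives. -/
def polyGrowthDeriv (E : Type*) [NormedAddCommGroup E] [NormedSpace ℝ E] :
    Subalgebra ℝ (E → ℝ) where
  carrier := {f | Differentiable ℝ f ∧ f ∈ polyGrowth E ∧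
    ∀ v, (fun y => fderiv ℝ f y v) ∈ polyGrowth E}
  mul_mem' := by
    rintro f g ⟨f_diff, hf, hf'⟩ ⟨g_diff, hg, hg'⟩
    refine ⟨f_diff.mul g_diff, mul_mem hf hg, fun v => ?_⟩
    convert add_mem (mul_mem hf (hg' v)) (mul_mem hg (hf' v)) using 1
    ext y
    simp [fderiv_mul (f_diff y) (g_diff y)]
  add_mem' := by
    rintro f g ⟨f_diff, hf, hf'⟩ ⟨g_diff, hg, hg'⟩
    refine ⟨f_diff.add g_diff, add_mem hf hg, fun v => ?_⟩
    convert add_mem (hf' v) (hg' v) using 1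
    ext y
    simp [fderiv_add (f_diff y) (g_diff y)]
  algebraMap_mem' r := by
    refine ⟨differentiable_const r, algebraMap_mem _ r, fun v => ?_⟩
    convert zero_mem (polyGrowth E) using 1
    ext y
    simp [Pi.algebraMap_def]

theorem coord_mem_polyGrowth {ι : Type*} [Fintype ι] (i : ι) :
    (fun y : ι → ℝ => y i) ∈ polyGrowth (ι → ℝ) :=
  ⟨by fun_prop, 1, IsBigO.of_norm_le fun y => by
    rw [pow_one]
    linarith [norm_le_pi_norm y i]⟩

variable {n : ℕ} {A : Matrix (Fin n) (Fin n) ℝ} {R : (Fin n → ℝ) → ℝ}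

theorem gaussianIntegral_coord_mul (hA : A.PosDef) (hR : R ∈ polyGrowthDeriv (Fin n → ℝ))
    (i : Fin n) : gaussianIntegral A ((fun y => y i) * R) =
      ∑ j, A⁻¹ i j * gaussianIntegral A (pd n j R) := by
  obtain ⟨R_diff, R_growth, R_deriv⟩ := hR
  have weight_deriv := fderiv_gaussianWeight_inv_row hA i
  have coord_integrable := integrable_mul_gaussianWeight hA
    (mul_mem (coord_mem_polyGrowth i) R_growth)
  have by_parts := integral_mul_fderiv_eq_neg_fderiv_mul_of_integrable (μ := volume) (f := R)
    (v := A⁻¹.row i) (integrable_mul_gaussianWeight hA (R_deriv _))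
    (coord_integrable.neg.congr <| ae_of_all _ fun y => by
      simp only [weight_deriv, Pi.neg_apply, Pi.mul_apply]; ring)
    (integrable_mul_gaussianWeight hA R_growth) (fun y _ => R_diff y)
    (fun y _ => differentiable_gaussianWeight A y)
  calc
    gaussianIntegral A ((fun y => y i) * R) =
        gaussianIntegral A fun y => fderiv ℝ R y (A⁻¹.row i) := by
      rw [gaussianIntegral, gaussianIntegral, ← neg_inj, ← by_parts, ← integral_neg]
      refine integral_congr_ae (ae_of_all _ fun y => ?_)
      simp only [weight_deriv, Pi.mul_apply]
      ring
    _ = ∑ j, A⁻¹ i j * gaussianIntegral A (pd n j R) := by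
      have pd_mem (j : Fin n) : pd n j R ∈ polyGrowth (Fin n → ℝ) := R_deriv (Pi.single j 1)
      rw [fderiv_apply_eq_sum_smul_pd,
        gaussianIntegral_sum hA fun j _ => Subalgebra.smul_mem _ (pd_mem j) _]
      simp only [gaussianIntegral_smul, Matrix.row_apply]

variable {f : (Fin n → ℝ) → ℝ} {x : Fin n → ℝ}

theorem taylorTerm_mem_polyGrowthDeriv {k : ℕ} (hf : ContDiffAt ℝ k f x) :
    taylorTerm f x k ∈ polyGrowthDeriv (Fin n → ℝ) := by
  refine ⟨differentiable_taylorTerm f x k, taylorTerm_mem_polyGrowth f x k, fun v => ?_⟩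
  rw [fderiv_apply_eq_sum_smul_pd]
  refine sum_mem fun i _ => Subalgebra.smul_mem _ ?_ _
  rcases k with _ | k
  · rw [pd_taylorTerm_zero]
    exact zero_mem _
  · rw [pd_taylorTerm_succ hf]
    exact taylorTerm_mem_polyGrowth _ x k

theorem gaussianIntegral_taylorTerm_succ_mul (hA : A.PosDef) {k : ℕ}
    (hf : ContDiffAt ℝ (k + 1 : ℕ) f x) (hR : R ∈ polyGrowthDeriv (Fin n → ℝ)) :
    (k + 1) * gaussianIntegral A (taylorTerm f x (k + 1) * R) =
      ∑ i, ∑ j, A⁻¹ i j * gaussianIntegral A (pd n i (taylorTerm (pd n j f) x k * R)) := by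
  have mem (i : Fin n) : taylorTerm (pd n i f) x k * R ∈ polyGrowthDeriv (Fin n → ℝ) :=
    mul_mem (taylorTerm_mem_polyGrowthDeriv (contDiffAt_pd hf (by simp) i)) hR
  have euler : (k + 1 : ℝ) • (taylorTerm f x (k + 1) * R) =
      ∑ j, (fun y => y j) * (taylorTerm (pd n j f) x k * R) := by
    ext y
    simp only [Pi.smul_apply, Pi.mul_apply, smul_eq_mul, Finset.sum_apply, ← mul_assoc,
      ← Finset.sum_mul, succ_mul_taylorTerm_succ hf]
  have inv_symm (i j : Fin n) : A⁻¹ i j = A⁻¹ j i := by simpa using hA.inv.isHermitian.apply j i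
  rw [← gaussianIntegral_smul, euler, gaussianIntegral_sum hA fun j _ =>
    mul_mem (coord_mem_polyGrowth j) (mem j).2.1, Finset.sum_comm]
  simp only [gaussianIntegral_coord_mul hA (mem _), inv_symm _ _]

end IntegrationByParts

section WickRecursion

variable {n : ℕ} {A : Matrix (Fin n) (Fin n) ℝ} {f g : (Fin n → ℝ) → ℝ} {x : Fin n → ℝ}

theorem gaussianIntegral_taylorTerm_zero_mul (A : Matrix (Fin n) (Fin n) ℝ)
    (f R : (Fin n → ℝ) → ℝ) (x : Fin n → ℝ) :
    gaussianIntegral A (taylorTerm f x 0 * R) = f x * gaussianIntegral A R := by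
  rw [← gaussianIntegral_smul]
  congr 1
  ext y
  simp [taylorTerm_zero]

theorem gaussianIntegral_taylorTerm_zero (A : Matrix (Fin n) (Fin n) ℝ)
    (f : (Fin n → ℝ) → ℝ) (x : Fin n → ℝ) :
    gaussianIntegral A (taylorTerm f x 0) = f x * gaussianIntegral A 1 := by
  rw [← gaussianIntegral_taylorTerm_zero_mul, mul_one]

theorem gaussianIntegral_taylorTerm_add_two (hA : A.PosDef) {k : ℕ}
    (hf : ContDiffAt ℝ (k + 2 : ℕ) f x) :
    (k + 2) * gaussianIntegral A (taylorTerm f x (k + 2)) =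
      ∑ i, ∑ j, A⁻¹ i j * gaussianIntegral A (taylorTerm (pd n i (pd n j f)) x k) := by
  have recursion := gaussianIntegral_taylorTerm_succ_mul hA (k := k + 1) hf
    (one_mem (polyGrowthDeriv (Fin n → ℝ)))
  have hpd (j : Fin n) := contDiffAt_pd (k := (k + 1 : ℕ)) hf (by norm_cast) j
  simp only [mul_one, pd_taylorTerm_succ (hpd _)] at recursion
  rw [← recursion]
  push_cast
  ring

theorem gaussianIntegral_taylorTerm_one_mul_taylorTerm_succ (hA : A.PosDef) {l : ℕ}
    (hf : ContDiffAt ℝ 1 f x) (hg : ContDiffAt ℝ (l + 1 : ℕ) g x) :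
    gaussianIntegral A (taylorTerm f x 1 * taylorTerm g x (l + 1)) =
      ∑ i, ∑ j, A⁻¹ i j * (pd n j f x * gaussianIntegral A (taylorTerm (pd n i g) x l)) := by
  have recursion := gaussianIntegral_taylorTerm_succ_mul hA (k := 0) hf
    (taylorTerm_mem_polyGrowthDeriv hg)
  simpa only [pd_mul (differentiable_taylorTerm _ x _) (differentiable_taylorTerm g x _),
    pd_taylorTerm_zero, pd_taylorTerm_succ hg, zero_mul, zero_add, Nat.cast_zero, one_mul,
    gaussianIntegral_taylorTerm_zero_mul] using recursion

theorem gaussianIntegral_taylorTerm_add_two_mul_taylorTerm_succ (hA : A.PosDef) {k l : ℕ}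
    (hf : ContDiffAt ℝ (k + 2 : ℕ) f x) (hg : ContDiffAt ℝ (l + 1 : ℕ) g x) :
    (k + 2) * gaussianIntegral A (taylorTerm f x (k + 2) * taylorTerm g x (l + 1)) =
      ∑ i, ∑ j, A⁻¹ i j *
        (gaussianIntegral A (taylorTerm (pd n i (pd n j f)) x k * taylorTerm g x (l + 1)) +
          gaussianIntegral A (taylorTerm (pd n j f) x (k + 1) * taylorTerm (pd n i g) x l)) := by
  have recursion := gaussianIntegral_taylorTerm_succ_mul hA (k := k + 1) hf
    (taylorTerm_mem_polyGrowthDeriv hg)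
  have hpd (j : Fin n) := contDiffAt_pd (k := (k + 1 : ℕ)) hf (by norm_cast) j
  have mul_mem_polyGrowth (u v : (Fin n → ℝ) → ℝ) (a b : ℕ) :
      taylorTerm u x a * taylorTerm v x b ∈ polyGrowth (Fin n → ℝ) :=
    mul_mem (taylorTerm_mem_polyGrowth u x a) (taylorTerm_mem_polyGrowth v x b)
  simp only [pd_mul (differentiable_taylorTerm _ x _) (differentiable_taylorTerm g x _),
    pd_taylorTerm_succ (hpd _), pd_taylorTerm_succ hg,
    gaussianIntegral_add hA (mul_mem_polyGrowth _ _ _ _) (mul_mem_polyGrowth _ _ _ _)]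
    at recursion
  rw [← recursion]
  push_cast
  ring

end WickRecursion

section Contractions

variable {ι : Type*} [Fintype ι]

/-- The complete contraction of `T ⊗ T` with three copies of `C`, one of which joins the two factors
(the dumbbell Feynman graph). -/
def dumbbellContraction (C : Matrix ι ι ℝ) (T : ι → ι → ι → ℝ) : ℝ :=
  ∑ i, ∑ j, ∑ l, ∑ m, ∑ k, ∑ r, C i j * C l m * C k r * (T i j k * T l m r)

/-- The complete contraction of `T ⊗ T` with three copies of `C`, all of which join the two factors
(the theta Feynman graph). -/
def thetaContraction (C : Matrix ι ι ℝ) (T : ι → ι → ι → ℝ) : ℝ :=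
  ∑ i, ∑ j, ∑ l, ∑ m, ∑ k, ∑ r, C i l * C j m * C k r * (T i j k * T l m r)

theorem dumbbellContraction_smul (c : ℝ) (C : Matrix ι ι ℝ) (T : ι → ι → ι → ℝ) :
    dumbbellContraction (c • C) T = c ^ 3 * dumbbellContraction C T := by
  simp only [dumbbellContraction, ← Fintype.sum_prod_type', Finset.mul_sum, Matrix.smul_apply,
    smul_eq_mul]
  exact Finset.sum_congr rfl fun _ _ => by ring

theorem thetaContraction_smul (c : ℝ) (C : Matrix ι ι ℝ) (T : ι → ι → ι → ℝ) :
    thetaContraction (c • C) T = c ^ 3 * thetaContraction C T := by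
  simp only [thetaContraction, ← Fintype.sum_prod_type', Finset.mul_sum, Matrix.smul_apply,
    smul_eq_mul]
  exact Finset.sum_congr rfl fun _ _ => by ring

theorem sum_mul_sum_mul_sum_eq_dumbbellContraction (C : Matrix ι ι ℝ) (T : ι → ι → ι → ℝ) :
    ∑ k, ∑ r, C k r * ((∑ i, ∑ j, C i j * T i j r) * ∑ l, ∑ m, C l m * T l m k) =
      dumbbellContraction C T := by
  simp only [Finset.sum_mul_sum]
  simp only [dumbbellContraction, Finset.mul_sum, ← Fintype.sum_prod_type']
  refine Fintype.sum_equiv ⟨fun (k, r, i, l, j, m) => (l, m, i, j, k, r),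
    fun (l, m, i, j, k, r) => (k, r, i, l, j, m), fun _ => rfl, fun _ => rfl⟩ _ _
    fun (k, r, i, l, j, m) => ?_
  simp only [Equiv.coe_fn_mk]
  ring

theorem sum_mul_sum_eq_dumbbellContraction (C : Matrix ι ι ℝ)
    {T : ι → ι → ι → ℝ} (hT : ∀ i j k, T i j k = T j k i) :
    ∑ i, ∑ j, C i j * ∑ r, ∑ k, ∑ l, ∑ m, C r k * C l m * T r l m * T k i j =
      dumbbellContraction C T := by
  simp only [dumbbellContraction, Finset.mul_sum, ← Fintype.sum_prod_type']
  refine Fintype.sum_equiv ⟨fun (i, j, r, k, l, m) => (l, m, i, j, r, k),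
    fun (l, m, i, j, r, k) => (i, j, r, k, l, m), fun _ => rfl, fun _ => rfl⟩ _ _
    fun (i, j, r, k, l, m) => ?_
  simp only [Equiv.coe_fn_mk, hT r l m, hT k i j]
  ring

theorem sum_mul_sum_eq_thetaContraction (C : Matrix ι ι ℝ) (T : ι → ι → ι → ℝ) :
    ∑ k, ∑ r, C k r * ∑ j, ∑ m, C j m * ∑ i, ∑ l, C i l * (T l m r * T i j k) =
      thetaContraction C T := by
  simp only [thetaContraction, Finset.mul_sum, ← Fintype.sum_prod_type']
  refine Fintype.sum_equiv ⟨fun (k, r, j, m, i, l) => (i, j, l, m, k, r),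
    fun (i, j, l, m, k, r) => (k, r, j, m, i, l), fun _ => rfl, fun _ => rfl⟩ _ _
    fun (k, r, j, m, i, l) => ?_
  simp only [Equiv.coe_fn_mk]
  ring

theorem sum_eq_dumbbellContraction_add_thetaContraction (C : Matrix ι ι ℝ)
    (T : ι → ι → ι → ℝ) :
    ∑ i, ∑ j, ∑ l, ∑ m, ∑ k, ∑ r,
        (2 * C i l * C j m + 3 * C i j * C l m) * C k r * T i j k * T l m r =
      3 * dumbbellContraction C T + 2 * thetaContraction C T := by
  simp only [dumbbellContraction, thetaContraction, Finset.mul_sum, ← Fintype.sum_prod_type',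
    ← Finset.sum_add_distrib]
  exact Finset.sum_congr rfl fun _ _ => by ring

end Contractions

section Moments

variable {n : ℕ} {A : Matrix (Fin n) (Fin n) ℝ} {f g : (Fin n → ℝ) → ℝ} {x : Fin n → ℝ}

theorem gaussianIntegral_taylorTerm_two (hA : A.PosDef) (hf : ContDiffAt ℝ 2 f x) :
    gaussianIntegral A (taylorTerm f x 2) =
      1 / 2 * (∑ i, ∑ j, A⁻¹ i j * pd n i (pd n j f) x) * gaussianIntegral A 1 := by
  have recursion := gaussianIntegral_taylorTerm_add_two hA (k := 0) hf
  simp only [gaussianIntegral_taylorTerm_zero, ← mul_assoc, ← Finset.sum_mul] at recursion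
  push_cast at recursion
  linarith

theorem gaussianIntegral_taylorTerm_four (hA : A.PosDef) (hf : ContDiffAt ℝ 4 f x) :
    gaussianIntegral A (taylorTerm f x 4) =
      1 / 8 * (∑ i, ∑ j, ∑ k, ∑ l, A⁻¹ i j * A⁻¹ k l * pd4 n f x i j k l) *
        gaussianIntegral A 1 := by
  have hpd (i j : Fin n) : ContDiffAt ℝ 2 (pd n i (pd n j f)) x :=
    contDiffAt_pd (contDiffAt_pd (k := 3) hf (by norm_num) j) (by norm_num) i
  have recursion := gaussianIntegral_taylorTerm_add_two hA (k := 2) hf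
  simp only [gaussianIntegral_taylorTerm_two hA (hpd _ _)] at recursion
  have swap_pairs : ∑ i, ∑ j, A⁻¹ i j *
      (1 / 2 * (∑ k, ∑ l, A⁻¹ k l * pd n k (pd n l (pd n i (pd n j f))) x) * gaussianIntegral A 1) =
      1 / 2 * (∑ i, ∑ j, ∑ k, ∑ l, A⁻¹ i j * A⁻¹ k l * pd4 n f x i j k l) *
        gaussianIntegral A 1 := by
    simp only [Finset.mul_sum, Finset.sum_mul, ← Fintype.sum_prod_type']
    refine Fintype.sum_equiv ⟨fun (i, j, k, l) => (k, l, i, j), fun (k, l, i, j) => (i, j, k, l),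
      fun _ => rfl, fun _ => rfl⟩ _ _ fun (i, j, k, l) => ?_
    simp only [Equiv.coe_fn_mk, pd4]
    ring
  rw [swap_pairs] at recursion
  push_cast at recursion
  linarith

theorem gaussianIntegral_taylorTerm_one_mul_taylorTerm_one (hA : A.PosDef)
    (hf : ContDiffAt ℝ 1 f x) (hg : ContDiffAt ℝ 1 g x) :
    gaussianIntegral A (taylorTerm f x 1 * taylorTerm g x 1) =
      (∑ i, ∑ j, A⁻¹ i j * (pd n j f x * pd n i g x)) * gaussianIntegral A 1 := by
  have recursion := gaussianIntegral_taylorTerm_one_mul_taylorTerm_succ hA (l := 0) hf hg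
  simpa only [gaussianIntegral_taylorTerm_zero, ← mul_assoc, ← Finset.sum_mul] using recursion

theorem gaussianIntegral_taylorTerm_one_mul_taylorTerm_three (hA : A.PosDef)
    (hf : ContDiffAt ℝ 1 f x) (hg : ContDiffAt ℝ 3 g x) :
    gaussianIntegral A (taylorTerm f x 1 * taylorTerm g x 3) =
      1 / 2 * (∑ i, ∑ j, ∑ p, ∑ q, A⁻¹ i j * A⁻¹ p q * pd3 n g x i p q * pd n j f x) *
        gaussianIntegral A 1 := by
  have hpd (i : Fin n) : ContDiffAt ℝ 2 (pd n i g) x := contDiffAt_pd hg (by norm_num) i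
  have pd3_eq (p q i : Fin n) : pd n p (pd n q (pd n i g)) x = pd3 n g x i p q :=
    (pd3_rotate hg i p q).symm
  rw [gaussianIntegral_taylorTerm_one_mul_taylorTerm_succ hA (l := 2) hf hg]
  simp only [gaussianIntegral_taylorTerm_two hA (hpd _), pd3_eq, Finset.mul_sum, Finset.sum_mul]
  refine Finset.sum_congr rfl fun i _ => Finset.sum_congr rfl fun j _ =>
    Finset.sum_congr rfl fun p _ => Finset.sum_congr rfl fun q _ => ?_
  ring

theorem gaussianIntegral_taylorTerm_two_mul_taylorTerm_two (hA : A.PosDef)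
    (hf : ContDiffAt ℝ 2 f x) (hg : ContDiffAt ℝ 2 g x) :
    gaussianIntegral A (taylorTerm f x 2 * taylorTerm g x 2) =
      (1 / 4 * ((∑ i, ∑ j, A⁻¹ i j * pd n i (pd n j f) x) *
        ∑ k, ∑ l, A⁻¹ k l * pd n k (pd n l g) x) +
      1 / 2 * ∑ i, ∑ j, A⁻¹ i j * ∑ k, ∑ l, A⁻¹ k l *
        (pd n l (pd n j f) x * pd n k (pd n i g) x)) * gaussianIntegral A 1 := by
  have recursion := gaussianIntegral_taylorTerm_add_two_mul_taylorTerm_succ hA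
    (k := 0) (l := 1) hf hg
  have pd_smooth {h : (Fin n → ℝ) → ℝ} (hh : ContDiffAt ℝ 2 h x) (i : Fin n) :
      ContDiffAt ℝ 1 (pd n i h) x := contDiffAt_pd hh (by norm_num) i
  simp only [gaussianIntegral_taylorTerm_zero_mul, gaussianIntegral_taylorTerm_two hA hg,
    gaussianIntegral_taylorTerm_one_mul_taylorTerm_one hA (pd_smooth hf _) (pd_smooth hg _),
    zero_add] at recursion
  have sum_eq (c d : ℝ) (H : Fin n → Fin n → ℝ) : ∑ i, ∑ j, A⁻¹ i j *
      (pd n i (pd n j f) x * (1 / 2 * c * d) + H i j * d) =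
      (1 / 2 * ((∑ i, ∑ j, A⁻¹ i j * pd n i (pd n j f) x) * c) +
        ∑ i, ∑ j, A⁻¹ i j * H i j) * d := by
    simp only [Finset.sum_mul, Finset.mul_sum, ← Finset.sum_add_distrib, mul_add, add_mul]
    refine Finset.sum_congr rfl fun i _ => Finset.sum_congr rfl fun j _ => ?_
    ring
  rw [sum_eq] at recursion
  push_cast at recursion
  linarith

theorem gaussianIntegral_sq_taylorTerm_three (hA : A.PosDef) (hf : ContDiffAt ℝ 3 f x) :
    gaussianIntegral A (taylorTerm f x 3 * taylorTerm f x 3) =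
      (1 / 4 * dumbbellContraction A⁻¹ (pd3 n f x) + 1 / 6 * thetaContraction A⁻¹ (pd3 n f x)) *
        gaussianIntegral A 1 := by
  have recursion := gaussianIntegral_taylorTerm_add_two_mul_taylorTerm_succ hA
    (k := 1) (l := 2) hf hf
  have pd_smooth (i : Fin n) : ContDiffAt ℝ 2 (pd n i f) x := contDiffAt_pd hf (by norm_num) i
  have pd_pd_smooth (i j : Fin n) : ContDiffAt ℝ 1 (pd n i (pd n j f)) x :=
    contDiffAt_pd (pd_smooth j) (by norm_num) i
  have pd3_eq (i j k : Fin n) : pd n i (pd n j (pd n k f)) x = pd3 n f x i j k := rfl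
  have sum_eq (u v w : Fin n → Fin n → ℝ) (d : ℝ) :
      ∑ i, ∑ j, A⁻¹ i j * (1 / 2 * u i j * d + (1 / 4 * v i j + 1 / 2 * w i j) * d) =
      (1 / 2 * (∑ i, ∑ j, A⁻¹ i j * u i j) + 1 / 4 * (∑ i, ∑ j, A⁻¹ i j * v i j) +
        1 / 2 * ∑ i, ∑ j, A⁻¹ i j * w i j) * d := by
    simp only [Finset.sum_mul, Finset.mul_sum, ← Finset.sum_add_distrib]
    refine Finset.sum_congr rfl fun i _ => Finset.sum_congr rfl fun j _ => ?_
    ring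
  simp only [gaussianIntegral_taylorTerm_one_mul_taylorTerm_three hA (pd_pd_smooth _ _) hf,
    gaussianIntegral_taylorTerm_two_mul_taylorTerm_two hA (pd_smooth _) (pd_smooth _),
    Nat.reduceAdd, pd3_eq] at recursion
  rw [sum_eq, sum_mul_sum_eq_dumbbellContraction _ (pd3_rotate hf),
    sum_mul_sum_mul_sum_eq_dumbbellContraction, sum_mul_sum_eq_thetaContraction] at recursion
  push_cast at recursion
  linarith

end Moments

section LaplaceSeriesCoefficients

variable {E : Type*} [NormedAddCommGroup E] [NormedSpace ℝ E]

theorem coeff_succ_exponentSeries (S : E → ℝ) (x : E) (k : ℕ) :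
    PowerSeries.coeff (k + 1) (exponentSeries S x) = (-1 / 2 : ℝ) • taylorTerm S x (k + 3) := by
  simp [exponentSeries]

theorem laplaceSeries_eq_sum (m : ℕ) (S φ : E → ℝ) (x : E) :
    laplaceSeries m S φ x = (∑ k ∈ Finset.range m,
      (k.factorial : ℝ)⁻¹ • exponentSeries S x ^ k) * PowerSeries.mk (taylorTerm φ x) := by
  rw [laplaceSeries, Polynomial.aeval_def, PowerSeries.eval₂_trunc_eq_sum_range]
  simp [PowerSeries.coeff_exp, Algebra.smul_def]

theorem coeff_zero_laplaceSeries_four (S φ : E → ℝ) (x : E) :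
    PowerSeries.coeff 0 (laplaceSeries 4 S φ x) = φ x • 1 := by
  ext y
  simp [laplaceSeries_eq_sum, Finset.sum_range_succ, pow_succ, PowerSeries.coeff_mul,
    coeff_exponentSeries_zero]

theorem coeff_two_laplaceSeries_four (S φ : E → ℝ) (x : E) :
    PowerSeries.coeff 2 (laplaceSeries 4 S φ x) =
      taylorTerm φ x 2 + (-1 / 2 : ℝ) • (taylorTerm φ x 1 * taylorTerm S x 3) +
        φ x • ((1 / 8 : ℝ) • (taylorTerm S x 3 * taylorTerm S x 3) +
          (-1 / 2 : ℝ) • taylorTerm S x 4) := by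
  have coeff_one := coeff_succ_exponentSeries S x 0
  have coeff_two := coeff_succ_exponentSeries S x 1
  rw [zero_add] at coeff_one
  rw [one_add_one_eq_two] at coeff_two
  ext y
  simp only [laplaceSeries_eq_sum, Finset.sum_range_succ, Finset.sum_range_zero,
    PowerSeries.coeff_mul, Finset.Nat.antidiagonal_succ, Finset.Nat.antidiagonal_zero, pow_succ]
  simp [PowerSeries.coeff_mul, Finset.Nat.antidiagonal_succ, PowerSeries.coeff_one,
    coeff_exponentSeries_zero, coeff_one, coeff_two]
  ring

end LaplaceSeriesCoefficients

section SubleadingCoefficient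

variable {n : ℕ} {S φ : (Fin n → ℝ) → ℝ} {x : Fin n → ℝ}

/-- The ratio of `F₁` to `(det G)^{-1/2}`. -/
noncomputable def subleadingCoeff (n : ℕ) (S φ : (Fin n → ℝ) → ℝ) (x : Fin n → ℝ) : ℝ :=
  (∑ i, ∑ j, (hess n S x)⁻¹ i j * pd n i (pd n j φ) x) -
    (∑ i, ∑ j, ∑ p, ∑ q,
      (hess n S x)⁻¹ i j * (hess n S x)⁻¹ p q * pd3 n S x i p q * pd n j φ x) +
    (-(1 / 4) * (∑ i, ∑ j, ∑ k, ∑ l,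
        (hess n S x)⁻¹ i j * (hess n S x)⁻¹ k l * pd4 n S x i j k l) +
      (1 / 12) * (∑ i, ∑ j, ∑ l, ∑ m, ∑ k, ∑ r,
        (2 * (hess n S x)⁻¹ i l * (hess n S x)⁻¹ j m +
          3 * (hess n S x)⁻¹ i j * (hess n S x)⁻¹ l m) *
          (hess n S x)⁻¹ k r * pd3 n S x i j k * pd3 n S x l m r)) * φ x

theorem gaussianIntegral_coeff_two_laplaceSeries {A : Matrix (Fin n) (Fin n) ℝ} (hA : A.PosDef)
    (hS : ContDiffAt ℝ 4 S x) (hφ : ContDiffAt ℝ 2 φ x) :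
    gaussianIntegral A (PowerSeries.coeff 2 (laplaceSeries 4 S φ x)) =
      (1 / 2 * (∑ i, ∑ j, A⁻¹ i j * pd n i (pd n j φ) x) -
        1 / 4 * (∑ i, ∑ j, ∑ p, ∑ q, A⁻¹ i j * A⁻¹ p q * pd3 n S x i p q * pd n j φ x) +
        (-(1 / 16) * (∑ i, ∑ j, ∑ k, ∑ l, A⁻¹ i j * A⁻¹ k l * pd4 n S x i j k l) +
          1 / 32 * dumbbellContraction A⁻¹ (pd3 n S x) +
          1 / 48 * thetaContraction A⁻¹ (pd3 n S x)) * φ x) * gaussianIntegral A 1 := by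
  have hS' : ContDiffAt ℝ 3 S x := hS.of_le (by norm_num)
  have mem (f : (Fin n → ℝ) → ℝ) (k : ℕ) := taylorTerm_mem_polyGrowth f x k
  have mul_mem (f g : (Fin n → ℝ) → ℝ) (k l : ℕ) := mul_mem (mem f k) (mem g l)
  have smul_mem {f : (Fin n → ℝ) → ℝ} (c : ℝ) (hf : f ∈ polyGrowth (Fin n → ℝ)) :=
    Subalgebra.smul_mem _ hf c
  have cubic_mem := smul_mem (-1 / 2) (mul_mem φ S 1 3)
  have sq_mem := smul_mem (1 / 8) (mul_mem S S 3 3)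
  have quartic_mem := smul_mem (-1 / 2) (mem S 4)
  rw [coeff_two_laplaceSeries_four,
    gaussianIntegral_add hA (add_mem (mem φ 2) cubic_mem)
      (smul_mem (φ x) (add_mem sq_mem quartic_mem)),
    gaussianIntegral_add hA (mem φ 2) cubic_mem, gaussianIntegral_smul, gaussianIntegral_smul,
    gaussianIntegral_add hA sq_mem quartic_mem, gaussianIntegral_smul, gaussianIntegral_smul,
    gaussianIntegral_taylorTerm_two hA hφ,
    gaussianIntegral_taylorTerm_one_mul_taylorTerm_three hA (hφ.of_le (by norm_num)) hS',
    gaussianIntegral_sq_taylorTerm_three hA hS', gaussianIntegral_taylorTerm_four hA hS]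
  ring

theorem gaussianIntegral_half_hess_coeff_two_laplaceSeries (hhess : (hess n S x).PosDef)
    (hS : ContDiffAt ℝ 4 S x) (hφ : ContDiffAt ℝ 2 φ x) :
    gaussianIntegral ((1 / 2 : ℝ) • hess n S x) (PowerSeries.coeff 2 (laplaceSeries 4 S φ x)) =
      subleadingCoeff n S φ x * gaussianIntegral ((1 / 2 : ℝ) • hess n S x) 1 := by
  have half_posDef : ((1 / 2 : ℝ) • hess n S x).PosDef := hhess.smul (by norm_num)
  have inv_half : ((1 / 2 : ℝ) • hess n S x)⁻¹ = (2 : ℝ) • (hess n S x)⁻¹ := by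
    refine Matrix.inv_eq_left_inv ?_
    rw [smul_mul_smul_comm, Matrix.nonsing_inv_mul _ hhess.det_pos.ne'.isUnit]
    norm_num
  have two_mul_mul_two_mul (a b : ℝ) : 2 * a * (2 * b) = 4 * (a * b) := by ring
  rw [gaussianIntegral_coeff_two_laplaceSeries half_posDef hS hφ, subleadingCoeff,
    sum_eq_dumbbellContraction_add_thetaContraction, inv_half, dumbbellContraction_smul,
    thetaContraction_smul]
  simp only [Matrix.smul_apply, smul_eq_mul, two_mul_mul_two_mul]
  simp only [mul_assoc, ← Finset.mul_sum]
  ring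

end SubleadingCoefficient

section TwoTerms

variable {n : ℕ} {S φ : (Fin n → ℝ) → ℝ} {x : Fin n → ℝ}

theorem taylorTerm_two_eq_dotProduct_hess (hS : ContDiffAt ℝ 2 S x) (y : Fin n → ℝ) :
    taylorTerm S x 2 y = y ⬝ᵥ ((1 / 2 : ℝ) • hess n S x).mulVec y := by
  have euler := succ_mul_taylorTerm_succ (k := 1) hS y
  simp only [taylorTerm_one, apply_eq_sum_mul_apply_single _ y, Nat.cast_one, Nat.reduceAdd]
    at euler
  have double_sum : y ⬝ᵥ (hess n S x).mulVec y =
      ∑ i, y i * ∑ j, y j * fderiv ℝ (pd n i S) x (Pi.single j 1) := by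
    simp only [dotProduct, Matrix.mulVec, hess, Matrix.of_apply, Finset.mul_sum]
    rw [Finset.sum_comm]
    refine Finset.sum_congr rfl fun i _ => Finset.sum_congr rfl fun j _ => ?_
    rw [← pd]
    ring
  rw [Matrix.smul_mulVec, dotProduct_smul, double_sum, ← euler, smul_eq_mul]
  ring

theorem gaussianIntegral_half_hess_one (hhess : (hess n S x).PosDef) :
    gaussianIntegral ((1 / 2 : ℝ) • hess n S x) 1 =
      √((4 * Real.pi) ^ n) * (√(hess n S x).det)⁻¹ := by
  rw [gaussianIntegral_one (hhess.smul (by norm_num)), Matrix.det_smul, Fintype.card_fin,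
    ← div_eq_mul_inv, ← Real.sqrt_div (by positivity), ← div_div, ← div_pow]
  ring_nf

theorem laplace_integral_two_terms_sq_scale (hS : ContDiffAt ℝ 6 S x) (hS0 : S x = 0)
    (hdS : fderiv ℝ S x = 0) (hhess : (hess n S x).PosDef) (hφ : ContDiffAt ℝ 4 φ x)
    (φ_cont : Continuous φ) (φ_supp : HasCompactSupport φ) (S_cont : ContinuousOn S (tsupport φ))
    (S_pos : ∀ z ∈ tsupport φ, z ≠ x → 0 < S z) :
    (fun t => (t ^ n)⁻¹ * (∫ z, Real.exp (-S z / (2 * t ^ 2)) * φ z) -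
        (φ x + t ^ 2 * subleadingCoeff n S φ x) *
          gaussianIntegral ((1 / 2 : ℝ) • hess n S x) 1)
      =O[𝓝[>] 0] fun t => t ^ 4 := by
  have quadratic_part := taylorTerm_two_eq_dotProduct_hess (hS.of_le (m := 2) (by norm_num))
  have half_posDef : ((1 / 2 : ℝ) • hess n S x).PosDef := hhess.smul (by norm_num)
  have expansion := laplace_integral_expansion (μ := volume) (m := 4) (by norm_num) hS hS0 hdS
    (fun y hy => by simpa [quadratic_part] using half_posDef.dotProduct_mulVec_pos hy) hφ φ_cont
    φ_supp S_cont S_pos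
  have coeff_integral (k : ℕ) : ∫ y, PowerSeries.coeff k (laplaceSeries 4 S φ x) y *
      Real.exp (-taylorTerm S x 2 y / 2) = gaussianIntegral ((1 / 2 : ℝ) • hess n S x)
        (PowerSeries.coeff k (laplaceSeries 4 S φ x)) := by
    simp only [quadratic_part, gaussianIntegral, gaussianWeight]
  have odd_integral (k : ℕ) (hk : Odd k) : gaussianIntegral ((1 / 2 : ℝ) • hess n S x)
      (PowerSeries.coeff k (laplaceSeries 4 S φ x)) = 0 :=
    gaussianIntegral_eq_zero_of_odd _ fun y => by
      rw [(laplaceSeries_mem_paritySeries 4 S φ x k).2, hk.neg_one_pow, neg_one_mul]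
  refine expansion.congr_left fun t => ?_
  simp only [coeff_integral, Finset.sum_range_succ, Finset.sum_range_zero,
    odd_integral 1 (by decide), odd_integral 3 (by decide), coeff_zero_laplaceSeries_four,
    gaussianIntegral_smul, gaussianIntegral_half_hess_coeff_two_laplaceSeries hhess
      (hS.of_le (by norm_num)) (hφ.of_le (by norm_num)), Module.finrank_fin_fun]
  ring

theorem mul_rpow_neg_half {a b : ℝ} (ha : 0 ≤ a) (hb : 0 ≤ b) (n : ℕ) :
    (a * b) ^ (-(n : ℝ) / 2) = (√(a ^ n))⁻¹ * (√b ^ n)⁻¹ := by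
  rw [Real.mul_rpow ha hb, neg_div, Real.rpow_neg ha, Real.rpow_neg hb,
    Real.rpow_div_two_eq_sqrt _ hb, Real.rpow_natCast, Real.sqrt_eq_rpow (a ^ n),
    ← Real.rpow_natCast_mul ha, mul_one_div]

end TwoTerms

theorem laplace_integral_two_terms_general {n : ℕ} {U : Set (Fin n → ℝ)} (hU : IsOpen U)
    {x' : Fin n → ℝ} (hx' : x' ∈ U) {S : (Fin n → ℝ) → ℝ} (S_cont : ContinuousOn S U)
    (hS : ContDiffAt ℝ 6 S x') (hS0 : S x' = 0) (hSpos : ∀ x ∈ U, x ≠ x' → 0 < S x)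
    (hhess : (hess n S x').PosDef) {φ : (Fin n → ℝ) → ℝ} (φ_cont : Continuous φ)
    (hφ : ContDiffAt ℝ 4 φ x') (hφc : HasCompactSupport φ) (hφsupp : tsupport φ ⊆ U) :
    (fun ε : ℝ =>
        (4 * Real.pi * ε) ^ (-(n : ℝ) / 2) * (∫ x in U, Real.exp (-S x / (2 * ε)) * φ x) -
          ((√(hess n S x').det)⁻¹ * φ x' +
            ε * ((√(hess n S x').det)⁻¹ * subleadingCoeff n S φ x')))
      =O[𝓝[>] (0 : ℝ)] fun ε => ε ^ 2 := by
  have min_at : IsLocalMin S x' := by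
    filter_upwards [hU.mem_nhds hx'] with x hx
    rcases eq_or_ne x x' with rfl | hne
    exacts [le_rfl, hS0.trans_le (hSpos x hx hne).le]
  have integral_eq (ε : ℝ) : ∫ x in U, Real.exp (-S x / (2 * ε)) * φ x =
      ∫ x, Real.exp (-S x / (2 * ε)) * φ x :=
    setIntegral_eq_integral_of_forall_compl_eq_zero fun x hx => by
      rw [image_eq_zero_of_notMem_tsupport fun h => hx (hφsupp h), mul_zero]
  have sqrt_tendsto : Tendsto Real.sqrt (𝓝[>] 0) (𝓝[>] 0) :=
    tendsto_nhdsWithin_iff.2 ⟨(Real.continuous_sqrt.tendsto' 0 0 Real.sqrt_zero).mono_left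
      nhdsWithin_le_nhds, eventually_mem_nhdsWithin.mono fun _ => Real.sqrt_pos.2⟩
  have expansion := ((laplace_integral_two_terms_sq_scale hS hS0 min_at.fderiv_eq_zero hhess hφ
    φ_cont hφc (S_cont.mono hφsupp) fun z hz => hSpos z (hφsupp hz)).comp_tendsto
      sqrt_tendsto).const_mul_left (√((4 * Real.pi) ^ n))⁻¹
  refine expansion.congr' ?_ ?_ <;> filter_upwards [self_mem_nhdsWithin] with ε ε_pos
  · simp only [Function.comp_apply, Real.sq_sqrt (le_of_lt ε_pos), integral_eq,
      mul_rpow_neg_half (by positivity : (0 : ℝ) ≤ 4 * Real.pi) (le_of_lt ε_pos),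
      gaussianIntegral_half_hess_one hhess]
    field_simp
  · rw [Function.comp_apply, pow_mul √ε 2 2, Real.sq_sqrt (le_of_lt ε_pos)]

/-- The first two terms of the asymptotic expansion of the Laplace-type integral:
`F(ε) = (det G)^{-1/2} φ(x') + ε F₁ + O(ε²)` as `ε → 0⁺`, with the explicit subleading
coefficient `F₁` built from `G⁻¹`, the third and fourth derivatives of the phase at `x'`,
and the derivatives of `φ` at `x'`. -/
theorem laplace_integral_two_terms (n : ℕ) (hn : 1 ≤ n)
    (U : Set (Fin n → ℝ)) (hU : IsOpen U) (x' : Fin n → ℝ) (hx' : x' ∈ U)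
    (S : (Fin n → ℝ) → ℝ) (hS : ContDiffOn ℝ (⊤ : ℕ∞) S U)
    (hS0 : S x' = 0) (hgrad : fderiv ℝ S x' = 0)
    (hSpos : ∀ x ∈ U, x ≠ x' → 0 < S x)
    (hSnonneg : ∀ x ∈ U, 0 ≤ S x)
    (hhess : (hess n S x').PosDef)
    (φ : (Fin n → ℝ) → ℝ) (hφ : ContDiff ℝ (⊤ : ℕ∞) φ)
    (hφc : HasCompactSupport φ) (hφsupp : tsupport φ ⊆ U) :
    (fun ε : ℝ =>
        (4 * Real.pi * ε) ^ (-(n : ℝ) / 2) *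
            (∫ x in U, Real.exp (-S x / (2 * ε)) * φ x) -
          ((Real.sqrt (hess n S x').det)⁻¹ * φ x' +
            ε * ((Real.sqrt (hess n S x').det)⁻¹ *
              ((∑ i, ∑ j, (hess n S x')⁻¹ i j * pd n i (pd n j φ) x') -
               (∑ i, ∑ j, ∑ p, ∑ q,
                  (hess n S x')⁻¹ i j * (hess n S x')⁻¹ p q *
                    pd3 n S x' i p q * pd n j φ x') +
               (-(1 / 4) * (∑ i, ∑ j, ∑ k, ∑ l,
                    (hess n S x')⁻¹ i j * (hess n S x')⁻¹ k l * pd4 n S x' i j k l) +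
                (1 / 12) * (∑ i, ∑ j, ∑ l, ∑ m, ∑ k, ∑ r,
                    (2 * (hess n S x')⁻¹ i l * (hess n S x')⁻¹ j m +
                      3 * (hess n S x')⁻¹ i j * (hess n S x')⁻¹ l m) *
                      (hess n S x')⁻¹ k r * pd3 n S x' i j k * pd3 n S x' l m r)) *
                  φ x'))))
      =O[𝓝[>] (0 : ℝ)] fun ε => ε ^ 2 :=
  laplace_integral_two_terms_general hU hx' hS.continuousOn
    ((contDiffOn_infty.1 hS 6).contDiffAt (hU.mem_nhds hx')) hS0 hSpos hhess hφ.continuous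
    (contDiff_infty.1 hφ 4).contDiffAt hφc hφsupp
end

section
/- Let U ⊆ ℝⁿ be open, let g^{ij} : U → ℝ be smooth functions such that (g^{ij}(x)) is a symmetric matrix for each x, and let σ : U × U → ℝ be a smooth function satisfying the Hamilton–Jacobi equation σ(x,x') = (1/2) Σ_{i,j} g^{ij}(x) σ_{,i}(x,x') σ_{,j}(x,x') for all (x,x') ∈ U × U. Let (x,x') ∈ U × U be a point at which the matrix of mixed second derivatives (σ_{,ij'}(x,x')) is invertible, with inverse matrix (γ^{j'i}). Then σ satisfies the metric-free equation σ(x,x') = (1/2) Σ_{i,j} γ^{i'j} σ_{,i'}(x,x') σ_{,j}(x,x'). -/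
open scoped BigOperators
open Set

/-- `∂/∂x'^i` in the second argument of a two-point function. -/
noncomputable def d2 (n : ℕ) (i : Fin n) (f : (Fin n → ℝ) → (Fin n → ℝ) → ℝ) :
    (Fin n → ℝ) → (Fin n → ℝ) → ℝ :=
  fun x x' => fderiv ℝ (fun y => f x y) x' (Pi.single i 1)

/-- The matrix of mixed second derivatives `σ_{,ij'} = ∂²σ/∂x^i∂x'^j` at `(x,x')`. -/
noncomputable def mixedHess (n : ℕ) (σ : (Fin n → ℝ) → (Fin n → ℝ) → ℝ)
    (x x' : Fin n → ℝ) : Matrix (Fin n) (Fin n) ℝ :=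
  Matrix.of fun i j => d1 n i (d2 n j σ) x x'

/-!
Fix `x` and let `p(x')` be the covector `(σ_{,i}(x, x'))`. By symmetry of second derivatives, the
Jacobian of `p` in `x'` is the matrix `M = (σ_{,ij'})`. The Hamilton–Jacobi equation says
`σ(x, ·) = H ∘ p` for a function `H` homogeneous of degree `2`, so the chain rule gives
`∂'σ · v = dH_p (M v)` for every `v`. For `v = M⁻¹ p` the right-hand side is `dH_p (p)`, which is
`2 H(p) = 2 σ` by Euler's identity.
-/

open Filter Topology ContinuousLinearMap Matrix

section Homogeneous

variable {𝕜 E F G : Type*} [NontriviallyNormedField 𝕜]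
  [NormedAddCommGroup E] [NormedSpace 𝕜 E] [NormedAddCommGroup F] [NormedSpace 𝕜 F]
  [NormedAddCommGroup G] [NormedSpace 𝕜 G]

theorem fderiv_apply_self_of_homogeneous {H : E → F} {p : E} {k : ℕ}
    (hH : DifferentiableAt 𝕜 H p) (hom : ∀ᶠ t in 𝓝 (1 : 𝕜), H (t • p) = t ^ k • H p) :
    fderiv 𝕜 H p p = (k : 𝕜) • H p := by
  have along_ray : HasDerivAt (fun t : 𝕜 => H (t • p)) (fderiv 𝕜 H p p) 1 := by
    have hsmul : HasDerivAt (fun t : 𝕜 => t • p) p 1 := by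
      simpa using (hasDerivAt_id (1 : 𝕜)).smul_const p
    exact HasFDerivAt.comp_hasDerivAt 1 (by simpa using hH.hasFDerivAt) hsmul
  have power : HasDerivAt (fun t : 𝕜 => t ^ k • H p) ((k : 𝕜) • H p) 1 := by
    simpa using (hasDerivAt_pow k (1 : 𝕜)).smul_const (H p)
  exact along_ray.unique (power.congr_of_eventuallyEq hom)

theorem fderiv_apply_of_eventuallyEq_homogeneous_comp {f : E → G} {H : F → G} {p : E → F}
    {p' : E →L[𝕜] F} {y v : E} {k : ℕ} (hf : f =ᶠ[𝓝 y] H ∘ p)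
    (hH : DifferentiableAt 𝕜 H (p y))
    (hom : ∀ᶠ t in 𝓝 (1 : 𝕜), H (t • p y) = t ^ k • H (p y))
    (hp : HasFDerivAt p p' y) (hv : p' v = p y) :
    fderiv 𝕜 f y v = (k : 𝕜) • f y := by
  calc fderiv 𝕜 f y v = fderiv 𝕜 H (p y) (p' v) := by
        rw [hf.fderiv_eq, (hH.hasFDerivAt.comp y hp).fderiv, ContinuousLinearMap.comp_apply]
    _ = (k : 𝕜) • f y := by
        rw [hv, fderiv_apply_self_of_homogeneous hH hom, hf.eq_of_nhds, Function.comp_apply]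

end Homogeneous

section PartialDerivatives

variable {𝕜 E F G : Type*} [NontriviallyNormedField 𝕜]
  [NormedAddCommGroup E] [NormedSpace 𝕜 E] [NormedAddCommGroup F] [NormedSpace 𝕜 F]
  [NormedAddCommGroup G] [NormedSpace 𝕜 G]

theorem eventually_differentiableAt_of_contDiffAt_one {f : E → F} {x : E}
    (hf : ContDiffAt 𝕜 1 f x) : ∀ᶠ z in 𝓝 x, DifferentiableAt 𝕜 f z :=
  (hf.eventually (by simp)).mono fun _ hz => hz.differentiableAt one_ne_zero

theorem hasFDerivAt_fderiv_apply {f : E → F} {x : E} (hf : ContDiffAt 𝕜 2 f x) (v : E) :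
    HasFDerivAt (fun z => fderiv 𝕜 f z v) ((fderiv 𝕜 (fderiv 𝕜 f) x).flip v) x := by
  have hsnd : DifferentiableAt 𝕜 (fderiv 𝕜 f) x :=
    (hf.fderiv_right (m := 1) one_add_one_eq_two.le).differentiableAt one_ne_zero
  simpa using hsnd.hasFDerivAt.clm_apply (hasFDerivAt_const v x)

variable {f : E × F → G} {x : E} {y : F}

theorem fderiv_comp_prodMk_left_apply (hf : DifferentiableAt 𝕜 f (x, y)) (v : E) :
    fderiv 𝕜 (fun x => f (x, y)) x v = fderiv 𝕜 f (x, y) (v, 0) := by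
  have h : HasFDerivAt (fun x => f (x, y)) (fderiv 𝕜 f (x, y) ∘L inl 𝕜 E F) x :=
    hf.hasFDerivAt.comp x (hasFDerivAt_prodMk_left x y)
  simp [h.fderiv]

theorem fderiv_comp_prodMk_right_apply (hf : DifferentiableAt 𝕜 f (x, y)) (w : F) :
    fderiv 𝕜 (fun y => f (x, y)) y w = fderiv 𝕜 f (x, y) (0, w) := by
  have h : HasFDerivAt (fun y => f (x, y)) (fderiv 𝕜 f (x, y) ∘L inr 𝕜 E F) y :=
    hf.hasFDerivAt.comp y (hasFDerivAt_prodMk_right x y)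
  simp [h.fderiv]

theorem hasFDerivAt_fderiv_comp_prodMk_left_apply (hf : ContDiffAt 𝕜 2 f (x, y)) (v : E) :
    HasFDerivAt (fun y => fderiv 𝕜 (fun x => f (x, y)) x v)
      ((fderiv 𝕜 (fderiv 𝕜 f) (x, y)).flip (v, 0) ∘L inr 𝕜 E F) y := by
  have hmk := hasFDerivAt_prodMk_right (𝕜 := 𝕜) x y
  have hf_one : ContDiffAt 𝕜 1 f (x, y) := hf.of_le one_le_two
  refine ((hasFDerivAt_fderiv_apply hf (v, 0)).comp y hmk).congr_of_eventuallyEq ?_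
  exact (hmk.continuousAt.eventually (eventually_differentiableAt_of_contDiffAt_one hf_one)).mono
    fun _ h => fderiv_comp_prodMk_left_apply h v

theorem hasFDerivAt_fderiv_comp_prodMk_right_apply (hf : ContDiffAt 𝕜 2 f (x, y)) (w : F) :
    HasFDerivAt (fun x => fderiv 𝕜 (fun y => f (x, y)) y w)
      ((fderiv 𝕜 (fderiv 𝕜 f) (x, y)).flip (0, w) ∘L inl 𝕜 E F) x := by
  have hmk := hasFDerivAt_prodMk_left (𝕜 := 𝕜) x y
  have hf_one : ContDiffAt 𝕜 1 f (x, y) := hf.of_le one_le_two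
  refine ((hasFDerivAt_fderiv_apply hf (0, w)).comp x hmk).congr_of_eventuallyEq ?_
  exact (hmk.continuousAt.eventually (eventually_differentiableAt_of_contDiffAt_one hf_one)).mono
    fun _ h => fderiv_comp_prodMk_right_apply h w

theorem fderiv_fderiv_comp_prodMk_comm [IsRCLikeNormedField 𝕜]
    (hf : ContDiffAt 𝕜 2 f (x, y)) (v : E) (w : F) :
    fderiv 𝕜 (fun y => fderiv 𝕜 (fun x => f (x, y)) x v) y w =
      fderiv 𝕜 (fun x => fderiv 𝕜 (fun y => f (x, y)) y w) x v := by
  rw [(hasFDerivAt_fderiv_comp_prodMk_left_apply hf v).fderiv,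
    (hasFDerivAt_fderiv_comp_prodMk_right_apply hf w).fderiv]
  simpa using (hf.isSymmSndFDerivAt (by simp)).eq (0, w) (v, 0)

end PartialDerivatives

theorem linearMap_apply_eq_dotProduct {ι R : Type*} [Fintype ι] [DecidableEq ι] [CommSemiring R]
    (L : (ι → R) →ₗ[R] R) (v : ι → R) : L v = (fun i => L (Pi.single i 1)) ⬝ᵥ v :=
  (LinearMap.congr_fun ((dotProductEquiv R ι).apply_symm_apply L) v).symm

theorem sum_sum_mul_smul {ι R : Type*} [Fintype ι] [CommSemiring R] (a : ι → ι → R) (t : R)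
    (p : ι → R) :
    ∑ i, ∑ j, a i j * (t • p) i * (t • p) j = t ^ 2 * ∑ i, ∑ j, a i j * p i * p j := by
  simp only [Pi.smul_apply, smul_eq_mul, Finset.mul_sum]
  exact Finset.sum_congr rfl fun i _ => Finset.sum_congr rfl fun j _ => by ring

section Coordinates

variable {n : ℕ} {σ : (Fin n → ℝ) → (Fin n → ℝ) → ℝ} {x x' : Fin n → ℝ}

theorem hasFDerivAt_d1
    (hσ : ContDiffAt ℝ 2 (fun p : (Fin n → ℝ) × (Fin n → ℝ) => σ p.1 p.2) (x, x')) :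
    HasFDerivAt (fun y i => d1 n i σ x y)
      (LinearMap.toContinuousLinearMap (mixedHess n σ x x').mulVecLin) x' := by
  refine hasFDerivAt_pi'.2 fun i => ?_
  have hdiff : DifferentiableAt ℝ (d1 n i σ x) x' :=
    (hasFDerivAt_fderiv_comp_prodMk_left_apply hσ (Pi.single i 1)).differentiableAt
  have hcomm (j : Fin n) :
      fderiv ℝ (d1 n i σ x) x' (Pi.single j 1) = mixedHess n σ x x' i j :=
    fderiv_fderiv_comp_prodMk_comm hσ (Pi.single i 1) (Pi.single j 1)
  refine hdiff.hasFDerivAt.congr_fderiv (ContinuousLinearMap.ext fun v => ?_)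
  calc fderiv ℝ (d1 n i σ x) x' v
      = (fun j => fderiv ℝ (d1 n i σ x) x' (Pi.single j 1)) ⬝ᵥ v :=
        linearMap_apply_eq_dotProduct (fderiv ℝ (d1 n i σ x) x').toLinearMap v
    _ = (mixedHess n σ x x' *ᵥ v) i := by simp only [hcomm, mulVec]

end Coordinates

theorem ruseSynge_metric_free_general {n k : ℕ} {σ : (Fin n → ℝ) → (Fin n → ℝ) → ℝ}
    {x x' : Fin n → ℝ} {H : (Fin n → ℝ) → ℝ}
    (hσ : ContDiffAt ℝ 2 (fun p : (Fin n → ℝ) × (Fin n → ℝ) => σ p.1 p.2) (x, x'))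
    (hH : DifferentiableAt ℝ H fun i => d1 n i σ x x')
    (hom : ∀ t > 0, ∀ p, H (t • p) = t ^ k * H p)
    (hHJ : ∀ᶠ y in 𝓝 x', σ x y = H fun i => d1 n i σ x y)
    (hinv : IsUnit (mixedHess n σ x x').det) :
    k * σ x x' = ∑ i, ∑ j, (mixedHess n σ x x')⁻¹ i j * d2 n i σ x x' * d1 n j σ x x' := by
  set M := mixedHess n σ x x'
  set p : Fin n → ℝ := fun i => d1 n i σ x x'
  have hMv : M *ᵥ (M⁻¹ *ᵥ p) = p := by
    rw [mulVec_mulVec, mul_nonsing_inv M hinv, one_mulVec]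
  calc k * σ x x' = fderiv ℝ (σ x) x' (M⁻¹ *ᵥ p) :=
        (fderiv_apply_of_eventuallyEq_homogeneous_comp hHJ hH
          ((eventually_gt_nhds one_pos).mono fun t ht => hom t ht p)
          (hasFDerivAt_d1 hσ) hMv).symm
    _ = (fun i => d2 n i σ x x') ⬝ᵥ M⁻¹ *ᵥ p :=
        linearMap_apply_eq_dotProduct (fderiv ℝ (σ x) x').toLinearMap _
    _ = ∑ i, ∑ j, M⁻¹ i j * d2 n i σ x x' * d1 n j σ x x' := by
        simp only [dotProduct, mulVec, Finset.mul_sum, p, mul_left_comm, mul_assoc]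

/-- A solution of the Hamilton–Jacobi equation `σ = ½ g^{ij} σ_{,i} σ_{,j}` satisfies the
metric-free equation `σ = ½ γ^{i'j} σ_{,i'} σ_{,j}`, where `γ` is the inverse of the matrix
of mixed second derivatives `σ_{,ij'}`. -/
theorem ruseSynge_metric_free (n : ℕ) (hn : 1 ≤ n)
    (U : Set (Fin n → ℝ)) (hU : IsOpen U)
    (g : Fin n → Fin n → (Fin n → ℝ) → ℝ)
    (hgsmooth : ∀ i j, ContDiffOn ℝ (⊤ : ℕ∞) (g i j) U)
    (hgsymm : ∀ i j, ∀ x ∈ U, g i j x = g j i x)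
    (σ : (Fin n → ℝ) → (Fin n → ℝ) → ℝ)
    (hσ : ContDiffOn ℝ (⊤ : ℕ∞) (fun p : (Fin n → ℝ) × (Fin n → ℝ) => σ p.1 p.2) (U ×ˢ U))
    (hHJ : ∀ x ∈ U, ∀ x' ∈ U,
      σ x x' = (1 / 2) * ∑ i, ∑ j, g i j x * d1 n i σ x x' * d1 n j σ x x')
    (x x' : Fin n → ℝ) (hx : x ∈ U) (hx' : x' ∈ U)
    (hinv : IsUnit (mixedHess n σ x x').det) :
    σ x x' = (1 / 2) * ∑ i, ∑ j,
      (mixedHess n σ x x')⁻¹ i j * d2 n i σ x x' * d1 n j σ x x' := by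
  have hσ_two : ContDiffAt ℝ 2 (fun p : (Fin n → ℝ) × (Fin n → ℝ) => σ p.1 p.2) (x, x') :=
    (hσ.contDiffAt ((hU.prod hU).mem_nhds ⟨hx, hx'⟩)).of_le (by norm_cast)
  linear_combination (1 / 2) * ruseSynge_metric_free_general (k := 2)
    (H := fun p => (1 / 2) * ∑ i, ∑ j, g i j x * p i * p j) hσ_two (by fun_prop)
    (fun t _ p => by rw [sum_sum_mul_smul, mul_left_comm])
    ((hU.eventually_mem hx').mono (hHJ x hx)) hinv
end

section
/- Let U ⊆ ℝⁿ be open, let g^{ij} : U → ℝ be smooth functions such that (g^{ij}(x)) is a symmetric matrix for each x, and let σ : U × U → ℝ be a smooth function satisfying the Hamilton–Jacobi equation σ(x,x') = (1/2) Σ_{i,j} g^{ij}(x) σ_{,i}(x,x') σ_{,j}(x,x') for all (x,x') ∈ U × U. Let (x,x') ∈ U × U be a point at which the matrix (σ_{,ij'}(x,x')) is invertible, with inverse (γ^{j'i}). Define V_{k'l'} := Σ_{i,j} σ_{,j'} γ^{ij'} σ_{,k'l'i} and Y_{k'l'} := σ_{,k'l'} − V_{k'l'}, all evaluated at (x,x').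 Then the matrix (g^{ij}(x)) is uniquely determined by the partial derivatives of σ through the identity g^{ij}(x) = Σ_{k,l} γ^{ik'} γ^{jl'} Y_{k'l'}. -/
/-!
Fix `x` and differentiate the Hamilton–Jacobi equation in `x'` only, so that the matrix `g = g(x)`
is constant. Write `∇` for the gradient in the first argument and `M` for the mixed Hessian, whose
`l`-th column is `∇σ_{,l'}`. Since `g` is symmetric, one derivative gives
`σ_{,l'} = ∇σ_{,l'} ⬝ᵥ g *ᵥ ∇σ`, that is, `g *ᵥ ∇σ` is the gradient of `σ` in the second argument
multiplied by `M⁻¹`. A second derivative gives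
`σ_{,k'l'} = ∇σ_{,k'l'} ⬝ᵥ g *ᵥ ∇σ + ∇σ_{,l'} ⬝ᵥ g *ᵥ ∇σ_{,k'}`, whose first term is therefore
`V_{k'l'}`. Hence `Y = Mᵀ * g * M`, and conjugating by `M⁻¹` recovers `g`.
-/

open scoped BigOperators
open Set

section MatrixForms

open Matrix hiding sum_apply add_apply smul_apply

variable {R 𝕜 ι κ E : Type*} [Fintype ι] [Fintype κ]

theorem dotProduct_mulVec_eq_sum_sum [CommSemiring R] (A : Matrix ι κ R) (u : ι → R)
    (v : κ → R) : u ⬝ᵥ A *ᵥ v = ∑ i, ∑ j, A i j * u i * v j := by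
  simp only [dotProduct, mulVec, Finset.mul_sum]
  exact Finset.sum_congr rfl fun i _ => Finset.sum_congr rfl fun j _ => by ring

theorem dotProduct_mulVec_comm_of_isSymm [CommSemiring R] {A : Matrix ι ι R} (hA : A.IsSymm)
    (u v : ι → R) : u ⬝ᵥ A *ᵥ v = v ⬝ᵥ A *ᵥ u := by
  rw [← dotProduct_transpose_mulVec, hA.eq]

theorem eq_inv_transpose_mul_mul_inv [DecidableEq ι] [CommRing R] {A B M : Matrix ι ι R}
    (hM : IsUnit M.det) (h : B = Mᵀ * A * M) : A = M⁻¹ᵀ * B * M⁻¹ := by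
  have hMt : M⁻¹ᵀ * Mᵀ = 1 := by rw [← transpose_mul, mul_nonsing_inv _ hM, transpose_one]
  calc A = (M⁻¹ᵀ * Mᵀ) * A * (M * M⁻¹) := by rw [hMt, mul_nonsing_inv _ hM, one_mul, mul_one]
    _ = M⁻¹ᵀ * B * M⁻¹ := by simp only [h, Matrix.mul_assoc]

variable [NontriviallyNormedField 𝕜] [NormedAddCommGroup E] [NormedSpace 𝕜 E]

theorem differentiableAt_dotProduct_mulVec (A : Matrix ι κ 𝕜) {u : E → ι → 𝕜} {v : E → κ → 𝕜}
    {y : E} (hu : DifferentiableAt 𝕜 u y) (hv : DifferentiableAt 𝕜 v y) :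
    DifferentiableAt 𝕜 (fun z => u z ⬝ᵥ A *ᵥ v z) y := by
  simp only [dotProduct_mulVec_eq_sum_sum]
  fun_prop

theorem fderiv_dotProduct_mulVec_apply (A : Matrix ι κ 𝕜) {u : E → ι → 𝕜} {v : E → κ → 𝕜}
    {y : E} (hu : DifferentiableAt 𝕜 u y) (hv : DifferentiableAt 𝕜 v y) (w : E) :
    fderiv 𝕜 (fun z => u z ⬝ᵥ A *ᵥ v z) y w =
      fderiv 𝕜 u y w ⬝ᵥ A *ᵥ v y + u y ⬝ᵥ A *ᵥ fderiv 𝕜 v y w := by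
  have hu' := hasFDerivAt_pi'.1 hu.hasFDerivAt
  have hv' := hasFDerivAt_pi'.1 hv.hasFDerivAt
  have hsum := HasFDerivAt.fun_sum (u := Finset.univ) fun i _ =>
    HasFDerivAt.fun_sum (u := Finset.univ) fun j _ => ((hu' i).const_mul (A i j)).mul (hv' j)
  simp only [dotProduct_mulVec_eq_sum_sum, ← Finset.sum_add_distrib]
  refine (DFunLike.congr_fun hsum.fderiv w).trans ?_
  simp only [sum_apply, add_apply, smul_apply, smul_eq_mul, ContinuousLinearMap.comp_apply,
    ContinuousLinearMap.proj_apply]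
  exact Finset.sum_congr rfl fun i _ => Finset.sum_congr rfl fun j _ => by ring

end MatrixForms

section TwoPoint

open Function
open scoped Topology

variable {n : ℕ} {f : (Fin n → ℝ) → (Fin n → ℝ) → ℝ} {x x' : Fin n → ℝ}

theorem d1_eq_fderiv_uncurry (hf : DifferentiableAt ℝ (uncurry f) (x, x')) (i : Fin n) :
    d1 n i f x x' = fderiv ℝ (uncurry f) (x, x') (Pi.single i 1, 0) :=
  DFunLike.congr_fun
    (hf.hasFDerivAt.comp (f := (·, x')) x (hasFDerivAt_prodMk_left x x')).fderiv (Pi.single i 1)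

theorem d2_eq_fderiv_uncurry (hf : DifferentiableAt ℝ (uncurry f) (x, x')) (j : Fin n) :
    d2 n j f x x' = fderiv ℝ (uncurry f) (x, x') (0, Pi.single j 1) :=
  DFunLike.congr_fun
    (hf.hasFDerivAt.comp x' (hasFDerivAt_prodMk_right x x')).fderiv (Pi.single j 1)

theorem uncurry_d1_eventuallyEq (hf : ContDiffAt ℝ 1 (uncurry f) (x, x')) (i : Fin n) :
    uncurry (d1 n i f) =ᶠ[𝓝 (x, x')] fun p => fderiv ℝ (uncurry f) p (Pi.single i 1, 0) :=
  (hf.eventually (by simp)).mono fun _ hp => d1_eq_fderiv_uncurry (hp.differentiableAt (by simp)) i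

theorem uncurry_d2_eventuallyEq (hf : ContDiffAt ℝ 1 (uncurry f) (x, x')) (j : Fin n) :
    uncurry (d2 n j f) =ᶠ[𝓝 (x, x')] fun p => fderiv ℝ (uncurry f) p (0, Pi.single j 1) :=
  (hf.eventually (by simp)).mono fun _ hp => d2_eq_fderiv_uncurry (hp.differentiableAt (by simp)) j

theorem contDiffAt_uncurry_d1 {m k : WithTop ℕ∞} (hf : ContDiffAt ℝ k (uncurry f) (x, x'))
    (hmk : m + 1 ≤ k) (i : Fin n) : ContDiffAt ℝ m (uncurry (d1 n i f)) (x, x') :=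
  ((hf.fderiv_right hmk).clm_apply contDiffAt_const).congr_of_eventuallyEq
    (uncurry_d1_eventuallyEq (hf.of_le (le_add_self.trans hmk)) i)

theorem contDiffAt_uncurry_d2 {m k : WithTop ℕ∞} (hf : ContDiffAt ℝ k (uncurry f) (x, x'))
    (hmk : m + 1 ≤ k) (j : Fin n) : ContDiffAt ℝ m (uncurry (d2 n j f)) (x, x') :=
  ((hf.fderiv_right hmk).clm_apply contDiffAt_const).congr_of_eventuallyEq
    (uncurry_d2_eventuallyEq (hf.of_le (le_add_self.trans hmk)) j)

theorem d2_d1_comm (hf : ContDiffAt ℝ 2 (uncurry f) (x, x')) (i j : Fin n) :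
    d2 n j (d1 n i f) x x' = d1 n i (d2 n j f) x x' := by
  have hf₁ : ContDiffAt ℝ 1 (uncurry f) (x, x') := hf.of_le one_le_two
  have hmk : (1 : WithTop ℕ∞) + 1 ≤ 2 := by norm_num
  have hdiff : DifferentiableAt ℝ (fderiv ℝ (uncurry f)) (x, x') :=
    (hf.fderiv_right hmk).differentiableAt one_ne_zero
  have hsnd (v w) : fderiv ℝ (fun p => fderiv ℝ (uncurry f) p v) (x, x') w =
      fderiv ℝ (fderiv ℝ (uncurry f)) (x, x') w v := by
    simp [fderiv_clm_apply hdiff (differentiableAt_const v)]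
  have hsymm : IsSymmSndFDerivAt ℝ (uncurry f) (x, x') := hf.isSymmSndFDerivAt (by simp)
  calc d2 n j (d1 n i f) x x'
      = fderiv ℝ (fderiv ℝ (uncurry f)) (x, x') (0, Pi.single j 1) (Pi.single i 1, 0) := by
        rw [d2_eq_fderiv_uncurry
          ((contDiffAt_uncurry_d1 hf hmk i).differentiableAt one_ne_zero),
          (uncurry_d1_eventuallyEq hf₁ i).fderiv_eq, hsnd]
    _ = fderiv ℝ (fderiv ℝ (uncurry f)) (x, x') (Pi.single i 1, 0) (0, Pi.single j 1) :=
        hsymm _ _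
    _ = d1 n i (d2 n j f) x x' := by
        rw [d1_eq_fderiv_uncurry
          ((contDiffAt_uncurry_d2 hf hmk j).differentiableAt one_ne_zero),
          (uncurry_d2_eventuallyEq hf₁ j).fderiv_eq, hsnd]

/-- The gradient `(f_{,i})_i` of a two-point function in its first argument. As
`gradFst n (d2 n l σ) x x'` is by definition the `l`-th column of `mixedHess n σ x x'`, all mixed
derivatives of `σ` are expressed through it. -/
noncomputable def gradFst (n : ℕ) (f : (Fin n → ℝ) → (Fin n → ℝ) → ℝ) (x x' : Fin n → ℝ) :
    Fin n → ℝ :=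
  fun i => d1 n i f x x'

theorem differentiableAt_gradFst (hf : ContDiffAt ℝ 2 (uncurry f) (x, x')) :
    DifferentiableAt ℝ (gradFst n f x) x' :=
  differentiableAt_pi.2 fun i =>
    ((contDiffAt_uncurry_d1 (m := 1) hf (by norm_num) i).differentiableAt one_ne_zero).comp x'
      (hasFDerivAt_prodMk_right x x').differentiableAt

theorem fderiv_gradFst_single (hf : ContDiffAt ℝ 2 (uncurry f) (x, x')) (l : Fin n) :
    fderiv ℝ (gradFst n f x) x' (Pi.single l 1) = gradFst n (d2 n l f) x x' := by
  ext i
  exact (DFunLike.congr_fun (fderiv_apply (differentiableAt_gradFst hf) i) _).symm.trans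
    (d2_d1_comm hf i l)

end TwoPoint

section HamiltonJacobi

open Function
open Matrix hiding smul_apply
open scoped Topology

variable {n : ℕ} {g : Matrix (Fin n) (Fin n) ℝ} {σ : (Fin n → ℝ) → (Fin n → ℝ) → ℝ}
  {x x' : Fin n → ℝ}

theorem d2_of_hamiltonJacobi (hg : g.IsSymm) (hσ : ContDiffAt ℝ 2 (uncurry σ) (x, x'))
    (hHJ : ∀ᶠ y in 𝓝 x', σ x y = 1 / 2 * (gradFst n σ x y ⬝ᵥ g *ᵥ gradFst n σ x y))
    (l : Fin n) :
    d2 n l σ x x' = gradFst n (d2 n l σ) x x' ⬝ᵥ g *ᵥ gradFst n σ x x' := by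
  have hgrad := differentiableAt_gradFst hσ
  calc d2 n l σ x x'
      = fderiv ℝ (fun y => 1 / 2 * (gradFst n σ x y ⬝ᵥ g *ᵥ gradFst n σ x y)) x'
          (Pi.single l 1) := DFunLike.congr_fun (Filter.EventuallyEq.fderiv_eq hHJ) _
    _ = 1 / 2 * (gradFst n (d2 n l σ) x x' ⬝ᵥ g *ᵥ gradFst n σ x x' +
          gradFst n σ x x' ⬝ᵥ g *ᵥ gradFst n (d2 n l σ) x x') := by
        rw [fderiv_const_mul (differentiableAt_dotProduct_mulVec g hgrad hgrad), smul_apply,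
          fderiv_dotProduct_mulVec_apply g hgrad hgrad, fderiv_gradFst_single hσ, smul_eq_mul]
    _ = gradFst n (d2 n l σ) x x' ⬝ᵥ g *ᵥ gradFst n σ x x' := by
        rw [dotProduct_mulVec_comm_of_isSymm hg (gradFst n σ x x')]
        ring

theorem d2_d2_of_hamiltonJacobi (hg : g.IsSymm) (hσ : ContDiffAt ℝ 3 (uncurry σ) (x, x'))
    (hHJ : ∀ᶠ y in 𝓝 x', σ x y = 1 / 2 * (gradFst n σ x y ⬝ᵥ g *ᵥ gradFst n σ x y))
    (k l : Fin n) :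
    d2 n k (d2 n l σ) x x' =
      gradFst n (d2 n k (d2 n l σ)) x x' ⬝ᵥ g *ᵥ gradFst n σ x x' +
        gradFst n (d2 n l σ) x x' ⬝ᵥ g *ᵥ gradFst n (d2 n k σ) x x' := by
  have hσ₂ : ContDiffAt ℝ 2 (uncurry σ) (x, x') := hσ.of_le (by norm_num)
  have hdσ : ContDiffAt ℝ 2 (uncurry (d2 n l σ)) (x, x') :=
    contDiffAt_uncurry_d2 hσ (by norm_num) l
  have hfirst : ∀ᶠ y in 𝓝 x',
      d2 n l σ x y = gradFst n (d2 n l σ) x y ⬝ᵥ g *ᵥ gradFst n σ x y := by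
    have hsmooth := (Continuous.prodMk_right x).continuousAt.eventually (hσ₂.eventually (by simp))
    filter_upwards [hsmooth, hHJ.eventually_nhds] with y hy hHJy
    exact d2_of_hamiltonJacobi hg hy hHJy l
  calc d2 n k (d2 n l σ) x x'
      = fderiv ℝ (fun y => gradFst n (d2 n l σ) x y ⬝ᵥ g *ᵥ gradFst n σ x y) x'
          (Pi.single k 1) := DFunLike.congr_fun (Filter.EventuallyEq.fderiv_eq hfirst) _
    _ = _ := by
        rw [fderiv_dotProduct_mulVec_apply g (differentiableAt_gradFst hdσ)
          (differentiableAt_gradFst hσ₂), fderiv_gradFst_single hdσ, fderiv_gradFst_single hσ₂]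

/-- The matrix `V_{k'l'} = σ_{,j'} γ^{ij'} σ_{,k'l'i}`, where `γ` is the inverse of the mixed
Hessian: the contribution of the third derivatives to the twice differentiated Hamilton–Jacobi
equation. As `mixedHess` has the unprimed index first, `γ^{ij'}` is the entry `j i` of `γ`. -/
noncomputable def ruseSyngeV (n : ℕ) (σ : (Fin n → ℝ) → (Fin n → ℝ) → ℝ) (x x' : Fin n → ℝ) :
    Matrix (Fin n) (Fin n) ℝ :=
  Matrix.of fun k l => ∑ p, ∑ q, d2 n q σ x x' * (mixedHess n σ x x')⁻¹ q p *
    d1 n p (d2 n k (d2 n l σ)) x x'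

/-- The matrix `Y_{k'l'} = σ_{,k'l'} − V_{k'l'}`, whose entries are the components of the metric
at `x` in the coordinates `σ_{,k'}(·, x')`. -/
noncomputable def ruseSyngeY (n : ℕ) (σ : (Fin n → ℝ) → (Fin n → ℝ) → ℝ) (x x' : Fin n → ℝ) :
    Matrix (Fin n) (Fin n) ℝ :=
  Matrix.of fun k l => d2 n k (d2 n l σ) x x' - ruseSyngeV n σ x x' k l

theorem d2_vecMul_inv_mixedHess (hg : g.IsSymm) (hσ : ContDiffAt ℝ 2 (uncurry σ) (x, x'))
    (hHJ : ∀ᶠ y in 𝓝 x', σ x y = 1 / 2 * (gradFst n σ x y ⬝ᵥ g *ᵥ gradFst n σ x y))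
    (hinv : IsUnit (mixedHess n σ x x').det) :
    (fun q => d2 n q σ x x') ᵥ* (mixedHess n σ x x')⁻¹ = g *ᵥ gradFst n σ x x' := by
  have hd2 : (fun q => d2 n q σ x x') = (g *ᵥ gradFst n σ x x') ᵥ* mixedHess n σ x x' := by
    ext q
    exact (d2_of_hamiltonJacobi hg hσ hHJ q).trans (dotProduct_comm _ _)
  rw [hd2, vecMul_vecMul, mul_nonsing_inv _ hinv, vecMul_one]

theorem ruseSyngeV_apply_of_hamiltonJacobi (hg : g.IsSymm)
    (hσ : ContDiffAt ℝ 2 (uncurry σ) (x, x'))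
    (hHJ : ∀ᶠ y in 𝓝 x', σ x y = 1 / 2 * (gradFst n σ x y ⬝ᵥ g *ᵥ gradFst n σ x y))
    (hinv : IsUnit (mixedHess n σ x x').det) (k l : Fin n) :
    ruseSyngeV n σ x x' k l =
      gradFst n (d2 n k (d2 n l σ)) x x' ⬝ᵥ g *ᵥ gradFst n σ x x' := by
  rw [← d2_vecMul_inv_mixedHess hg hσ hHJ hinv, dotProduct_comm]
  simp only [ruseSyngeV, of_apply, vecMul, dotProduct, gradFst, Finset.sum_mul]

theorem ruseSyngeY_of_hamiltonJacobi (hg : g.IsSymm) (hσ : ContDiffAt ℝ 3 (uncurry σ) (x, x'))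
    (hHJ : ∀ᶠ y in 𝓝 x', σ x y = 1 / 2 * (gradFst n σ x y ⬝ᵥ g *ᵥ gradFst n σ x y))
    (hinv : IsUnit (mixedHess n σ x x').det) :
    ruseSyngeY n σ x x' = (mixedHess n σ x x')ᵀ * g * mixedHess n σ x x' := by
  ext k l
  calc ruseSyngeY n σ x x' k l
      = gradFst n (d2 n l σ) x x' ⬝ᵥ g *ᵥ gradFst n (d2 n k σ) x x' := by
        rw [ruseSyngeY, of_apply, d2_d2_of_hamiltonJacobi hg hσ hHJ,
          ruseSyngeV_apply_of_hamiltonJacobi hg (hσ.of_le (by norm_num)) hHJ hinv,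
          add_sub_cancel_left]
    _ = gradFst n (d2 n k σ) x x' ⬝ᵥ g *ᵥ gradFst n (d2 n l σ) x x' :=
        dotProduct_mulVec_comm_of_isSymm hg _ _
    _ = ((mixedHess n σ x x')ᵀ * g * mixedHess n σ x x') k l := by
        rw [Matrix.mul_assoc]
        rfl

theorem metric_determined_by_ruseSynge_general (hg : g.IsSymm)
    (hσ : ContDiffAt ℝ 3 (uncurry σ) (x, x'))
    (hHJ : ∀ᶠ y in 𝓝 x', σ x y = 1 / 2 * ∑ i, ∑ j, g i j * d1 n i σ x y * d1 n j σ x y)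
    (hinv : IsUnit (mixedHess n σ x x').det) (i j : Fin n) :
    g i j = ∑ k, ∑ l, (mixedHess n σ x x')⁻¹ k i * (mixedHess n σ x x')⁻¹ l j *
      ruseSyngeY n σ x x' k l := by
  set γ := (mixedHess n σ x x')⁻¹
  have hY := ruseSyngeY_of_hamiltonJacobi hg hσ
    (by simpa only [dotProduct_mulVec_eq_sum_sum, gradFst] using hHJ) hinv
  calc g i j = (γᵀ * (ruseSyngeY n σ x x' * γ)) i j := by
        rw [← Matrix.mul_assoc, ← eq_inv_transpose_mul_mul_inv hinv hY]
    _ = γ.col i ⬝ᵥ ruseSyngeY n σ x x' *ᵥ γ.col j := rfl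
    _ = ∑ k, ∑ l, γ k i * γ l j * ruseSyngeY n σ x x' k l := by
        rw [dotProduct_mulVec_eq_sum_sum]
        exact Finset.sum_congr rfl fun k _ => Finset.sum_congr rfl fun l _ =>
          (mul_rotate _ _ _)

end HamiltonJacobi

/-- The metric is uniquely determined by the partial derivatives of the Ruse–Synge
function: `g^{ij}(x) = γ^{ik'} γ^{jl'} Y_{k'l'}`, where
`Y_{k'l'} = σ_{,k'l'} − V_{k'l'}`, `V_{k'l'} = σ_{,j'} γ^{ij'} σ_{,k'l'i}`, and `γ` is the
inverse of the matrix of mixed second derivatives `σ_{,ij'}`. -/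
theorem metric_determined_by_ruseSynge (n : ℕ) (hn : 1 ≤ n)
    (U : Set (Fin n → ℝ)) (hU : IsOpen U)
    (g : Fin n → Fin n → (Fin n → ℝ) → ℝ)
    (hgsmooth : ∀ i j, ContDiffOn ℝ (⊤ : ℕ∞) (g i j) U)
    (hgsymm : ∀ i j, ∀ x ∈ U, g i j x = g j i x)
    (σ : (Fin n → ℝ) → (Fin n → ℝ) → ℝ)
    (hσ : ContDiffOn ℝ (⊤ : ℕ∞) (fun p : (Fin n → ℝ) × (Fin n → ℝ) => σ p.1 p.2) (U ×ˢ U))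
    (hHJ : ∀ x ∈ U, ∀ x' ∈ U,
      σ x x' = (1 / 2) * ∑ i, ∑ j, g i j x * d1 n i σ x x' * d1 n j σ x x')
    (x x' : Fin n → ℝ) (hx : x ∈ U) (hx' : x' ∈ U)
    (hinv : IsUnit (mixedHess n σ x x').det) :
    ∀ i j : Fin n,
      g i j x = ∑ k, ∑ l, (mixedHess n σ x x')⁻¹ k i * (mixedHess n σ x x')⁻¹ l j *
        (d2 n k (d2 n l σ) x x' -
          ∑ p, ∑ q, d2 n q σ x x' * (mixedHess n σ x x')⁻¹ q p *
            d1 n p (d2 n k (d2 n l σ)) x x') :=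
  metric_determined_by_ruseSynge_general (g := .of fun i j => g i j x)
    (.ext fun i j => hgsymm j i x hx)
    ((hσ.contDiffAt ((hU.prod hU).mem_nhds ⟨hx, hx'⟩)).of_le (WithTop.coe_le_coe.2 le_top))
    (Filter.eventually_of_mem (hU.mem_nhds hx') (hHJ x hx)) hinv
end

section
/- Let U ⊆ ℝⁿ be open, let g^{ij} : U → ℝ be smooth functions such that (g^{ij}(x)) is a symmetric invertible matrix for each x, with inverse matrix (g_{ij}(x)). Let σ : U × U → ℝ be a smooth symmetric function (σ(x,x') = σ(x',x)) satisfying the Hamilton–Jacobi equation σ(x,x') = (1/2) Σ_{i,j} g^{ij}(x) σ_{,i}(x,x') σ_{,j}(x,x') on U × U, together with the initial conditions σ(x,x) = 0 and σ_{,i}(x,x) = 0 for all x ∈ U. Fix x' ∈ U and assume the diagonal Hessian matrix ([σ_{,ij}](x')) is invertible. Then the coincidence limits of the second derivatives are [σ_{,ij}](x') = g_{ij}(x'), [σ_{,i'j'}](x') = g_{ij}(x'), and [σ_{,ij'}](x') = −g_{ij}(x'). -/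
/-!
Fix `x'` and put `f = σ(·, x')`, a function with vanishing gradient at `x'` which solves a
Hamilton–Jacobi equation `f x = K x (df x)` with `K` homogeneous of degree two in the momentum.
Evaluate this at `x' + t v` and divide by `t²`. By homogeneity the right-hand side is
`K (x' + t v) (t⁻¹ df(x' + t v))`, so in the limit `t → 0` the equation becomes
`D²f(v, v) / 2 = K x' (D²f v)`.
No derivative of `K` enters, so continuity of the metric suffices. For
`K x p = ½ ∑ g^{ij}(x) pᵢ pⱼ`, `G = (g^{ij}(x'))` and `H` the Hessian of `f` at `x'`, polarization
gives `H = H G H`, hence `H = G⁻¹`.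

The primed derivatives reduce to this one: the symmetry of `σ` exchanges the two arguments, and as
`σ_{,j}` vanishes along the diagonal, its derivatives in the two arguments are opposite there.
-/

open scoped BigOperators
open Set

/-- The pointwise matrix `(g^{ij}(x))` of a metric-coefficient field. -/
noncomputable def gMat (n : ℕ) (g : Fin n → Fin n → (Fin n → ℝ) → ℝ)
    (x : Fin n → ℝ) : Matrix (Fin n) (Fin n) ℝ :=
  Matrix.of fun i j => g i j x

open Filter Function Topology

section SecondOrder

lemma differentiableAt_fderiv_of_contDiffAt_two {𝕜 E F : Type*} [NontriviallyNormedField 𝕜]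
    [NormedAddCommGroup E] [NormedSpace 𝕜 E] [NormedAddCommGroup F] [NormedSpace 𝕜 F]
    {f : E → F} {a : E} (hf : ContDiffAt 𝕜 2 f a) : DifferentiableAt 𝕜 (fderiv 𝕜 f) a :=
  (hf.fderiv_right (m := 1) (by norm_num)).differentiableAt one_ne_zero

variable {E : Type*} [NormedAddCommGroup E] [NormedSpace ℝ E]
  {f : E → ℝ} {f'' : E →L[ℝ] E →L[ℝ] ℝ} {a : E}

lemma tendsto_inv_smul_fderiv_of_fderiv_eq_zero (hf' : fderiv ℝ f a = 0)
    (hf'' : HasFDerivAt (fderiv ℝ f) f'' a) (v : E) :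
    Tendsto (fun t : ℝ => t⁻¹ • fderiv ℝ f (a + t • v)) (𝓝[≠] 0) (𝓝 (f'' v)) := by
  simpa [hf'] using (hf''.hasLineDerivAt v).tendsto_slope_zero

lemma tendsto_sub_div_sq_of_fderiv_eq_zero (hf : ∀ᶠ x in 𝓝 a, DifferentiableAt ℝ f x)
    (hf' : fderiv ℝ f a = 0) (hf'' : HasFDerivAt (fderiv ℝ f) f'' a) (v : E) :
    Tendsto (fun t : ℝ => (f (a + t • v) - f a) / t ^ 2) (𝓝[≠] 0) (𝓝 (f'' v v / 2)) := by
  have hline : Tendsto (fun t : ℝ => a + t • v) (𝓝 0) (𝓝 a) :=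
    Continuous.tendsto' (by fun_prop) _ _ (by simp)
  have hderiv : ∀ᶠ t : ℝ in 𝓝 0,
      HasDerivAt (fun t : ℝ => f (a + t • v) - f a) (fderiv ℝ f (a + t • v) v) t := by
    filter_upwards [hline.eventually hf] with t ht
    have hvel : HasDerivAt (fun t : ℝ => a + t • v) v t := by
      simpa using ((hasDerivAt_id t).smul_const v).const_add a
    exact (ht.hasFDerivAt.comp_hasDerivAt t hvel).sub_const (f a)
  have hratio : Tendsto (fun t : ℝ => fderiv ℝ f (a + t • v) v / (2 * t)) (𝓝[≠] 0)
      (𝓝 (f'' v v / 2)) := by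
    have h : Tendsto (fun t : ℝ => (t⁻¹ • fderiv ℝ f (a + t • v)) v / 2) (𝓝[≠] 0)
        (𝓝 (f'' v v / 2)) :=
      (((ContinuousLinearMap.apply ℝ ℝ v).continuous.tendsto (f'' v)).comp
        (tendsto_inv_smul_fderiv_of_fderiv_eq_zero hf' hf'' v)).div_const 2
    refine h.congr fun t => ?_
    rw [smul_apply, smul_eq_mul]
    ring
  have hzero : Tendsto (fun t : ℝ => f (a + t • v) - f a) (𝓝 0) (𝓝 0) := by
    simpa using hderiv.self_of_nhds.continuousAt.tendsto
  have hsq : Tendsto (fun t : ℝ => t ^ 2) (𝓝 0) (𝓝 0) :=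
    Continuous.tendsto' (by fun_prop) _ _ (by simp)
  refine HasDerivAt.lhopital_zero_nhdsNE (hderiv.filter_mono nhdsWithin_le_nhds)
    (.of_forall fun t => by simpa using hasDerivAt_pow 2 t) ?_
    (hzero.mono_left nhdsWithin_le_nhds) (hsq.mono_left nhdsWithin_le_nhds) hratio
  filter_upwards [self_mem_nhdsWithin] with t ht using mul_ne_zero two_ne_zero ht

lemma half_snd_fderiv_eq_of_hamiltonJacobi {K : E → (E →L[ℝ] ℝ) → ℝ}
    (hK : ∀ x (c : ℝ) φ, K x (c • φ) = c ^ 2 * K x φ)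
    (hf : ∀ᶠ x in 𝓝 a, DifferentiableAt ℝ f x)
    (hf' : fderiv ℝ f a = 0) (hf'' : HasFDerivAt (fderiv ℝ f) f'' a)
    (hHJ : ∀ᶠ x in 𝓝 a, f x = K x (fderiv ℝ f x))
    {v : E} (hKv : ContinuousAt (uncurry K) (a, f'' v)) :
    f'' v v / 2 = K a (f'' v) := by
  have hline : Tendsto (fun t : ℝ => a + t • v) (𝓝[≠] 0) (𝓝 a) :=
    (Continuous.tendsto' (by fun_prop) _ _ (by simp)).mono_left nhdsWithin_le_nhds
  have hfa : f a = 0 := by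
    have h := hK a 0 0
    rw [hHJ.self_of_nhds, hf']
    simpa using h
  have hK_lim : Tendsto (fun t : ℝ => K (a + t • v) (t⁻¹ • fderiv ℝ f (a + t • v)))
      (𝓝[≠] 0) (𝓝 (K a (f'' v))) :=
    hKv.tendsto.comp (hline.prodMk_nhds (tendsto_inv_smul_fderiv_of_fderiv_eq_zero hf' hf'' v))
  refine tendsto_nhds_unique (tendsto_sub_div_sq_of_fderiv_eq_zero hf hf' hf'' v)
    (hK_lim.congr' ?_)
  filter_upwards [hline.eventually hHJ] with t ht
  rw [hK, ← ht, hfa, sub_zero, inv_pow, div_eq_inv_mul]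

end SecondOrder

section Hessian

open Matrix

variable {ι : Type*}

lemma eq_of_isSymm_of_dotProduct_mulVec_self_eq [Fintype ι] {k : Type*} [Field k]
    [NeZero (2 : k)] {A B : Matrix ι ι k} (hA : A.IsSymm) (hB : B.IsSymm)
    (h : ∀ v, v ⬝ᵥ A *ᵥ v = v ⬝ᵥ B *ᵥ v) : A = B := by
  classical
  have hsymm {M : Matrix ι ι k} (hM : M.IsSymm) : (toBilin' M).IsSymm :=
    ⟨fun v w => by
      rw [toBilin'_apply', toBilin'_apply', dotProduct_mulVec, dotProduct_comm,
        ← mulVec_transpose, hM.eq]⟩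
  exact toBilin'.injective <| LinearMap.BilinForm.ext_of_isSymm (hsymm hA) (hsymm hB) <| by
    simpa only [toBilin'_apply'] using h

variable [DecidableEq ι]

/-- The matrix of iterated partial derivatives `∂ᵢ(∂ⱼf)` of a function of finitely many real
variables. The outer derivative carries the row index, so that the matrix of the
`d1 n i (d1 n j σ) x' x'` is by definition `hessianMatrix (fun y => σ y x') x'`. -/
noncomputable def hessianMatrix (f : (ι → ℝ) → ℝ) (x : ι → ℝ) : Matrix ι ι ℝ :=
  Matrix.of fun i j => fderiv ℝ (fun y => fderiv ℝ f y (Pi.single j 1)) x (Pi.single i 1)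

variable {f : (ι → ℝ) → ℝ} {a : ι → ℝ}

lemma hessianMatrix_apply [Finite ι] (hf : DifferentiableAt ℝ (fderiv ℝ f) a) (i j : ι) :
    hessianMatrix f a i j = fderiv ℝ (fderiv ℝ f) a (Pi.single i 1) (Pi.single j 1) := by
  have := Fintype.ofFinite ι
  simp [hessianMatrix, fderiv_clm_apply hf (differentiableAt_const _)]

variable [Fintype ι]

lemma vecMul_hessianMatrix (hf : DifferentiableAt ℝ (fderiv ℝ f) a) (v : ι → ℝ) (j : ι) :
    (v ᵥ* hessianMatrix f a) j = fderiv ℝ (fderiv ℝ f) a v (Pi.single j 1) := by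
  conv_rhs => rw [pi_eq_sum_univ' v]
  simp [vecMul, dotProduct, hessianMatrix_apply hf]

lemma dotProduct_hessianMatrix_mulVec (hf : DifferentiableAt ℝ (fderiv ℝ f) a) (v w : ι → ℝ) :
    v ⬝ᵥ hessianMatrix f a *ᵥ w = fderiv ℝ (fderiv ℝ f) a v w := by
  conv_rhs => rw [pi_eq_sum_univ' w]
  rw [dotProduct_mulVec, dotProduct_comm]
  simp [dotProduct, vecMul_hessianMatrix hf]

lemma isSymm_hessianMatrix (hf : ContDiffAt ℝ 2 f a) : (hessianMatrix f a).IsSymm := by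
  have hf' := differentiableAt_fderiv_of_contDiffAt_two hf
  refine IsSymm.ext fun i j => ?_
  rw [hessianMatrix_apply hf', hessianMatrix_apply hf']
  exact hf.isSymmSndFDerivAt (by simp) _ _

/-- The Hamiltonian `½ ∑ G^{ij} pᵢ pⱼ` of geodesic motion, as a function of the inverse metric `G`
and a covector `φ` with components `pᵢ = φ eᵢ`. Written as a double sum, it unfolds to the
Hamilton–Jacobi equation for `σ` in terms of `d1`. -/
noncomputable def geodesicHamiltonian (G : Matrix ι ι ℝ) (φ : (ι → ℝ) →L[ℝ] ℝ) : ℝ :=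
  (1 / 2) * ∑ i, ∑ j, G i j * φ (Pi.single i 1) * φ (Pi.single j 1)

lemma geodesicHamiltonian_eq_dotProduct (G : Matrix ι ι ℝ) (φ : (ι → ℝ) →L[ℝ] ℝ) :
    geodesicHamiltonian G φ =
      ((fun i => φ (Pi.single i 1)) ⬝ᵥ G *ᵥ fun i => φ (Pi.single i 1)) / 2 := by
  rw [geodesicHamiltonian, one_div_mul_eq_div]
  simp only [dotProduct, mulVec, Finset.mul_sum]
  congr! 3 with i _ j
  ring

lemma geodesicHamiltonian_smul (G : Matrix ι ι ℝ) (c : ℝ) (φ : (ι → ℝ) →L[ℝ] ℝ) :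
    geodesicHamiltonian G (c • φ) = c ^ 2 * geodesicHamiltonian G φ := by
  simp only [geodesicHamiltonian, _root_.smul_apply, smul_eq_mul, Finset.mul_sum]
  refine Finset.sum_congr rfl fun i _ => Finset.sum_congr rfl fun j _ => ?_
  ring

lemma continuous_uncurry_geodesicHamiltonian :
    Continuous (uncurry (geodesicHamiltonian (ι := ι))) := by
  unfold uncurry geodesicHamiltonian
  refine continuous_const.mul <| continuous_finsetSum _ fun i _ =>
    continuous_finsetSum _ fun j _ => ?_
  fun_prop

variable {G : (ι → ℝ) → Matrix ι ι ℝ}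

lemma dotProduct_hessianMatrix_mulVec_self_of_hamiltonJacobi (hG : ContinuousAt G a)
    (hf : ContDiffAt ℝ 2 f a) (hf' : fderiv ℝ f a = 0)
    (hHJ : ∀ᶠ x in 𝓝 a, f x = geodesicHamiltonian (G x) (fderiv ℝ f x)) (v : ι → ℝ) :
    v ⬝ᵥ hessianMatrix f a *ᵥ v =
      (v ᵥ* hessianMatrix f a) ⬝ᵥ G a *ᵥ (v ᵥ* hessianMatrix f a) := by
  have hdiff : ∀ᶠ x in 𝓝 a, DifferentiableAt ℝ f x :=
    (hf.eventually (by simp)).mono fun x hx => hx.differentiableAt two_ne_zero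
  have hf'' := differentiableAt_fderiv_of_contDiffAt_two hf
  have hcont : ContinuousAt (uncurry fun x => geodesicHamiltonian (G x))
      (a, fderiv ℝ (fderiv ℝ f) a v) :=
    continuous_uncurry_geodesicHamiltonian.continuousAt.comp (f := Prod.map G id)
      (hG.prodMap continuousAt_id)
  have hquad := half_snd_fderiv_eq_of_hamiltonJacobi
    (K := fun x => geodesicHamiltonian (G x))
    (fun x => geodesicHamiltonian_smul (G x)) hdiff hf' hf''.hasFDerivAt hHJ hcont
  rw [geodesicHamiltonian_eq_dotProduct] at hquad
  rw [dotProduct_hessianMatrix_mulVec hf'', funext (vecMul_hessianMatrix hf'' v)]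
  exact (div_left_inj' two_ne_zero).1 hquad

theorem hessianMatrix_mul_eq_one_of_hamiltonJacobi (hG : ContinuousAt G a) (hGa : (G a).IsSymm)
    (hf : ContDiffAt ℝ 2 f a) (hf' : fderiv ℝ f a = 0)
    (hHJ : ∀ᶠ x in 𝓝 a, f x = geodesicHamiltonian (G x) (fderiv ℝ f x))
    (hH : IsUnit (hessianMatrix f a).det) :
    hessianMatrix f a * G a = 1 := by
  set H := hessianMatrix f a
  have hHsymm : H.IsSymm := isSymm_hessianMatrix hf
  have hHGHsymm : (H * G a * H).IsSymm := by
    simp only [IsSymm, transpose_mul, hHsymm.eq, hGa.eq, Matrix.mul_assoc]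
  have hHGH : H * G a * H = H := by
    refine eq_of_isSymm_of_dotProduct_mulVec_self_eq hHGHsymm hHsymm fun v => ?_
    calc v ⬝ᵥ (H * G a * H) *ᵥ v
      _ = (v ᵥ* H) ⬝ᵥ G a *ᵥ (H *ᵥ v) := by
        rw [← mulVec_mulVec, ← mulVec_mulVec, dotProduct_mulVec]
      _ = (v ᵥ* H) ⬝ᵥ G a *ᵥ (v ᵥ* H) := by rw [← vecMul_transpose H v, hHsymm.eq]
      _ = v ⬝ᵥ H *ᵥ v :=
        (dotProduct_hessianMatrix_mulVec_self_of_hamiltonJacobi hG hf hf' hHJ v).symm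
  exact ((isUnit_iff_isUnit_det H).2 hH).mul_right_cancel (hHGH.trans (one_mul H).symm)

end Hessian

section TwoPoint

lemma fderiv_right_eq_neg_fderiv_left_of_diag_eq_const {𝕜 E F : Type*} [NontriviallyNormedField 𝕜]
    [NormedAddCommGroup E] [NormedSpace 𝕜 E] [NormedAddCommGroup F] [NormedSpace 𝕜 F]
    {f : E → E → F} {a : E} {c : F} (hf : DifferentiableAt 𝕜 (uncurry f) (a, a))
    (hdiag : ∀ᶠ x in 𝓝 a, f x x = c) :
    fderiv 𝕜 (f a) a = -fderiv 𝕜 (fun x => f x a) a := by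
  set f' := fderiv 𝕜 (uncurry f) (a, a)
  have hleft : HasFDerivAt (fun x => f x a) (f' ∘L .inl 𝕜 E E) a :=
    hf.hasFDerivAt.comp (f := fun x => (x, a)) a (hasFDerivAt_prodMk_left a a)
  have hright : HasFDerivAt (f a) (f' ∘L .inr 𝕜 E E) a :=
    hf.hasFDerivAt.comp (f := fun x => (a, x)) a (hasFDerivAt_prodMk_right a a)
  have hboth : HasFDerivAt (fun x => f x x) (f' ∘L (.prod (.id 𝕜 E) (.id 𝕜 E))) a :=
    hf.hasFDerivAt.comp (f := fun x => (x, x)) a ((hasFDerivAt_id a).prodMk (hasFDerivAt_id a))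
  have hzero := hboth.unique ((hasFDerivAt_const c a).congr_of_eventuallyEq hdiag)
  rw [hleft.fderiv, hright.fderiv, eq_neg_iff_add_eq_zero, ← hzero]
  ext v
  simp [← map_add]

variable {n : ℕ} {σ τ : (Fin n → ℝ) → (Fin n → ℝ) → ℝ} {x y : Fin n → ℝ}

lemma d2_eq_d1_of_eventuallyEq_swap (h : ∀ᶠ z in 𝓝 y, σ x z = τ z x) (i : Fin n) :
    d2 n i σ x y = d1 n i τ y x := by
  have h' : σ x =ᶠ[𝓝 y] fun z => τ z x := h
  simp only [d1, d2, h'.fderiv_eq]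

lemma differentiableAt_uncurry_d1 (hσ : ContDiffAt ℝ 2 (uncurry σ) (x, y)) (j : Fin n) :
    DifferentiableAt ℝ (uncurry (d1 n j σ)) (x, y) := by
  have hpartial : ContDiffAt ℝ 1 (fun p : (Fin n → ℝ) × (Fin n → ℝ) =>
      fderiv ℝ (fun z => σ z p.2) p.1) (x, y) :=
    ContDiffAt.fderiv (f := fun p z => σ z p.2) (n := 2)
      (hσ.comp ((x, y), x) (contDiffAt_snd.prodMk (contDiffAt_snd.comp _ contDiffAt_fst)))
      contDiffAt_fst (by norm_num)
  exact (hpartial.differentiableAt one_ne_zero).clm_apply (differentiableAt_const _)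

lemma d2_d1_eq_neg_d1_d1 (hσ : ContDiffAt ℝ 2 (uncurry σ) (x, x)) {j : Fin n}
    (hdiag : ∀ᶠ z in 𝓝 x, d1 n j σ z z = 0) (i : Fin n) :
    d2 n i (d1 n j σ) x x = -d1 n i (d1 n j σ) x x :=
  DFunLike.congr_fun (fderiv_right_eq_neg_fderiv_left_of_diag_eq_const
    (differentiableAt_uncurry_d1 hσ j) hdiag) (Pi.single i 1)

end TwoPoint

theorem ruseSynge_second_coincidence_general {n : ℕ} {U : Set (Fin n → ℝ)} (hU : IsOpen U)
    {x' : Fin n → ℝ} (hx' : x' ∈ U) {g : Fin n → Fin n → (Fin n → ℝ) → ℝ}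
    (hgcont : ∀ i j, ContinuousAt (g i j) x') (hgsymm : ∀ i j, g i j x' = g j i x')
    {σ : (Fin n → ℝ) → (Fin n → ℝ) → ℝ} (hσ : ContDiffAt ℝ 2 (uncurry σ) (x', x'))
    (hσsymm : ∀ x ∈ U, ∀ y ∈ U, σ x y = σ y x)
    (hHJ : ∀ x ∈ U,
      σ x x' = (1 / 2) * ∑ i, ∑ j, g i j x * d1 n i σ x x' * d1 n j σ x x')
    (hdiag1 : ∀ x ∈ U, ∀ i, d1 n i σ x x = 0)
    (hhess : IsUnit (Matrix.of fun i j => d1 n i (d1 n j σ) x' x').det) (i j : Fin n) :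
    d1 n i (d1 n j σ) x' x' = (gMat n g x')⁻¹ i j ∧
    d2 n i (d2 n j σ) x' x' = (gMat n g x')⁻¹ i j ∧
    d1 n i (d2 n j σ) x' x' = -(gMat n g x')⁻¹ i j := by
  have hUx' : ∀ᶠ x in 𝓝 x', x ∈ U := hU.eventually_mem hx'
  have hswap (x) (hx : x ∈ U) (y) (hy : y ∈ U) : d2 n j σ x y = d1 n j σ y x :=
    d2_eq_d1_of_eventuallyEq_swap ((hU.eventually_mem hy).mono fun z hz => hσsymm x hx z hz) j
  have hG : ContinuousAt (gMat n g) x' :=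
    continuousAt_pi.2 fun i => continuousAt_pi.2 fun j => hgcont i j
  have hσx' : ContDiffAt ℝ 2 (fun y => σ y x') x' :=
    hσ.comp (f := fun y => (y, x')) x' (contDiffAt_id.prodMk contDiffAt_const)
  have hgrad : fderiv ℝ (fun y => σ y x') x' = 0 := by
    ext v
    rw [pi_eq_sum_univ' v]
    simpa [d1] using Finset.sum_eq_zero fun i _ => mul_eq_zero_of_right (v i) (hdiag1 x' hx' i)
  have hinv : (gMat n g x')⁻¹ = hessianMatrix (fun y => σ y x') x' :=
    Matrix.inv_eq_left_inv <| hessianMatrix_mul_eq_one_of_hamiltonJacobi hG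
      (Matrix.IsSymm.ext fun i j => hgsymm j i) hσx' hgrad (hUx'.mono hHJ) hhess
  have h11 : d1 n i (d1 n j σ) x' x' = (gMat n g x')⁻¹ i j := (congr_fun₂ hinv i j).symm
  have h22 : d2 n i (d2 n j σ) x' x' = d1 n i (d1 n j σ) x' x' :=
    d2_eq_d1_of_eventuallyEq_swap (hUx'.mono (hswap x' hx')) i
  have h12 : d2 n i (d1 n j σ) x' x' = d1 n i (d2 n j σ) x' x' :=
    d2_eq_d1_of_eventuallyEq_swap (hUx'.mono fun z hz => (hswap z hz x' hx').symm) i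
  have hneg : d2 n i (d1 n j σ) x' x' = -d1 n i (d1 n j σ) x' x' :=
    d2_d1_eq_neg_d1_d1 hσ (hUx'.mono fun z hz => hdiag1 z hz j) i
  exact ⟨h11, h22.trans h11, by rw [← h12, hneg, h11]⟩

/-- Coincidence limits of the second derivatives of the Ruse–Synge function:
`[σ_{,ij}] = [σ_{,i'j'}] = −[σ_{,ij'}] = g_{ij}` (the inverse metric matrix). -/
theorem ruseSynge_second_coincidence (n : ℕ) (hn : 1 ≤ n)
    (U : Set (Fin n → ℝ)) (hU : IsOpen U)
    (g : Fin n → Fin n → (Fin n → ℝ) → ℝ)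
    (hgsmooth : ∀ i j, ContDiffOn ℝ (⊤ : ℕ∞) (g i j) U)
    (hgsymm : ∀ i j, ∀ x ∈ U, g i j x = g j i x)
    (hginv : ∀ x ∈ U, IsUnit (gMat n g x).det)
    (σ : (Fin n → ℝ) → (Fin n → ℝ) → ℝ)
    (hσ : ContDiffOn ℝ (⊤ : ℕ∞) (fun p : (Fin n → ℝ) × (Fin n → ℝ) => σ p.1 p.2) (U ×ˢ U))
    (hσsymm : ∀ x ∈ U, ∀ x' ∈ U, σ x x' = σ x' x)
    (hHJ : ∀ x ∈ U, ∀ x' ∈ U,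
      σ x x' = (1 / 2) * ∑ i, ∑ j, g i j x * d1 n i σ x x' * d1 n j σ x x')
    (hdiag0 : ∀ x ∈ U, σ x x = 0)
    (hdiag1 : ∀ x ∈ U, ∀ i : Fin n, d1 n i σ x x = 0)
    (x' : Fin n → ℝ) (hx' : x' ∈ U)
    (hhess : IsUnit (Matrix.of fun i j => d1 n i (d1 n j σ) x' x' :
      Matrix (Fin n) (Fin n) ℝ).det) :
    ∀ i j : Fin n,
      d1 n i (d1 n j σ) x' x' = (gMat n g x')⁻¹ i j ∧
      d2 n i (d2 n j σ) x' x' = (gMat n g x')⁻¹ i j ∧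
      d1 n i (d2 n j σ) x' x' = -(gMat n g x')⁻¹ i j :=
  ruseSynge_second_coincidence_general hU hx'
    (fun i j => (hgsmooth i j).continuousOn.continuousAt (hU.mem_nhds hx'))
    (fun i j => hgsymm i j x' hx')
    (contDiffAt_infty.1 (hσ.contDiffAt ((hU.prod hU).mem_nhds ⟨hx', hx'⟩)) 2)
    hσsymm (fun x hx => hHJ x hx x' hx') hdiag1 hhess
end
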